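/- Geometry near a potential splash (Proposition 2.5(i)): There exist constants ε₄, ε₅ ∈ (0,1) with ε₄ ≤ ε₅¹⁰⁰, depending only on A, T, σ, g, ρ¹, ρ², with the following property. Suppose t ∈ [0,T] and inf_{α,β∈ℝ} F(z)(α,β,t) = ε ≤ ε₄. Then there exist α₁, α₂ ∈ ℝ with |α₁ − α₂| ∈ [2ε₁, ε₁⁻¹/2] and |z(α₁,t) − z(α₂,t)| = inf{|z(α,t) − z(β,t)| : |α − β| ∈ [ε₁, ε₁⁻¹]} (here ε₁ = ε₁(A) > 0 is a constant such that |z(α,t) − z(β,t)| ≥ ε₁|α − β| whenever |α − β| ≤ ε₁, which exists by the local chord-arc bound), such that, setting d := |z(α₂,t) − z(α₁,t)| and e := (z(α₂,t) − z(α₁,t))/d, one has: d ≈ ε (i.e., C⁻¹ε ≤ d ≤ Cε for some C depending only on A, T, σ, g, ρ¹, ρ²); the open line segment between z(α₁,t) and z(α₂,t) is contained in Ω²(t); ∂_α z(α₁,t)·e = ∂_α z(α₂,t)·e = 0 and ∂_α z(α₁,t)·∂_α z(α₂,t) < 0; and the inclusions: {z(β,t) − ρe : |β − α₁| ≤ ε₅,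 ρ ∈ (0,ε₅)} ⊆ Ω¹(t), {z(β,t) + ρe : |β − α₂| ≤ ε₅, ρ ∈ (0,ε₅)} ⊆ Ω¹(t), {z(β,t) + ρe : |β − α₁| ≤ ε₅, ρ ∈ (0,d)} ⊆ Ω²(t), {z(β,t) − ρe : |β − α₂| ≤ ε₅, ρ ∈ (0,d)} ⊆ Ω²(t). -/

import Mathlib

noncomputable section
open Set MeasureTheory Filter

/-- The plane `ℝ²` with the Euclidean norm. -/
abbrev E2 : Type := EuclideanSpace ℝ (Fin 2)

/-- The real inner product on `ℝ²`. -/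
def rinner (x y : E2) : ℝ := inner ℝ x y

/-- The vector `(1,0)`. -/
def xvec : E2 := (EuclideanSpace.equiv (Fin 2) ℝ).symm ![1, 0]

/-- The vector `(0,1)`. -/
def e2vec : E2 := (EuclideanSpace.equiv (Fin 2) ℝ).symm ![0, 1]

/-- The period vector `(2π, 0)`. -/
def transl : E2 := (EuclideanSpace.equiv (Fin 2) ℝ).symm ![2 * Real.pi, 0]

/-- The rotation of a vector by `π/2`: `(x,y)^⊥ = (-y,x)`. -/
def perpv (w : E2) : E2 := (EuclideanSpace.equiv (Fin 2) ℝ).symm ![-(w 1), w 0]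

/-- The chord-arc function `F(z)` of a time-dependent curve. -/
def chordArcT (z : ℝ → ℝ → E2) (α β t : ℝ) : ℝ :=
  if α = β then ‖deriv (fun a => z a t) α‖ else ‖z α t - z β t‖ / |α - β|

/-- The two-fluid interface system on the time interval `[0,T]`, in the `2π`-periodic setting,
with densities `ρ1, ρ2`, surface tension coefficient `σ`, gravity constant `grav`, and
quantitative bounds measured by the constant `A`. -/
structure TwoFluid (ρ1 ρ2 σ grav T A : ℝ) where
  /-- the parametrization of the interface -/
  z : ℝ → ℝ → E2
  /-- the domain of the first fluid -/
  Ω1 : ℝ → Set E2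
  /-- the domain of the second fluid -/
  Ω2 : ℝ → Set E2
  /-- the velocity field of the first fluid -/
  u1 : E2 → ℝ → E2
  /-- the velocity field of the second fluid -/
  u2 : E2 → ℝ → E2
  /-- the pressure of the first fluid -/
  P1 : E2 → ℝ → ℝ
  /-- the pressure of the second fluid -/
  P2 : E2 → ℝ → ℝ
  hΩ1_open : ∀ t ∈ Icc (0:ℝ) T, IsOpen (Ω1 t)
  hΩ2_open : ∀ t ∈ Icc (0:ℝ) T, IsOpen (Ω2 t)
  hΩ1_conn : ∀ t ∈ Icc (0:ℝ) T, IsConnected (Ω1 t)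
  hΩ2_conn : ∀ t ∈ Icc (0:ℝ) T, IsConnected (Ω2 t)
  hΩ1_sc : ∀ t ∈ Icc (0:ℝ) T, SimplyConnectedSpace (Ω1 t)
  hΩ2_sc : ∀ t ∈ Icc (0:ℝ) T, SimplyConnectedSpace (Ω2 t)
  /-- `ℝ²` is the disjoint union of `Ω1 t`, `Ω2 t` and the interface `Γ_t` -/
  hUnion : ∀ t ∈ Icc (0:ℝ) T, Ω1 t ∪ Ω2 t ∪ range (fun α => z α t) = univ
  hDisj12 : ∀ t ∈ Icc (0:ℝ) T, Disjoint (Ω1 t) (Ω2 t)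
  hDisj1Γ : ∀ t ∈ Icc (0:ℝ) T, Disjoint (Ω1 t) (range (fun α => z α t))
  hDisj2Γ : ∀ t ∈ Icc (0:ℝ) T, Disjoint (Ω2 t) (range (fun α => z α t))
  hFront1 : ∀ t ∈ Icc (0:ℝ) T, frontier (Ω1 t) = range (fun α => z α t)
  hFront2 : ∀ t ∈ Icc (0:ℝ) T, frontier (Ω2 t) = range (fun α => z α t)
  /-- `Ω1` contains a lower half-plane and `Ω2` an upper half-plane -/
  hStrip : ∃ a : ℝ, 1 ≤ a ∧ ∀ t ∈ Icc (0:ℝ) T,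
      {x : E2 | x 1 ≤ -a} ⊆ Ω1 t ∧ {x : E2 | a ≤ x 1} ⊆ Ω2 t
  /-- `u1(·,t)` is `C³` on the closure of `Ω1 t` -/
  hu1_reg : ∀ t ∈ Icc (0:ℝ) T, ContDiffOn ℝ 3 (fun x => u1 x t) (closure (Ω1 t))
  hu2_reg : ∀ t ∈ Icc (0:ℝ) T, ContDiffOn ℝ 3 (fun x => u2 x t) (closure (Ω2 t))
  hP1_reg : ∀ t ∈ Icc (0:ℝ) T, ContDiffOn ℝ 1 (fun x => P1 x t) (closure (Ω1 t))
  hP2_reg : ∀ t ∈ Icc (0:ℝ) T, ContDiffOn ℝ 1 (fun x => P2 x t) (closure (Ω2 t))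
  /-- Euler's equation in `Ω1 t` -/
  hEuler1 : ∀ t ∈ Icc (0:ℝ) T, ∀ x ∈ Ω1 t,
      ρ1 • (deriv (fun s => u1 x s) t + fderiv ℝ (fun y => u1 y t) x (u1 x t)) =
        -gradient (fun y => P1 y t) x - (grav * ρ1) • e2vec
  /-- Euler's equation in `Ω2 t` -/
  hEuler2 : ∀ t ∈ Icc (0:ℝ) T, ∀ x ∈ Ω2 t,
      ρ2 • (deriv (fun s => u2 x s) t + fderiv ℝ (fun y => u2 y t) x (u2 x t)) =
        -gradient (fun y => P2 y t) x - (grav * ρ2) • e2vec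
  /-- incompressibility of the first fluid -/
  hdiv1 : ∀ t ∈ Icc (0:ℝ) T, ∀ x ∈ Ω1 t,
      fderiv ℝ (fun y => u1 y t) x (EuclideanSpace.single 0 1) 0 +
        fderiv ℝ (fun y => u1 y t) x (EuclideanSpace.single 1 1) 1 = 0
  hdiv2 : ∀ t ∈ Icc (0:ℝ) T, ∀ x ∈ Ω2 t,
      fderiv ℝ (fun y => u2 y t) x (EuclideanSpace.single 0 1) 0 +
        fderiv ℝ (fun y => u2 y t) x (EuclideanSpace.single 1 1) 1 = 0
  /-- irrotationality of the first fluid -/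
  hcurl1 : ∀ t ∈ Icc (0:ℝ) T, ∀ x ∈ Ω1 t,
      fderiv ℝ (fun y => u1 y t) x (EuclideanSpace.single 0 1) 1 -
        fderiv ℝ (fun y => u1 y t) x (EuclideanSpace.single 1 1) 0 = 0
  hcurl2 : ∀ t ∈ Icc (0:ℝ) T, ∀ x ∈ Ω2 t,
      fderiv ℝ (fun y => u2 y t) x (EuclideanSpace.single 0 1) 1 -
        fderiv ℝ (fun y => u2 y t) x (EuclideanSpace.single 1 1) 0 = 0
  /-- kinematic boundary condition for the first fluid -/
  hkin1 : ∀ t ∈ Icc (0:ℝ) T, ∀ α : ℝ,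
      rinner (deriv (fun s => z α s) t - u1 (z α t) t) (perpv (deriv (fun a => z a t) α)) = 0
  hkin2 : ∀ t ∈ Icc (0:ℝ) T, ∀ α : ℝ,
      rinner (deriv (fun s => z α s) t - u2 (z α t) t) (perpv (deriv (fun a => z a t) α)) = 0
  /-- the pressure jump at the interface is given by the surface tension times the curvature -/
  hjump : ∀ t ∈ Icc (0:ℝ) T, ∀ α : ℝ,
      P2 (z α t) t - P1 (z α t) t =
        -σ * (deriv (fun a => z a t) α 0 * deriv (fun a => deriv (fun b => z b t) a) α 1 -
              deriv (fun a => z a t) α 1 * deriv (fun a => deriv (fun b => z b t) a) α 0) /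
          ((deriv (fun a => z a t) α 0) ^ 2 + (deriv (fun a => z a t) α 1) ^ 2) ^ ((3:ℝ)/2)
  /-- `2π`-periodicity -/
  hper_z : ∀ t ∈ Icc (0:ℝ) T, ∀ α : ℝ, z (α + 2 * Real.pi) t = z α t + transl
  hper_Ω1 : ∀ t ∈ Icc (0:ℝ) T, (fun x => x + transl) '' Ω1 t = Ω1 t
  hper_Ω2 : ∀ t ∈ Icc (0:ℝ) T, (fun x => x + transl) '' Ω2 t = Ω2 t
  hper_u1 : ∀ t ∈ Icc (0:ℝ) T, ∀ x ∈ Ω1 t, u1 (x + transl) t = u1 x t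
  hper_u2 : ∀ t ∈ Icc (0:ℝ) T, ∀ x ∈ Ω2 t, u2 (x + transl) t = u2 x t
  /-- finite kinetic energy in a period -/
  hL2_1 : ∀ t ∈ Icc (0:ℝ) T,
      IntegrableOn (fun x => ‖u1 x t‖ ^ 2) (Ω1 t ∩ {x : E2 | x 0 ∈ Icc 0 (2 * Real.pi)})
  hL2_2 : ∀ t ∈ Icc (0:ℝ) T,
      IntegrableOn (fun x => ‖u2 x t‖ ^ 2) (Ω2 t ∩ {x : E2 | x 0 ∈ Icc 0 (2 * Real.pi)})
  /-- `z(α,t) - (α,0)` is `C⁴` with all derivatives of order `≤ 4` bounded by `A` -/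
  hz_smooth : ContDiffOn ℝ 4 (fun p : ℝ × ℝ => z p.1 p.2 - p.1 • xvec) (univ ×ˢ Icc (0:ℝ) T)
  hz_bound : ∀ p ∈ (univ ×ˢ Icc (0:ℝ) T : Set (ℝ × ℝ)), ∀ i : ℕ, i ≤ 4 →
      ‖iteratedFDerivWithin ℝ i (fun p : ℝ × ℝ => z p.1 p.2 - p.1 • xvec)
          (univ ×ˢ Icc (0:ℝ) T) p‖ ≤ A
  /-- the parametrization is regular -/
  hz_lower : ∀ t ∈ Icc (0:ℝ) T, ∀ α : ℝ, A⁻¹ ≤ ‖deriv (fun a => z a t) α‖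
  /-- `v¹(α,t) = u¹(z(α,t),t)` is `C³` with all derivatives of order `≤ 3` bounded by `A` -/
  hv1_smooth : ContDiffOn ℝ 3 (fun p : ℝ × ℝ => u1 (z p.1 p.2) p.2) (univ ×ˢ Icc (0:ℝ) T)
  hv1_bound : ∀ p ∈ (univ ×ˢ Icc (0:ℝ) T : Set (ℝ × ℝ)), ∀ i : ℕ, i ≤ 3 →
      ‖iteratedFDerivWithin ℝ i (fun p : ℝ × ℝ => u1 (z p.1 p.2) p.2)
          (univ ×ˢ Icc (0:ℝ) T) p‖ ≤ A
  /-- the chord-arc condition at time `0` -/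
  hchord0 : ∀ α β : ℝ, A⁻¹ ≤ chordArcT z α β 0
  /-- `u²` is bounded by `A` on the interface at time `0` -/
  hu2_init : ∀ α : ℝ, ‖u2 (z α 0) 0‖ ≤ A

/-!
In complex notation the conjugate velocity `u₀ - i u₁` is holomorphic in `Ω¹`. By periodicity and
finite energy its derivative tends to zero at infinite depth, so the maximum principle bounds this
derivative by its boundary values, which the bounds on `v¹` and `z` control. The two ends of a chord
of length `ℓ` lying in `Ω¹` therefore separate with relative velocity `O(ℓ)`. Minimizing the length,
multiplied by an exponential weight in time, over the times and the pairs of distant parameters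
whose chord avoids `Ω²` yields a chord which is normal to the curve at both ends and cannot shrink
faster than the weight grows, so that the minimum is attained at time `0`, where the chord-arc
condition holds: chords of distant points inside `Ω¹` have a length bounded below uniformly in time.

When the chord-arc constant is small, the closest pair of distant points is consequently joined by a
chord inside `Ω²`, normal to the curve at both ends. A short normal ray pointing into `Ω¹` cannot
meet the curve again: up to its first return it would be a short chord of distant points inside
`Ω¹`.

That the curve is injective at all times is not assumed. Around a double point it would contain a
simple loop, whose winding integral jumps across the loop although it vanishes in `Ω¹` and `Ω²`,
which are both connected and unbounded.
-/

open scoped Topology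

/-- The integral `∫ₐᵇ z'(s) / (z(s) - w) ds`, which is `2πi` times the winding number of `z` around
`w` when `z` is a closed curve on `[a, b]` avoiding `w` with derivative `z'`. -/
def windingIntegral (z z' : ℝ → ℂ) (a b : ℝ) (w : ℂ) : ℂ := ∫ s in a..b, z' s / (z s - w)

section WindingIntegral

variable {z z' : ℝ → ℂ} {a b : ℝ} {w : ℂ}

theorem integral_div_eq_zero_of_mem_slitPlane {h h' : ℝ → ℂ} (hab : a ≤ b)
    (hd : ∀ s ∈ Icc a b, HasDerivAt h (h' s) s) (hslit : ∀ s ∈ Icc a b, h s ∈ Complex.slitPlane)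
    (hint : IntervalIntegrable (fun s => h' s / h s) volume a b) (hclosed : h a = h b) :
    ∫ s in a..b, h' s / h s = 0 := by
  rw [← uIcc_of_le hab] at hd hslit
  rw [intervalIntegral.integral_eq_sub_of_hasDerivAt
    (fun s hs => (hd s hs).clog_real (hslit s hs)) hint, hclosed, sub_self]

theorem one_sub_mem_slitPlane {u : ℂ} (hu : ‖u‖ < 1) : 1 - u ∈ Complex.slitPlane :=
  Complex.ball_one_subset_slitPlane (by simpa [mem_ball_iff_norm] using hu)

theorem intervalIntegrable_windingIntegrand (hz : Continuous z) (hz' : Continuous z') (hab : a ≤ b)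
    (hw : ∀ s ∈ Icc a b, z s ≠ w) :
    IntervalIntegrable (fun s => z' s / (z s - w)) volume a b := by
  refine ContinuousOn.intervalIntegrable ?_
  rw [uIcc_of_le hab]
  exact hz'.continuousOn.div (by fun_prop) fun s hs => sub_ne_zero.2 (hw s hs)

variable (hd : ∀ s, HasDerivAt z (z' s) s) (hz' : Continuous z') (hab : a ≤ b)

include hd in
theorem continuous_of_forall_hasDerivAt : Continuous z :=
  continuous_iff_continuousAt.2 fun s => (hd s).continuousAt

include hd hz' hab

theorem windingIntegral_eq_zero_of_norm_lt (hclosed : z a = z b) (hw : ∀ s ∈ Icc a b, ‖z s‖ < ‖w‖) :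
    windingIntegral z z' a b w = 0 := by
  have hne : ∀ s ∈ Icc a b, z s ≠ w := fun s hs h => (hw s hs).ne (congrArg norm h)
  have hw0 : w ≠ 0 :=
    norm_pos_iff.1 ((norm_nonneg _).trans_lt (hw a (left_mem_Icc.2 hab)))
  have hlog : EqOn (fun s => z' s / (z s - w)) (fun s => -(z' s / w) / (1 - z s / w))
      (uIcc a b) := by
    intro s hs
    have hsw : w - z s ≠ 0 := sub_ne_zero.2 (hne s (uIcc_of_le hab ▸ hs)).symm
    have hsw' : z s - w ≠ 0 := sub_ne_zero.2 (hne s (uIcc_of_le hab ▸ hs))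
    have hquot : 1 - z s / w = (w - z s) / w := by field_simp
    simp only [hquot]
    field_simp
    ring
  have hint := intervalIntegrable_windingIntegrand (continuous_of_forall_hasDerivAt hd) hz' hab hne
  rw [windingIntegral, intervalIntegral.integral_congr hlog]
  refine integral_div_eq_zero_of_mem_slitPlane hab
    (fun s _ => by simpa using ((hd s).div_const w).const_sub 1)
    (fun s hs => one_sub_mem_slitPlane ?_) (hint.congr (hlog.mono uIoc_subset_uIcc))
    (by rw [hclosed])
  rw [norm_div]
  exact (div_lt_one (norm_pos_iff.2 hw0)).2 (hw s hs)

theorem windingIntegral_eq_of_norm_sub_lt (hclosed : z a = z b) {v : ℂ}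
    (hv : ∀ s ∈ Icc a b, ‖v - w‖ < ‖z s - w‖) :
    windingIntegral z z' a b v = windingIntegral z z' a b w := by
  have hz := continuous_of_forall_hasDerivAt hd
  have hnv : ∀ s ∈ Icc a b, z s ≠ v := fun s hs h => (hv s hs).ne (by rw [h])
  have hnw : ∀ s ∈ Icc a b, z s ≠ w := fun s hs h =>
    (hv s hs).not_ge (by rw [h, sub_self, norm_zero]; exact norm_nonneg _)
  have hiv := intervalIntegrable_windingIntegrand hz hz' hab hnv
  have hiw := intervalIntegrable_windingIntegrand hz hz' hab hnw
  set h : ℝ → ℂ := fun s => 1 - (v - w) / (z s - w)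
  have hlog : EqOn (fun s => z' s / (z s - v) - z' s / (z s - w))
      (fun s => (v - w) * z' s / (z s - w) ^ 2 / h s) (uIcc a b) := by
    intro s hs
    have hsv : z s - v ≠ 0 := sub_ne_zero.2 (hnv s (uIcc_of_le hab ▸ hs))
    have hsw : z s - w ≠ 0 := sub_ne_zero.2 (hnw s (uIcc_of_le hab ▸ hs))
    have hquot : h s = (z s - v) / (z s - w) := by simp only [h]; field_simp; ring
    simp only [hquot]
    field_simp
    ring
  rw [← sub_eq_zero, windingIntegral, windingIntegral, ← intervalIntegral.integral_sub hiv hiw,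
    intervalIntegral.integral_congr hlog]
  refine integral_div_eq_zero_of_mem_slitPlane hab (fun s hs => ?_)
    (fun s hs => one_sub_mem_slitPlane ?_) ((hiv.sub hiw).congr (hlog.mono uIoc_subset_uIcc))
    (by simp only [h, hclosed])
  · simpa [neg_div] using ((hasDerivAt_const s (v - w)).div ((hd s).sub_const w)
      (sub_ne_zero.2 (hnw s hs))).const_sub 1
  · rw [norm_div]
    exact (div_lt_one ((norm_nonneg _).trans_lt (hv s hs))).2 (hv s hs)

theorem eventually_windingIntegral_eq (hclosed : z a = z b) (hw : ∀ s ∈ Icc a b, z s ≠ w) :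
    ∀ᶠ v in 𝓝 w, windingIntegral z z' a b v = windingIntegral z z' a b w := by
  have hz := continuous_of_forall_hasDerivAt hd
  obtain ⟨s₀, hs₀, hmin⟩ := isCompact_Icc.exists_isMinOn (nonempty_Icc.2 hab)
    (f := fun s => ‖z s - w‖) (by fun_prop)
  filter_upwards [Metric.ball_mem_nhds w (norm_sub_pos_iff.2 (hw s₀ hs₀))] with v hv
  exact windingIntegral_eq_of_norm_sub_lt hd hz' hab hclosed fun s hs =>
    (mem_ball_iff_norm.1 hv).trans_le (hmin hs)

theorem windingIntegral_eq_zero_of_mem (hclosed : z a = z b) {O : Set ℂ} (hO : IsOpen O)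
    (hconn : IsPreconnected O) (hunb : ¬ Bornology.IsBounded O) (hdisj : Disjoint O (range z))
    (hw : w ∈ O) : windingIntegral z z' a b w = 0 := by
  obtain ⟨R, hR⟩ := isCompact_Icc.exists_bound_of_continuousOn (s := Icc a b)
    (continuous_of_forall_hasDerivAt hd).continuousOn
  obtain ⟨p, hpO, hp⟩ : ∃ p ∈ O, R < ‖p‖ := by
    by_contra! h
    exact hunb (isBounded_iff_forall_norm_le.2 ⟨R, h⟩)
  have hder : ∀ x ∈ O, HasDerivAt (windingIntegral z z' a b) 0 x := fun x hx =>
    (hasDerivAt_const x _).congr_of_eventuallyEq <|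
      eventually_windingIntegral_eq hd hz' hab hclosed fun s _ h =>
        disjoint_left.1 hdisj hx ⟨s, h⟩
  rw [hO.is_const_of_deriv_eq_zero hconn
    (fun x hx => (hder x hx).differentiableAt.differentiableWithinAt)
    (fun x hx => (hder x hx).deriv) hw hpO]
  exact windingIntegral_eq_zero_of_norm_lt hd hz' hab hclosed fun s hs => (hR s hs).trans_lt hp

theorem windingIntegral_eq_zero_of_mem_closure (hclosed : z a = z b) {O : Set ℂ} (hO : IsOpen O)
    (hconn : IsPreconnected O) (hunb : ¬ Bornology.IsBounded O) (hdisj : Disjoint O (range z))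
    (hw : w ∈ closure O) (hzw : ∀ s ∈ Icc a b, z s ≠ w) : windingIntegral z z' a b w = 0 := by
  obtain ⟨v, hv, hvO⟩ := mem_closure_iff_nhds.1 hw _
    (eventually_windingIntegral_eq hd hz' hab hclosed hzw)
  have hvw : windingIntegral z z' a b v = windingIntegral z z' a b w := hv
  exact hvw ▸ windingIntegral_eq_zero_of_mem hd hz' hab hclosed hO hconn hunb hdisj hvO

end WindingIntegral

/-- The complexified Poisson kernel `(p / (q - iδ) - p / (q + iδ)) / 2i`, which compares the winding
integrands of two poles placed symmetrically on the two sides of a curve. -/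
def poleKernel (δ : ℝ) (q p : ℂ) : ℂ := δ * p / (q ^ 2 + (δ : ℂ) ^ 2)

section WindingJump

variable {δ x : ℝ} {q p : ℂ}

theorem one_div_le_re_div {X : ℝ} {d : ℂ} (hX : 0 < X) (hd : ‖d - X‖ ≤ X / 8)
    (hp : ‖p - 1‖ ≤ 1 / 20) : 1 / (4 * X) ≤ (p / d).re := by
  have hX' : ‖(X : ℂ)‖ = X := by rw [Complex.norm_real, Real.norm_of_nonneg hX.le]
  have hd_lower : 7 / 8 * X ≤ ‖d‖ := by
    have := norm_sub_norm_le (X : ℂ) d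
    rw [norm_sub_rev, hX'] at this
    linarith
  have hd0 : d ≠ 0 := norm_pos_iff.1 (by linarith)
  have hclose : ‖X * (p / d) - 1‖ ≤ 3 / 4 := by
    have hsplit : X * (p / d) - 1 = (X * (p - 1) - (d - X)) / d := by field_simp; ring
    rw [hsplit, norm_div, div_le_iff₀ (by linarith)]
    calc ‖X * (p - 1) - (d - X)‖ ≤ ‖X * (p - 1)‖ + ‖d - X‖ := norm_sub_le _ _
      _ ≤ X * (1 / 20) + X / 8 := by rw [norm_mul, hX']; gcongr
      _ ≤ 3 / 4 * ‖d‖ := by linarith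
  have hre : 1 / 4 ≤ X * (p / d).re := by
    have := (abs_le.1 ((Complex.abs_re_le_norm _).trans hclose)).1
    rw [Complex.sub_re, Complex.re_ofReal_mul, Complex.one_re] at this
    linarith
  rw [div_le_iff₀ (by positivity)]
  linarith

theorem norm_sq_add_sq_sub_le (hq : ‖q - x‖ ≤ |x| / 20) :
    ‖q ^ 2 + (δ : ℂ) ^ 2 - ((x ^ 2 + δ ^ 2 : ℝ) : ℂ)‖ ≤ (x ^ 2 + δ ^ 2) / 8 := by
  have hfactor : q ^ 2 + (δ : ℂ) ^ 2 - ((x ^ 2 + δ ^ 2 : ℝ) : ℂ) = (q - x) * (q - x + 2 * x) := by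
    push_cast
    ring
  calc ‖q ^ 2 + (δ : ℂ) ^ 2 - ((x ^ 2 + δ ^ 2 : ℝ) : ℂ)‖ = ‖q - x‖ * ‖q - x + 2 * x‖ := by
        rw [hfactor, norm_mul]
    _ ≤ ‖q - x‖ * (‖q - x‖ + 2 * |x|) := by
        gcongr
        simpa using norm_add_le (q - x) (2 * x)
    _ ≤ |x| / 20 * (|x| / 20 + 2 * |x|) := by gcongr
    _ ≤ (x ^ 2 + δ ^ 2) / 8 := by nlinarith [sq_abs x, sq_nonneg δ, sq_nonneg x]

theorem div_le_re_poleKernel (hδ : 0 < δ) (hq : ‖q - x‖ ≤ |x| / 20) (hp : ‖p - 1‖ ≤ 1 / 20) :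
    δ / (4 * (x ^ 2 + δ ^ 2)) ≤ (poleKernel δ q p).re := by
  rw [poleKernel, mul_div_assoc, Complex.re_ofReal_mul, div_eq_mul_one_div]
  exact mul_le_mul_of_nonneg_left
    (one_div_le_re_div (by positivity) (norm_sq_add_sq_sub_le hq) hp) hδ.le

theorem one_div_le_re_poleKernel (hδ : 0 < δ) (hx : |x| ≤ δ) (hq : ‖q - x‖ ≤ |x| / 20)
    (hp : ‖p - 1‖ ≤ 1 / 20) : 1 / (8 * δ) ≤ (poleKernel δ q p).re := by
  have hsq : x ^ 2 ≤ δ ^ 2 := sq_le_sq' (abs_le.1 hx).1 (abs_le.1 hx).2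
  calc 1 / (8 * δ) = δ / (4 * (δ ^ 2 + δ ^ 2)) := by field_simp; ring
    _ ≤ δ / (4 * (x ^ 2 + δ ^ 2)) := by gcongr
    _ ≤ _ := div_le_re_poleKernel hδ hq hp

theorem sq_add_sq_ne_zero_of_norm_sub_le (hδ : 0 < δ) (hq : ‖q - x‖ ≤ |x| / 20) :
    q ^ 2 + (δ : ℂ) ^ 2 ≠ 0 := by
  intro hzero
  have := norm_sq_add_sq_sub_le (δ := δ) hq
  rw [hzero, zero_sub, norm_neg, Complex.norm_real, Real.norm_of_nonneg (by positivity)] at this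
  nlinarith [sq_nonneg x]

theorem half_sq_le_norm_sq_add_sq {c : ℝ} (hδ : 0 ≤ δ) (hδc : δ ≤ c / 2) (hc : c ≤ ‖q‖) :
    c ^ 2 / 2 ≤ ‖q ^ 2 + (δ : ℂ) ^ 2‖ := by
  have htri := norm_sub_norm_le (q ^ 2) (-(δ : ℂ) ^ 2)
  rw [sub_neg_eq_add, norm_neg, norm_pow, norm_pow, Complex.norm_real,
    Real.norm_of_nonneg hδ] at htri
  have hq2 : c ^ 2 ≤ ‖q‖ ^ 2 := pow_le_pow_left₀ (by linarith) hc 2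
  nlinarith

theorem norm_poleKernel_le {c Q : ℝ} (hδ : 0 < δ) (hδc : δ ≤ c / 2) (hc : c ≤ ‖q‖) (hp : ‖p‖ ≤ Q) :
    ‖poleKernel δ q p‖ ≤ 2 * Q / c ^ 2 * δ := by
  have hc0 : 0 < c := by linarith
  rw [poleKernel, norm_div, norm_mul, Complex.norm_real, Real.norm_of_nonneg hδ.le]
  calc δ * ‖p‖ / ‖q ^ 2 + (δ : ℂ) ^ 2‖ ≤ δ * Q / (c ^ 2 / 2) := by
        gcongr
        · exact mul_nonneg hδ.le ((norm_nonneg p).trans hp)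
        · exact half_sq_le_norm_sq_add_sq hδ.le hδc hc
    _ = 2 * Q / c ^ 2 * δ := by field_simp

theorem le_integral_of_le_on_subinterval {f : ℝ → ℝ} {a b c d m M : ℝ} (hac : a ≤ c) (hcd : c ≤ d)
    (hdb : d ≤ b) (hf : ContinuousOn f (Icc a b)) (hM : ∀ s ∈ Icc a b, -M ≤ f s)
    (hm : ∀ s ∈ Icc c d, m ≤ f s) :
    (d - c) * m - ((c - a) + (b - d)) * M ≤ ∫ s in a..b, f s := by
  have hint : ∀ {u v}, a ≤ u → u ≤ v → v ≤ b → IntervalIntegrable f volume u v := fun hu huv hv =>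
    (hf.mono (Icc_subset_Icc hu hv)).intervalIntegrable_of_Icc huv
  have hconst : ∀ {u v k}, a ≤ u → u ≤ v → v ≤ b → (∀ s ∈ Icc u v, k ≤ f s) →
      (v - u) * k ≤ ∫ s in u..v, f s := fun hu huv hv hk => by
    simpa using intervalIntegral.integral_mono_on huv intervalIntegrable_const (hint hu huv hv) hk
  have hleft := hconst le_rfl hac (hcd.trans hdb) fun s hs => hM s ⟨hs.1, by linarith [hs.2]⟩
  have hmid := hconst hac hcd hdb hm
  have hright := hconst (hac.trans hcd) hdb le_rfl fun s hs => hM s ⟨by linarith [hs.1], hs.2⟩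
  have hsum₁ := intervalIntegral.integral_add_adjacent_intervals
    (hint le_rfl hac (hcd.trans hdb)) (hint hac hcd hdb)
  have hsum₂ := intervalIntegral.integral_add_adjacent_intervals
    (hint le_rfl (hac.trans hcd) hdb) (hint (hac.trans hcd) hdb le_rfl)
  linarith

theorem exists_pos_le_norm_of_le_abs_sub {f : ℝ → ℂ} (hf : Continuous f) {a b g r : ℝ} (hr : 0 < r)
    (hne : ∀ s ∈ Icc a b, s ≠ g → f s ≠ 0) :
    ∃ c > 0, ∀ s ∈ Icc a b, r ≤ |s - g| → c ≤ ‖f s‖ := by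
  have hcompact : IsCompact (Icc a b ∩ {s | r ≤ |s - g|}) :=
    isCompact_Icc.inter_right (isClosed_le (by fun_prop) (by fun_prop))
  obtain ⟨c, hc, hle⟩ := hcompact.exists_forall_le' (f := fun s => ‖f s‖) (a := 0) (by fun_prop)
    fun s hs => norm_pos_iff.2 (hne s hs.1 fun h => by
      have := hs.2
      simp only [h, mem_ofPred_eq, sub_self, abs_zero] at this
      linarith)
  exact ⟨c, hc, fun s hs hsr => hle s ⟨hs, hsr⟩⟩

theorem exists_integral_poleKernel_re_pos {q p : ℝ → ℂ} (hq : Continuous q) (hp : Continuous p)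
    {a b g r : ℝ} (hr : 0 < r) (hag : a ≤ g - r) (hgb : g + r ≤ b)
    (hq_near : ∀ s, |s - g| ≤ r → ‖q s - ((s - g : ℝ) : ℂ)‖ ≤ |s - g| / 20)
    (hp_near : ∀ s, |s - g| ≤ r → ‖p s - 1‖ ≤ 1 / 20) (hne : ∀ s ∈ Icc a b, s ≠ g → q s ≠ 0) :
    ∃ δ : ℝ, 0 < δ ∧ (∀ s ∈ Icc a b, q s ^ 2 + (δ : ℂ) ^ 2 ≠ 0) ∧
      0 < ∫ s in a..b, (poleKernel δ (q s) (p s)).re := by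
  obtain ⟨c, hc, hc_le⟩ := exists_pos_le_norm_of_le_abs_sub hq hr hne
  obtain ⟨Q, hQ⟩ := isCompact_Icc.exists_bound_of_continuousOn (s := Icc a b) hp.continuousOn
  have hQ0 : 0 ≤ Q := (norm_nonneg _).trans (hQ a (left_mem_Icc.2 (by linarith)))
  have hsmall : Tendsto (fun δ => 2 * Q / c ^ 2 * δ * (b - a)) (𝓝[>] 0) (𝓝 0) :=
    tendsto_nhdsWithin_of_tendsto_nhds (Continuous.tendsto' (by fun_prop) _ _ (by simp))
  obtain ⟨δ, hδK, hδ, hδle⟩ := ((hsmall.eventually_lt_const (show (0 : ℝ) < 1 / 4 by norm_num)).and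
    (Ioc_mem_nhdsGT (show (0 : ℝ) < min r (c / 2) by positivity))).exists
  have hδr := hδle.trans (min_le_left _ _)
  have hδc := hδle.trans (min_le_right _ _)
  have hden : ∀ s ∈ Icc a b, q s ^ 2 + (δ : ℂ) ^ 2 ≠ 0 := by
    intro s hs hzero
    rcases le_total |s - g| r with h | h
    · exact sq_add_sq_ne_zero_of_norm_sub_le hδ (hq_near s h) hzero
    · have := half_sq_le_norm_sq_add_sq hδ.le hδc (hc_le s hs h)
      rw [hzero, norm_zero] at this
      nlinarith
  have hfar : ∀ s ∈ Icc a b, -(2 * Q / c ^ 2 * δ) ≤ (poleKernel δ (q s) (p s)).re := by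
    intro s hs
    rcases le_total |s - g| r with h | h
    · refine le_trans ?_ (div_le_re_poleKernel hδ (hq_near s h) (hp_near s h))
      rw [neg_le_iff_add_nonneg]
      positivity
    · exact (abs_le.1 ((Complex.abs_re_le_norm _).trans
        (norm_poleKernel_le hδ hδc (hc_le s hs h) (hQ s hs)))).1
  have hnear : ∀ s ∈ Icc (g - δ) (g + δ), 1 / (8 * δ) ≤ (poleKernel δ (q s) (p s)).re := by
    intro s hs
    have hsδ : |s - g| ≤ δ := abs_sub_le_iff.2 ⟨by linarith [hs.2], by linarith [hs.1]⟩
    exact one_div_le_re_poleKernel hδ hsδ (hq_near s (hsδ.trans hδr)) (hp_near s (hsδ.trans hδr))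
  refine ⟨δ, hδ, hden, lt_of_lt_of_le ?_ (le_integral_of_le_on_subinterval (by linarith)
    (by linarith) (by linarith) ?_ hfar hnear)⟩
  · have hmass : (g + δ - (g - δ)) * (1 / (8 * δ)) = 1 / 4 := by field_simp; ring
    rw [hmass]
    nlinarith [show 0 ≤ 2 * Q / c ^ 2 * δ by positivity]
  · exact Complex.continuous_re.comp_continuousOn
      (ContinuousOn.div (by fun_prop) (by fun_prop) hden)

end WindingJump

section Loop

variable {z z' : ℝ → ℂ} {a b g : ℝ}

theorem exists_norm_deriv_sub_le_and_norm_sub_le (hd : ∀ s, HasDerivAt z (z' s) s)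
    (hz' : Continuous z') (g : ℝ) {ε : ℝ} (hε : 0 < ε) :
    ∃ r > 0, ∀ s, |s - g| ≤ r →
      ‖z' s - z' g‖ ≤ ε ∧ ‖z s - z g - (s - g) • z' g‖ ≤ ε * |s - g| := by
  obtain ⟨r, hr, hball⟩ :=
    Metric.eventually_nhds_iff.1 (Metric.continuousAt_iff'.1 hz'.continuousAt ε hε)
  have hclose : ∀ s ∈ Icc (g - r / 2) (g + r / 2), ‖z' s - z' g‖ ≤ ε := fun s hs => by
    rw [← dist_eq_norm]
    refine (hball ?_).le
    rw [Real.dist_eq, abs_lt]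
    constructor <;> linarith [hs.1, hs.2]
  refine ⟨r / 2, by positivity, fun s hs => ?_⟩
  have hs' : s ∈ Icc (g - r / 2) (g + r / 2) := by
    constructor <;> linarith [(abs_le.1 hs).1, (abs_le.1 hs).2]
  refine ⟨hclose s hs', ?_⟩
  have := (convex_Icc (g - r / 2) (g + r / 2)).norm_image_sub_le_of_norm_hasDerivWithin_le
    (f := fun s => z s - s • z' g) (f' := fun s => z' s - z' g)
    (fun x _ => by
      simpa using ((hd x).fun_sub ((hasDerivAt_id' x).smul_const (z' g))).hasDerivWithinAt)
    hclose (show g ∈ _ by constructor <;> linarith) hs'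
  rwa [Real.norm_eq_abs, show z s - s • z' g - (z g - g • z' g) = z s - z g - (s - g) • z' g by
    module] at this

theorem windingIntegral_sub_windingIntegral (hz : Continuous z) (hz' : Continuous z') (hab : a ≤ b)
    {δ : ℝ} {c v : ℂ} (hv : v ≠ 0)
    (hden : ∀ s ∈ Icc a b, ((z s - c) / v) ^ 2 + (δ : ℂ) ^ 2 ≠ 0) :
    (∀ s ∈ Icc a b, z s ≠ c + δ * Complex.I * v) ∧ (∀ s ∈ Icc a b, z s ≠ c - δ * Complex.I * v) ∧
    windingIntegral z z' a b (c + δ * Complex.I * v) -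
        windingIntegral z z' a b (c - δ * Complex.I * v) =
      2 * Complex.I * ∫ s in a..b, poleKernel δ ((z s - c) / v) (z' s / v) := by
  have hfactor : ∀ s, (z s - (c + δ * Complex.I * v)) * (z s - (c - δ * Complex.I * v)) =
      (((z s - c) / v) ^ 2 + (δ : ℂ) ^ 2) * v ^ 2 := fun s => by
    field_simp
    linear_combination (-(δ : ℂ) ^ 2 * v ^ 2) * Complex.I_sq
  have hprod : ∀ s ∈ Icc a b,
      (z s - (c + δ * Complex.I * v)) * (z s - (c - δ * Complex.I * v)) ≠ 0 := fun s hs => by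
    rw [hfactor]
    exact mul_ne_zero (hden s hs) (pow_ne_zero _ hv)
  have hplus := fun s hs => sub_ne_zero.1 (left_ne_zero_of_mul (hprod s hs))
  have hminus := fun s hs => sub_ne_zero.1 (right_ne_zero_of_mul (hprod s hs))
  refine ⟨hplus, hminus, ?_⟩
  rw [windingIntegral, windingIntegral, ← intervalIntegral.integral_sub
    (intervalIntegrable_windingIntegrand hz hz' hab hplus)
    (intervalIntegrable_windingIntegrand hz hz' hab hminus), ← intervalIntegral.integral_const_mul]
  refine intervalIntegral.integral_congr fun s hs => ?_
  rw [uIcc_of_le hab] at hs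
  simp only [poleKernel]
  rw [div_sub_div _ _ (sub_ne_zero.2 (hplus s hs)) (sub_ne_zero.2 (hminus s hs)), hfactor]
  field_simp [hden s hs]
  ring

theorem exists_windingIntegral_ne (hd : ∀ s, HasDerivAt z (z' s) s) (hz' : Continuous z')
    (hg : g ∈ Ioo a b) (hreg : z' g ≠ 0) (hsimple : ∀ s ∈ Icc a b, s ≠ g → z s ≠ z g) :
    ∃ w₁ w₂, (∀ s ∈ Icc a b, z s ≠ w₁) ∧ (∀ s ∈ Icc a b, z s ≠ w₂) ∧
      windingIntegral z z' a b w₁ ≠ windingIntegral z z' a b w₂ := by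
  have hz := continuous_of_forall_hasDerivAt hd
  have hab : a ≤ b := (hg.1.trans hg.2).le
  obtain ⟨r₀, hr₀, hnear⟩ := exists_norm_deriv_sub_le_and_norm_sub_le hd hz' g
    (ε := ‖z' g‖ / 20) (by positivity)
  set r := min r₀ (min (g - a) (b - g))
  have hr : 0 < r := lt_min hr₀ (lt_min (sub_pos.2 hg.1) (sub_pos.2 hg.2))
  have hra : r ≤ g - a := (min_le_right _ _).trans (min_le_left _ _)
  have hrb : r ≤ b - g := (min_le_right _ _).trans (min_le_right _ _)
  have hq_near : ∀ s, |s - g| ≤ r → ‖(z s - z g) / z' g - ((s - g : ℝ) : ℂ)‖ ≤ |s - g| / 20 := by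
    intro s hs
    have hquot : (z s - z g) / z' g - ((s - g : ℝ) : ℂ) = (z s - z g - (s - g) • z' g) / z' g := by
      rw [Complex.real_smul]
      field_simp
    rw [hquot, norm_div, div_le_iff₀ (norm_pos_iff.2 hreg)]
    linarith [(hnear s (hs.trans (min_le_left _ _))).2]
  have hp_near : ∀ s, |s - g| ≤ r → ‖z' s / z' g - 1‖ ≤ 1 / 20 := by
    intro s hs
    rw [div_sub_one hreg, norm_div, div_le_iff₀ (norm_pos_iff.2 hreg)]
    linarith [(hnear s (hs.trans (min_le_left _ _))).1]
  obtain ⟨δ, -, hden, hpos⟩ := exists_integral_poleKernel_re_pos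
    (q := fun s => (z s - z g) / z' g) (p := fun s => z' s / z' g) (by fun_prop) (by fun_prop) hr
    (by linarith) (by linarith) hq_near hp_near
    fun s hs hsg => div_ne_zero (sub_ne_zero.2 (hsimple s hs hsg)) hreg
  obtain ⟨hplus, hminus, hdiff⟩ := windingIntegral_sub_windingIntegral hz hz' hab hreg hden
  refine ⟨_, _, hplus, hminus, fun heq => hpos.ne' ?_⟩
  rw [heq, sub_self, eq_comm, mul_eq_zero_iff_left (by simp)] at hdiff
  have hint : IntervalIntegrable (fun s => poleKernel δ ((z s - z g) / z' g) (z' s / z' g))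
      volume a b := ContinuousOn.intervalIntegrable_of_Icc hab
    (ContinuousOn.div (by fun_prop) (by fun_prop) hden)
  simpa [hdiff] using Complex.reCLM.intervalIntegral_comp_comm hint

theorem exists_simple_loop (hz : Continuous z) {e : ℝ} (he : 0 < e)
    (hloc : ∀ s t, |s - t| ≤ e → z s = z t → s = t) (hinj : ¬ Function.Injective z) :
    ∃ a b g, g ∈ Ioo a b ∧ z a = z b ∧ ∀ s ∈ Icc a b, s ≠ g → z s ≠ z g := by
  obtain ⟨x, y, hxy, hlt⟩ : ∃ x y, z x = z y ∧ x < y := by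
    simp only [Function.Injective, not_forall] at hinj
    obtain ⟨x, y, hxy, hne⟩ := hinj
    rcases lt_or_gt_of_ne hne with h | h
    exacts [⟨x, y, hxy, h⟩, ⟨y, x, hxy.symm, h⟩]
  have hgap : ∀ s t, s < t → z s = z t → s + e ≤ t := fun s t hst heq => by
    by_contra! h
    exact hst.ne (hloc s t (abs_sub_le_iff.2 ⟨by linarith, by linarith⟩) heq)
  have hcompact : IsCompact
      ((Icc x y ×ˢ Icc x y) ∩ ({p : ℝ × ℝ | p.1 + e ≤ p.2} ∩ {p | z p.1 = z p.2})) :=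
    (isCompact_Icc.prod isCompact_Icc).inter_right
      ((isClosed_le (by fun_prop) (by fun_prop)).inter (isClosed_eq (by fun_prop) (by fun_prop)))
  obtain ⟨⟨a, b⟩, ⟨⟨ha, hb⟩, hab, hzab⟩, hmin⟩ := hcompact.exists_isMinOn
    ⟨(x, y), ⟨left_mem_Icc.2 hlt.le, right_mem_Icc.2 hlt.le⟩, hgap x y hlt hxy, hxy⟩
    (f := fun p : ℝ × ℝ => p.2 - p.1) (by fun_prop)
  have hshort : ∀ s t, a ≤ s → s < t → t ≤ b → z s = z t → b - a ≤ t - s := fun s t hs hst ht heq =>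
    hmin (show (s, t) ∈ _ from ⟨⟨⟨by linarith [ha.1], by linarith [hb.2]⟩, ⟨by linarith [ha.1],
      by linarith [hb.2]⟩⟩, hgap s t hst heq, heq⟩)
  have hab' : a < b := by linarith [show a + e ≤ b from hab]
  refine ⟨a, b, (a + b) / 2, ⟨by linarith, by linarith⟩, hzab, fun s hs hsg heq => ?_⟩
  rcases lt_or_gt_of_ne hsg with h | h
  · linarith [hshort s _ hs.1 h (by linarith) heq, hs.1]
  · linarith [hshort _ s (by linarith) h hs.2 heq.symm, hs.2]

/-- Around a double point the curve would contain a simple loop; its winding integral jumps across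
the loop, although it vanishes on the closures of both unbounded domains. -/
theorem injective_of_forall_mem_closure (hd : ∀ s, HasDerivAt z (z' s) s) (hz' : Continuous z')
    (hreg : ∀ s, z' s ≠ 0) {e : ℝ} (he : 0 < e) (hloc : ∀ s t, |s - t| ≤ e → z s = z t → s = t)
    {O : Bool → Set ℂ} (hO : ∀ i, IsOpen (O i)) (hconn : ∀ i, IsPreconnected (O i))
    (hunb : ∀ i, ¬ Bornology.IsBounded (O i)) (hdisj : ∀ i, Disjoint (O i) (range z))
    (hcover : ∀ w, ∃ i, w ∈ closure (O i)) : Function.Injective z := by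
  by_contra hinj
  obtain ⟨a, b, g, hg, hclosed, hsimple⟩ :=
    exists_simple_loop (continuous_of_forall_hasDerivAt hd) he hloc hinj
  obtain ⟨w₁, w₂, hw₁, hw₂, hne⟩ := exists_windingIntegral_ne hd hz' hg (hreg g) hsimple
  have hzero : ∀ w, (∀ s ∈ Icc a b, z s ≠ w) → windingIntegral z z' a b w = 0 := fun w hw => by
    obtain ⟨i, hi⟩ := hcover w
    exact windingIntegral_eq_zero_of_mem_closure hd hz' (hg.1.trans hg.2).le hclosed (hO i)
      (hconn i) (hunb i) (hdisj i) hi hw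
  exact hne ((hzero w₁ hw₁).trans (hzero w₂ hw₂).symm)

end Loop

/-- The open sets `O` and `O'` are the two complementary domains of the curve `z`. -/
structure IsComplementaryPair (z : ℝ → ℂ) (O O' : Set ℂ) : Prop where
  isOpen_left : IsOpen O
  isOpen_right : IsOpen O'
  isPreconnected_left : IsPreconnected O
  isPreconnected_right : IsPreconnected O'
  union_eq : O ∪ O' ∪ range z = univ
  disjoint : Disjoint O O'
  frontier_left : frontier O = range z
  frontier_right : frontier O' = range z

namespace IsComplementaryPair

variable {z : ℝ → ℂ} {O O' : Set ℂ} {S : Set ℂ}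

protected theorem symm (h : IsComplementaryPair z O O') : IsComplementaryPair z O' O :=
  ⟨h.isOpen_right, h.isOpen_left, h.isPreconnected_right, h.isPreconnected_left,
    by rw [union_comm O', h.union_eq], h.disjoint.symm, h.frontier_right, h.frontier_left⟩

theorem disjoint_range (h : IsComplementaryPair z O O') : Disjoint O (range z) := by
  rw [← h.frontier_left, h.isOpen_left.frontier_eq]
  exact disjoint_sdiff_right

theorem mem_closure (h : IsComplementaryPair z O O') (α : ℝ) : z α ∈ closure O :=
  frontier_subset_closure (h.frontier_left ▸ mem_range_self α)

theorem subset_union (h : IsComplementaryPair z O O') (hS : Disjoint S (range z)) :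
    S ⊆ O ∪ O' := fun w hw =>
  ((h.union_eq ▸ mem_univ w : w ∈ O ∪ O' ∪ range z)).resolve_right (disjoint_left.1 hS hw)

theorem subset_left (h : IsComplementaryPair z O O') (hS : IsPreconnected S)
    (hoff : Disjoint S (range z)) (hmeet : (S ∩ O).Nonempty) : S ⊆ O :=
  hS.subset_left_of_subset_union h.isOpen_left h.isOpen_right h.disjoint
    (h.subset_union hoff) hmeet

theorem disjoint_segment (h : IsComplementaryPair z O O') {x y : ℂ} (hO : openSegment ℝ x y ⊆ O) :
    Disjoint (segment ℝ x y) O' :=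
  ((h.disjoint.mono_left hO).closure_left h.isOpen_right).mono_left
    segment_subset_closure_openSegment

theorem subset_left_or_subset_right (h : IsComplementaryPair z O O') (hS : IsPreconnected S)
    (hoff : Disjoint S (range z)) : S ⊆ O ∨ S ⊆ O' :=
  hS.subset_or_subset h.isOpen_left h.isOpen_right h.disjoint (h.subset_union hoff)

end IsComplementaryPair

/-- The interface of a two-fluid configuration at a fixed time, in complex notation: a regular
periodic curve `z` with Lipschitz derivative `z'` together with the lower fluid domain `O₁` and the
upper fluid domain `O₂`. All bounds are expressed through the single constant `A`. -/
structure FluidInterface (A : ℝ) (z z' : ℝ → ℂ) (O₁ O₂ : Set ℂ) : Prop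
    extends IsComplementaryPair z O₁ O₂ where
  one_le : 1 ≤ A
  hasDerivAt : ∀ α, HasDerivAt z (z' α) α
  norm_deriv_sub_le : ∀ α β, ‖z' α - z' β‖ ≤ A * |α - β|
  inv_le_norm_deriv : ∀ α, A⁻¹ ≤ ‖z' α‖
  norm_sub_le : ∀ α : ℝ, ‖z α - (α : ℂ)‖ ≤ A
  periodic : ∀ α, z (α + 2 * Real.pi) = z α + ((2 * Real.pi : ℝ) : ℂ)
  strip : ∃ a : ℝ, {w : ℂ | w.im ≤ -a} ⊆ O₁ ∧ {w : ℂ | a ≤ w.im} ⊆ O₂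

namespace FluidInterface

variable {A : ℝ} {z z' : ℝ → ℂ} {O₁ O₂ : Set ℂ} {α β : ℝ}

theorem pos (C : FluidInterface A z z' O₁ O₂) : 0 < A := one_pos.trans_le C.one_le

theorem continuous (C : FluidInterface A z z' O₁ O₂) : Continuous z :=
  continuous_of_forall_hasDerivAt C.hasDerivAt

theorem continuous_deriv (C : FluidInterface A z z' O₁ O₂) : Continuous z' :=
  (LipschitzWith.of_dist_le' (K := A) fun α β => by
    simpa only [dist_eq_norm, Real.norm_eq_abs] using C.norm_deriv_sub_le α β).continuous

theorem deriv_ne_zero (C : FluidInterface A z z' O₁ O₂) (α : ℝ) : z' α ≠ 0 :=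
  norm_pos_iff.1 ((inv_pos.2 C.pos).trans_le (C.inv_le_norm_deriv α))

theorem hasStrictDerivAt (C : FluidInterface A z z' O₁ O₂) (α : ℝ) :
    HasStrictDerivAt z (z' α) α :=
  hasStrictDerivAt_of_hasDerivAt_of_continuousAt (Eventually.of_forall C.hasDerivAt)
    C.continuous_deriv.continuousAt

theorem norm_sub_sub_le (C : FluidInterface A z z' O₁ O₂) {γ r : ℝ} (hα : |α - γ| ≤ r)
    (hβ : |β - γ| ≤ r) :
    ‖z α - z β - ((α - β : ℝ) : ℂ) * z' γ‖ ≤ A * r * |α - β| := by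
  have hderiv (s : ℝ) : HasDerivAt (fun s : ℝ => z s - (s : ℂ) * z' γ) (z' s - z' γ) s := by
    simpa using (C.hasDerivAt s).fun_sub ((hasDerivAt_id s).ofReal_comp.mul_const (z' γ))
  have hbound : ∀ s ∈ Metric.closedBall γ r, ‖z' s - z' γ‖ ≤ A * r := fun s hs =>
    (C.norm_deriv_sub_le s γ).trans (mul_le_mul_of_nonneg_left hs C.pos.le)
  have h := (convex_closedBall γ r).norm_image_sub_le_of_norm_hasDerivWithin_le
    (fun s _ => (hderiv s).hasDerivWithinAt) hbound (x := β) (y := α) hβ hα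
  rw [Real.norm_eq_abs] at h
  rwa [show z α - z β - ((α - β : ℝ) : ℂ) * z' γ =
    z α - (α : ℂ) * z' γ - (z β - (β : ℂ) * z' γ) by push_cast; ring]

theorem abs_sub_div_le_norm_sub (C : FluidInterface A z z' O₁ O₂)
    (h : |α - β| ≤ 1 / (2 * A ^ 2)) : |α - β| / (2 * A) ≤ ‖z α - z β‖ := by
  have hA := C.pos
  have htaylor := C.norm_sub_sub_le (β := β) le_rfl (by simp : |β - β| ≤ |α - β|)
  have hmain : ‖((α - β : ℝ) : ℂ) * z' β‖ ≤ ‖z α - z β‖ + A * |α - β| * |α - β| := by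
    linarith [norm_sub_norm_le (((α - β : ℝ) : ℂ) * z' β) (z α - z β),
      norm_sub_rev (((α - β : ℝ) : ℂ) * z' β) (z α - z β)]
  have hlin : |α - β| * A⁻¹ ≤ ‖((α - β : ℝ) : ℂ) * z' β‖ := by
    rw [norm_mul, Complex.norm_real, Real.norm_eq_abs]
    gcongr
    exact C.inv_le_norm_deriv β
  have herr : A * |α - β| * |α - β| ≤ |α - β| / (2 * A) := by
    calc A * |α - β| * |α - β| ≤ A * (1 / (2 * A ^ 2)) * |α - β| := by gcongr
      _ = |α - β| / (2 * A) := by field_simp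
  have hsplit : |α - β| * A⁻¹ = |α - β| / (2 * A) + |α - β| / (2 * A) := by
    field_simp
    ring
  linarith

theorem abs_sub_sub_le_norm_sub (C : FluidInterface A z z' O₁ O₂) (α β : ℝ) :
    |α - β| - 2 * A ≤ ‖z α - z β‖ := by
  have h : ((α - β : ℝ) : ℂ) = (z α - z β) - (z α - α) + (z β - β) := by push_cast; ring
  have hnorm : |α - β| = ‖(z α - z β) - (z α - α) + (z β - β)‖ := by
    rw [← h, Complex.norm_real, Real.norm_eq_abs]
  linarith [norm_add_le ((z α - z β) - (z α - α)) (z β - β),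
    _root_.norm_sub_le (z α - z β) (z α - α), C.norm_sub_le α, C.norm_sub_le β]

theorem not_isBounded_left (C : FluidInterface A z z' O₁ O₂) : ¬ Bornology.IsBounded O₁ := by
  obtain ⟨a, ha, -⟩ := C.strip
  intro hb
  obtain ⟨R, hR⟩ := hb.exists_norm_le
  have h := hR ⟨R + 1, -a⟩ (ha (le_refl _ : (_ : ℝ) ≤ _))
  linarith [(le_abs_self _).trans (Complex.abs_re_le_norm ⟨R + 1, -a⟩)]

theorem not_isBounded_right (C : FluidInterface A z z' O₁ O₂) : ¬ Bornology.IsBounded O₂ := by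
  obtain ⟨a, -, ha⟩ := C.strip
  intro hb
  obtain ⟨R, hR⟩ := hb.exists_norm_le
  have h := hR ⟨R + 1, a⟩ (ha (le_refl _ : (_ : ℝ) ≤ _))
  linarith [(le_abs_self _).trans (Complex.abs_re_le_norm ⟨R + 1, a⟩)]

theorem injective (C : FluidInterface A z z' O₁ O₂) : Function.Injective z := by
  have hA := C.pos
  refine injective_of_forall_mem_closure (O := fun b => cond b O₂ O₁) C.hasDerivAt
    C.continuous_deriv C.deriv_ne_zero (by positivity : 0 < 1 / (2 * A ^ 2)) ?_
    (Bool.forall_bool.2 ⟨C.isOpen_left, C.isOpen_right⟩)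
    (Bool.forall_bool.2 ⟨C.isPreconnected_left, C.isPreconnected_right⟩)
    (Bool.forall_bool.2 ⟨C.not_isBounded_left, C.not_isBounded_right⟩)
    (Bool.forall_bool.2 ⟨C.disjoint_range, C.symm.disjoint_range⟩) ?_
  · intro s t hst heq
    have h := C.abs_sub_div_le_norm_sub hst
    rw [heq, sub_self, norm_zero, div_le_iff₀ (by positivity), zero_mul] at h
    exact sub_eq_zero.1 (abs_nonpos_iff.1 h)
  · intro w
    rcases (C.union_eq ▸ mem_univ w : w ∈ O₁ ∪ O₂ ∪ range z) with (h | h) | ⟨α, rfl⟩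
    · exact ⟨false, subset_closure h⟩
    · exact ⟨true, subset_closure h⟩
    · exact ⟨true, C.symm.mem_closure α⟩

theorem isProperMap (C : FluidInterface A z z' O₁ O₂) : IsProperMap z := by
  rw [isProperMap_iff_tendsto_cocompact]
  refine ⟨C.continuous, ?_⟩
  rw [← Metric.cobounded_eq_cocompact (α := ℂ), ← comap_norm_atTop (E := ℂ), tendsto_comap_iff]
  refine tendsto_atTop_mono (fun α => ?_) (tendsto_atTop_add_const_right _ (-A)
    (tendsto_norm_cocompact_atTop (E := ℝ)))
  have h := norm_sub_norm_le (α : ℂ) (z α)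
  rw [norm_sub_rev, Complex.norm_real] at h
  have hnear := C.norm_sub_le α
  rw [Function.comp_apply]
  linarith

theorem isClosedEmbedding (C : FluidInterface A z z' O₁ O₂) : Topology.IsClosedEmbedding z :=
  .of_continuous_injective_isClosedMap C.continuous C.injective C.isProperMap.isClosedMap

end FluidInterface

section TwoSidedness

variable {z z' : ℝ → ℂ} {v : ℂ} {α : ℝ} {O O' : Set ℂ}

theorem isOpen_setOf_eventually_nhds_prod {X Y : Type*} [TopologicalSpace X] {l : Filter Y}
    (q : X × Y → Prop) : IsOpen {x | ∀ᶠ p in 𝓝 x ×ˢ l, q p} := by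
  rw [isOpen_iff_eventually]
  intro x hx
  obtain ⟨qX, hqX, qY, hqY, hq⟩ := eventually_prod_iff.1 hx
  filter_upwards [eventually_eventually_nhds.2 hqX] with x' hx'
  exact eventually_prod_iff.2 ⟨qX, hx', qY, hqY, hq⟩

theorem abs_add_abs_le_two_mul_norm (ρ s : ℝ) : |s| + |ρ| ≤ 2 * ‖(ρ : ℂ) * Complex.I - s‖ := by
  have hre := Complex.abs_re_le_norm ((ρ : ℂ) * Complex.I - s)
  have him := Complex.abs_im_le_norm ((ρ : ℂ) * Complex.I - s)
  simp only [Complex.sub_re, Complex.sub_im, Complex.re_ofReal_mul, Complex.im_ofReal_mul,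
    Complex.I_re, Complex.I_im, Complex.ofReal_re, Complex.ofReal_im, mul_zero, mul_one,
    zero_sub, sub_zero, abs_neg] at hre him
  linarith

theorem add_mul_ne_of_norm_sub_le {x y e v : ℂ} {τ ρ : ℝ} (hv : v ≠ 0) (hρ : ρ ≠ 0)
    (hlin : ‖y - x - τ • v‖ ≤ ‖v‖ / 4 * |τ|) (he : ‖e - Complex.I * v‖ ≤ ‖v‖ / 4) :
    x + ρ * e ≠ y := by
  rintro rfl
  have hbound : ‖v‖ * ‖(ρ : ℂ) * Complex.I - τ‖ ≤ ‖v‖ * ((|τ| + |ρ|) / 4) := by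
    calc ‖v‖ * ‖(ρ : ℂ) * Complex.I - τ‖
        = ‖(x + ρ * e - x - τ • v) - ρ * (e - Complex.I * v)‖ := by
          rw [← norm_mul, Complex.real_smul]
          congr 1
          ring
      _ ≤ ‖v‖ / 4 * |τ| + |ρ| * (‖v‖ / 4) := by
          refine (norm_sub_le _ _).trans (add_le_add hlin ?_)
          rw [norm_mul, Complex.norm_real, Real.norm_eq_abs]
          gcongr
      _ = ‖v‖ * ((|τ| + |ρ|) / 4) := by ring
  have hsmall := le_of_mul_le_mul_left hbound (norm_pos_iff.2 hv)
  have hlarge := abs_add_abs_le_two_mul_norm ρ τ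
  have hρpos : 0 < |ρ| := abs_pos.2 hρ
  linarith [abs_nonneg τ]

theorem eventually_add_mul_notMem_range_of_tendstoUniformly {ι : Type*} {l : Filter ι}
    {ζ : ι → ℝ → ℂ} {β ρ : ι → ℝ} {e : ι → ℂ} (hz : Topology.IsInducing z) (hv : v ≠ 0)
    (hζ : TendstoUniformly ζ z l)
    (hlin : ∀ c > 0, ∀ᶠ p : ι × ℝ in l ×ˢ 𝓝 α,
      ‖ζ p.1 p.2 - ζ p.1 (β p.1) - (p.2 - β p.1) • v‖ ≤ c * |p.2 - β p.1|)
    (hβ : Tendsto β l (𝓝 α)) (he : Tendsto e l (𝓝 (Complex.I * v)))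
    (hρ : Tendsto ρ l (𝓝[≠] 0)) :
    ∀ᶠ i in l, ζ i (β i) + ρ i * e i ∉ range (ζ i) := by
  have hv4 : 0 < ‖v‖ / 4 := by positivity
  obtain ⟨L, hL, U, hU, hLU⟩ := eventually_prod_iff.1 (hlin _ hv4)
  obtain ⟨W, hW, hWU⟩ := (hz.nhds_eq_comap α ▸ hU : {γ | U γ} ∈ comap z (𝓝 (z α)))
  obtain ⟨η, hη, hηW⟩ := Metric.mem_nhds_iff.1 hW
  have hpoint : Tendsto (fun i => ζ i (β i) + ρ i * e i) l (𝓝 (z α)) := by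
    have hρ0 : Tendsto (fun i => (ρ i : ℂ)) l (𝓝 0) :=
      (Complex.continuous_ofReal.tendsto' 0 0 Complex.ofReal_zero).comp
        (hρ.mono_right nhdsWithin_le_nhds)
    simpa using (hζ.tendsto_comp hz.continuous.continuousAt hβ).add (hρ0.mul he)
  filter_upwards [hL, Metric.tendstoUniformly_iff.1 hζ (η / 2) (by positivity),
    hpoint (Metric.ball_mem_nhds _ (by positivity : 0 < η / 2)),
    he (Metric.closedBall_mem_nhds _ hv4), hρ self_mem_nhdsWithin]
    with i hLi hclose hball hdir hρ0 ⟨γ, hγ⟩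
  have hγU : U γ := by
    refine hWU (hηW ?_)
    rw [mem_preimage, ← hγ, Metric.mem_ball] at hball
    have := dist_triangle (z γ) (ζ i γ) (z α)
    rw [Metric.mem_ball]
    linarith [hclose γ]
  exact add_mul_ne_of_norm_sub_le hv hρ0 (hLU hLi hγU) (mem_closedBall_iff_norm.1 hdir) hγ.symm

theorem eventually_add_mul_notMem_range (hz : Topology.IsInducing z)
    (hd : HasStrictDerivAt z v α) (hv : v ≠ 0) :
    ∀ᶠ p : (ℝ × ℂ) × ℝ in 𝓝 (α, Complex.I * v) ×ˢ 𝓝[≠] 0,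
      z p.1.1 + p.2 * p.1.2 ∉ range z := by
  have hβ : Tendsto (fun p : (ℝ × ℂ) × ℝ => p.1.1) (𝓝 (α, Complex.I * v) ×ˢ 𝓝[≠] 0) (𝓝 α) :=
    (continuous_fst.tendsto (α, Complex.I * v)).comp tendsto_fst
  refine eventually_add_mul_notMem_range_of_tendstoUniformly (ζ := fun _ => z) hz hv
    (fun u hu => Eventually.of_forall fun _ _ => refl_mem_uniformity hu) (fun c hc => ?_) hβ
    ((continuous_snd.tendsto (α, Complex.I * v)).comp tendsto_fst) tendsto_snd
  have hpair := (tendsto_snd (f := 𝓝 (α, Complex.I * v) ×ˢ 𝓝[≠] (0 : ℝ)) (g := 𝓝 α)).prodMk_nhds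
    (hβ.comp tendsto_fst)
  exact hpair.eventually (hd.isLittleO.def hc)

theorem nhds_le_map_add_mul_I (hd : HasStrictDerivAt z v α) (hv : v ≠ 0) :
    𝓝 (z α) ≤ map (fun p : ℝ × ℝ => z p.1 + p.2 * (Complex.I * v)) (𝓝 (α, 0)) := by
  have hfst : HasStrictFDerivAt (fun p : ℝ × ℝ => z p.1) _ (α, 0) :=
    HasStrictFDerivAt.comp (α, 0) (g := z) hd.hasStrictFDerivAt hasStrictFDerivAt_fst
  have hsnd : HasStrictFDerivAt (fun p : ℝ × ℝ => (p.2 : ℂ) * (Complex.I * v)) _ (α, 0) :=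
    ((Complex.ofRealCLM.comp (ContinuousLinearMap.snd ℝ ℝ ℝ)).hasStrictFDerivAt).mul_const _
  have hmap := (hfst.add hsnd).map_nhds_eq_of_surj (LinearMap.range_eq_top.2 fun w => by
    refine ⟨((w / v).re, (w / v).im), ?_⟩
    have hre : ((w / v).re : ℂ) * v + Complex.I * v * (w / v).im = w := by
      linear_combination v * Complex.re_add_im (w / v) + div_mul_cancel₀ w hv
    simpa using hre)
  simpa [Pi.add_def] using hmap.ge

/-- Near `z α`, the curve `z` has `O` on its left and `O'` on its right. The condition is imposed
for all base points near `α` and all directions near the normal `I * z' α`, which makes it open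
in `α`. -/
def SeparatesAt (z z' : ℝ → ℂ) (O O' : Set ℂ) (α : ℝ) : Prop :=
  (∀ᶠ p : (ℝ × ℂ) × ℝ in 𝓝 (α, Complex.I * z' α) ×ˢ 𝓝[>] 0, z p.1.1 + p.2 * p.1.2 ∈ O) ∧
    ∀ᶠ p : (ℝ × ℂ) × ℝ in 𝓝 (α, Complex.I * z' α) ×ˢ 𝓝[<] 0, z p.1.1 + p.2 * p.1.2 ∈ O'

theorem isOpen_setOf_separatesAt (hz' : Continuous z') : IsOpen {α | SeparatesAt z z' O O' α} := by
  have hc : Continuous fun α => (α, Complex.I * z' α) := by fun_prop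
  exact ((isOpen_setOf_eventually_nhds_prod _).preimage hc).inter
    ((isOpen_setOf_eventually_nhds_prod _).preimage hc)

theorem eventually_add_mul_mem_of_eventually {l : Filter ℝ}
    (h : ∀ᶠ p : (ℝ × ℂ) × ℝ in 𝓝 (α, v) ×ˢ l, z p.1.1 + p.2 * p.1.2 ∈ O) :
    ∀ᶠ p : ℝ × ℝ in 𝓝 α ×ˢ l, z p.1 + p.2 * v ∈ O :=
  (((continuous_id.prodMk continuous_const).tendsto' α (α, v) rfl).prodMap tendsto_id).eventually h

namespace SeparatesAt

theorem eventually_left (h : SeparatesAt z z' O O' α) :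
    ∀ᶠ ρ : ℝ in 𝓝[>] 0, z α + ρ * (Complex.I * z' α) ∈ O :=
  (eventually_add_mul_mem_of_eventually h.1).curry.self_of_nhds

theorem eventually_right (h : SeparatesAt z z' O O' α) :
    ∀ᶠ ρ : ℝ in 𝓝[<] 0, z α + ρ * (Complex.I * z' α) ∈ O' :=
  (eventually_add_mul_mem_of_eventually h.2).curry.self_of_nhds

theorem eventually_smul_left (h : SeparatesAt z z' O O' α) {c : ℝ} (hc : 0 < c) :
    ∀ᶠ ρ : ℝ in 𝓝[>] 0, z α + ρ • c • (Complex.I * z' α) ∈ O := by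
  have hmul : Tendsto (fun ρ : ℝ => ρ * c) (𝓝[>] 0) (𝓝[>] 0) :=
    tendsto_nhdsWithin_of_tendsto_nhds_of_eventually_within _
      (tendsto_nhdsWithin_of_tendsto_nhds ((continuous_mul_const c).tendsto' 0 0 (zero_mul c)))
      (eventually_mem_nhdsWithin.mono fun ρ hρ => mul_pos hρ hc)
  filter_upwards [hmul.eventually h.eventually_left] with ρ hρ
  rwa [smul_smul, Complex.real_smul]

theorem eventually_smul_right (h : SeparatesAt z z' O O' α) {c : ℝ} (hc : c < 0) :
    ∀ᶠ ρ : ℝ in 𝓝[>] 0, z α + ρ • c • (Complex.I * z' α) ∈ O' := by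
  have hmul : Tendsto (fun ρ : ℝ => ρ * c) (𝓝[>] 0) (𝓝[<] 0) :=
    tendsto_nhdsWithin_of_tendsto_nhds_of_eventually_within _
      (tendsto_nhdsWithin_of_tendsto_nhds ((continuous_mul_const c).tendsto' 0 0 (zero_mul c)))
      (eventually_mem_nhdsWithin.mono fun ρ hρ => mul_neg_of_pos_of_neg hρ hc)
  filter_upwards [hmul.eventually h.eventually_right] with ρ hρ
  rwa [smul_smul, Complex.real_smul]

end SeparatesAt

end TwoSidedness

namespace IsComplementaryPair

variable {z z' : ℝ → ℂ} {v : ℂ} {α : ℝ} {O O' : Set ℂ} {K : Set ℝ}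

theorem eventually_mem_or (h : IsComplementaryPair z O O') (hz : Topology.IsInducing z)
    (hd : HasStrictDerivAt z v α) (hv : v ≠ 0) (hK : Convex ℝ K) (hK0 : 0 ∉ K) :
    (∀ᶠ p : (ℝ × ℂ) × ℝ in 𝓝 (α, Complex.I * v) ×ˢ 𝓝[K] 0, z p.1.1 + p.2 * p.1.2 ∈ O) ∨
      ∀ᶠ p : (ℝ × ℂ) × ℝ in 𝓝 (α, Complex.I * v) ×ˢ 𝓝[K] 0, z p.1.1 + p.2 * p.1.2 ∈ O' := by
  have hcont : Continuous z := hz.continuous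
  have hoff : ∀ᶠ p : (ℝ × ℂ) × ℝ in 𝓝 (α, Complex.I * v) ×ˢ 𝓝[K] 0,
      z p.1.1 + p.2 * p.1.2 ∉ range z :=
    (eventually_add_mul_notMem_range hz hd hv).filter_mono
      (prod_mono_right _ (nhdsWithin_mono _ (subset_compl_singleton_iff.2 hK0)))
  have hbasis := (Metric.nhds_basis_ball (x := (α, Complex.I * v))).prod
    (Metric.nhdsWithin_basis_ball (x := (0 : ℝ)) (s := K))
  obtain ⟨r, hr, hsub⟩ := hbasis.eventually_iff.1 hoff
  have hbox : IsPreconnected ((fun p : (ℝ × ℂ) × ℝ => z p.1.1 + p.2 * p.1.2) ''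
      (Metric.ball (α, Complex.I * v) r.1 ×ˢ (Metric.ball 0 r.2 ∩ K))) :=
    ((convex_ball _ _).prod ((convex_ball _ _).inter hK)).isPreconnected.image _
      (by fun_prop)
  refine (h.subset_left_or_subset_right hbox ?_).imp
    (fun hO => hbasis.eventually_iff.2 ⟨r, hr, fun _ hp => hO (mem_image_of_mem _ hp)⟩)
    (fun hO => hbasis.eventually_iff.2 ⟨r, hr, fun _ hp => hO (mem_image_of_mem _ hp)⟩)
  rw [disjoint_left]
  rintro _ ⟨p, hp, rfl⟩
  exact hsub hp

theorem not_eventually_mem_and (h : IsComplementaryPair z O O') (hd : HasStrictDerivAt z v α)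
    (hv : v ≠ 0) :
    ¬ ((∀ᶠ p : (ℝ × ℂ) × ℝ in 𝓝 (α, Complex.I * v) ×ˢ 𝓝[>] 0, z p.1.1 + p.2 * p.1.2 ∈ O) ∧
      ∀ᶠ p : (ℝ × ℂ) × ℝ in 𝓝 (α, Complex.I * v) ×ˢ 𝓝[<] 0, z p.1.1 + p.2 * p.1.2 ∈ O) := by
  rintro ⟨hgt, hlt⟩
  have hdisj : Disjoint (O ∪ range z) O' :=
    disjoint_union_left.2 ⟨h.disjoint, h.symm.disjoint_range.symm⟩
  have hne : ∀ᶠ p : ℝ × ℝ in 𝓝 α ×ˢ 𝓝[≠] 0, z p.1 + p.2 * (Complex.I * v) ∈ O ∪ range z := by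
    rw [← nhdsLT_sup_nhdsGT, prod_sup, eventually_sup]
    exact ⟨(eventually_add_mul_mem_of_eventually hlt).mono fun _ => Or.inl,
      (eventually_add_mul_mem_of_eventually hgt).mono fun _ => Or.inl⟩
  have hzero : ∀ᶠ p : ℝ × ℝ in 𝓝 α ×ˢ pure 0, z p.1 + p.2 * (Complex.I * v) ∈ O ∪ range z := by
    simp
  have hall : ∀ᶠ p : ℝ × ℝ in 𝓝 (α, 0), z p.1 + p.2 * (Complex.I * v) ∈ O ∪ range z := by
    rw [nhds_prod_eq, ← nhdsNE_sup_pure (0 : ℝ), prod_sup, eventually_sup]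
    exact ⟨hne, hzero⟩
  obtain ⟨w, hwO', hw⟩ := ((mem_closure_iff_frequently.1 (h.symm.mem_closure α)).and_eventually
    (nhds_le_map_add_mul_I hd hv hall)).exists
  exact disjoint_left.1 hdisj hw hwO'

theorem separatesAt_or (h : IsComplementaryPair z O O') (hz : Topology.IsInducing z)
    (hd : HasStrictDerivAt z (z' α) α) (hz' : z' α ≠ 0) :
    SeparatesAt z z' O O' α ∨ SeparatesAt z z' O' O α := by
  have hO := h.not_eventually_mem_and hd hz'
  have hO' := h.symm.not_eventually_mem_and hd hz'
  rcases h.eventually_mem_or hz hd hz' (convex_Ioi 0) self_notMem_Ioi with hgt | hgt <;>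
    rcases h.eventually_mem_or hz hd hz' (convex_Iio 0) self_notMem_Iio with hlt | hlt
  · exact absurd ⟨hgt, hlt⟩ hO
  · exact Or.inl ⟨hgt, hlt⟩
  · exact Or.inr ⟨hgt, hlt⟩
  · exact absurd ⟨hgt, hlt⟩ hO'

theorem forall_separatesAt_or (h : IsComplementaryPair z O O') (hz : Topology.IsInducing z)
    (hd : ∀ α, HasStrictDerivAt z (z' α) α) (hz' : Continuous z') (hreg : ∀ α, z' α ≠ 0) :
    (∀ α, SeparatesAt z z' O O' α) ∨ ∀ α, SeparatesAt z z' O' O α := by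
  have hdisj : Disjoint {α | SeparatesAt z z' O O' α} {α | SeparatesAt z z' O' O α} := by
    rw [disjoint_left]
    intro α hα hα'
    obtain ⟨ρ, hρ, hρ'⟩ := (hα.eventually_left.and hα'.eventually_left).exists
    exact disjoint_left.1 h.disjoint hρ hρ'
  simpa only [univ_subset_iff, eq_univ_iff_forall, mem_ofPred_eq] using
    isPreconnected_univ.subset_or_subset
    (isOpen_setOf_separatesAt hz') (isOpen_setOf_separatesAt hz') hdisj
    fun α _ => h.separatesAt_or hz (hd α) (hreg α)

end IsComplementaryPair

theorem FluidInterface.forall_separatesAt_or {A : ℝ} {z z' : ℝ → ℂ} {O₁ O₂ : Set ℂ}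
    (C : FluidInterface A z z' O₁ O₂) :
    (∀ α, SeparatesAt z z' O₁ O₂ α) ∨ ∀ α, SeparatesAt z z' O₂ O₁ α :=
  C.toIsComplementaryPair.forall_separatesAt_or C.isClosedEmbedding.isInducing
    C.hasStrictDerivAt C.continuous_deriv C.deriv_ne_zero

theorem exists_equidistant_nearest_points {X : Type*} [MetricSpace X] [ProperSpace X]
    {T S₁ S₂ : Set X} (hT : IsPreconnected T) (hS₁ : IsClosed S₁) (hS₂ : IsClosed S₂)
    (h₁ : (T ∩ S₁).Nonempty) (h₂ : (T ∩ S₂).Nonempty) :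
    ∃ p ∈ T, ∃ q₁ ∈ S₁, ∃ q₂ ∈ S₂, dist p q₁ = dist p q₂ ∧
      ∀ q ∈ S₁ ∪ S₂, dist p q₁ ≤ dist p q := by
  obtain ⟨x₁, hx₁T, hx₁⟩ := h₁
  obtain ⟨x₂, hx₂T, hx₂⟩ := h₂
  obtain ⟨p, hpT, hp⟩ := hT.intermediate_value₂ hx₁T hx₂T
    (Metric.continuous_infDist_pt S₁).continuousOn (Metric.continuous_infDist_pt S₂).continuousOn
    ((Metric.infDist_zero_of_mem hx₁).trans_le Metric.infDist_nonneg)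
    ((Metric.infDist_zero_of_mem hx₂).trans_le Metric.infDist_nonneg)
  obtain ⟨q₁, hq₁, hpq₁⟩ := hS₁.exists_infDist_eq_dist ⟨x₁, hx₁⟩ p
  obtain ⟨q₂, hq₂, hpq₂⟩ := hS₂.exists_infDist_eq_dist ⟨x₂, hx₂⟩ p
  refine ⟨p, hpT, q₁, hq₁, q₂, hq₂, by rw [← hpq₁, hp, hpq₂], ?_⟩
  rintro q (hq | hq)
  · exact hpq₁ ▸ Metric.infDist_le_dist_of_mem hq
  · exact hpq₁ ▸ hp ▸ Metric.infDist_le_dist_of_mem hq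

theorem inner_eq_zero_of_isLocalMin_norm_sub {E : Type*} [NormedAddCommGroup E]
    [InnerProductSpace ℝ E] {z : ℝ → E} {z' m : E} {α : ℝ} (hz : HasDerivAt z z' α)
    (hmin : IsLocalMin (fun γ => ‖z γ - m‖) α) : inner ℝ z' (z α - m) = 0 := by
  have hsq : IsLocalMin (fun γ => ‖z γ - m‖ ^ 2) α := by
    filter_upwards [hmin] with γ hγ
    exact pow_le_pow_left₀ (norm_nonneg _) hγ 2
  have h := hsq.hasDerivAt_eq_zero (hz.sub_const m).norm_sq
  rw [real_inner_comm]
  linarith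

theorem openSegment_subset_ball_midpoint {E : Type*} [NormedAddCommGroup E] [NormedSpace ℝ E]
    {x y : E} (hxy : x ≠ y) :
    openSegment ℝ x y ⊆ Metric.ball (midpoint ℝ x y) (‖x - y‖ / 2) := by
  rintro p ⟨a, b, ha, hb, hab, rfl⟩
  have hdiff : a • x + b • y - midpoint ℝ x y = (a - 2⁻¹) • (x - y) := by
    obtain rfl : b = 1 - a := by linarith
    rw [midpoint_eq_smul_add, invOf_eq_inv]
    module
  rw [Metric.mem_ball, dist_eq_norm, hdiff, norm_smul, Real.norm_eq_abs, div_eq_inv_mul]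
  refine mul_lt_mul_of_pos_right ?_ (norm_pos_iff.2 (sub_ne_zero.2 hxy))
  rw [abs_lt]
  constructor <;> linarith

namespace IsComplementaryPair

variable {z : ℝ → ℂ} {O O' : Set ℂ} {p : ℂ} {r : ℝ}

theorem ball_subset_left (h : IsComplementaryPair z O O') (hp : p ∉ O') (hr : 0 < r)
    (hdist : ∀ α, r ≤ dist p (z α)) : Metric.ball p r ⊆ O := by
  have hoff : Disjoint (Metric.ball p r) (range z) := by
    rw [disjoint_right]
    rintro _ ⟨α, rfl⟩
    rw [Metric.mem_ball', not_lt]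
    exact hdist α
  have hmem := Metric.mem_ball_self (x := p) hr
  exact h.subset_left (convex_ball p r).isPreconnected hoff
    ⟨p, hmem, (h.subset_union hoff hmem).resolve_right hp⟩

theorem disjoint_closedBall_right (h : IsComplementaryPair z O O') (hr : r ≠ 0)
    (hball : Metric.ball p r ⊆ O) : Disjoint (Metric.closedBall p r) O' := by
  rw [← closure_ball p hr]
  exact (h.disjoint.mono_left hball).closure_left h.isOpen_right

theorem norm_sub_div_two_le_of_ball_midpoint_subset (h : IsComplementaryPair z O O') {α β : ℝ}
    (hball : Metric.ball (midpoint ℝ (z α) (z β)) (‖z α - z β‖ / 2) ⊆ O) (γ : ℝ) :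
    ‖z α - z β‖ / 2 ≤ ‖z γ - midpoint ℝ (z α) (z β)‖ := by
  by_contra! hγ
  exact disjoint_left.1 h.disjoint_range (hball (mem_ball_iff_norm.2 hγ)) (mem_range_self γ)

theorem inner_deriv_left_eq_zero (h : IsComplementaryPair z O O') {α β : ℝ} {v : ℂ}
    (hz : HasDerivAt z v α)
    (hball : Metric.ball (midpoint ℝ (z α) (z β)) (‖z α - z β‖ / 2) ⊆ O) :
    inner ℝ v (z α - z β) = 0 := by
  have hmid : z α - midpoint ℝ (z α) (z β) = (2⁻¹ : ℝ) • (z α - z β) := by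
    rw [left_sub_midpoint, invOf_eq_inv]
  have hmin : IsLocalMin (fun γ => ‖z γ - midpoint ℝ (z α) (z β)‖) α := by
    refine Eventually.of_forall fun γ => ?_
    have hle := h.norm_sub_div_two_le_of_ball_midpoint_subset hball γ
    simpa only [hmid, norm_smul, norm_inv, Real.norm_ofNat, div_eq_inv_mul] using hle
  have hzero := inner_eq_zero_of_isLocalMin_norm_sub hz hmin
  rw [hmid, inner_smul_right] at hzero
  exact (mul_eq_zero.1 hzero).resolve_left (by norm_num)

theorem inner_deriv_right_eq_zero (h : IsComplementaryPair z O O') {α β : ℝ} {v : ℂ}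
    (hz : HasDerivAt z v β)
    (hball : Metric.ball (midpoint ℝ (z α) (z β)) (‖z α - z β‖ / 2) ⊆ O) :
    inner ℝ v (z α - z β) = 0 := by
  rw [midpoint_comm, norm_sub_rev] at hball
  rw [← neg_sub, inner_neg_right, h.inner_deriv_left_eq_zero hz hball, neg_zero]

end IsComplementaryPair

/-- The parameter distance `1 / (8 A²)`, a quarter of the scale on which the curve of a
`FluidInterface` satisfies the chord-arc bound; this is the constant `ε₁`. -/
def chordScale (A : ℝ) : ℝ := 1 / (8 * A ^ 2)

theorem chordScale_pos_of_pos {A : ℝ} (hA : 0 < A) : 0 < chordScale A := by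
  unfold chordScale
  positivity

theorem chordScale_le_of_one_le {A : ℝ} (hA : 1 ≤ A) : chordScale A ≤ 1 / 8 := by
  have := one_le_pow₀ (n := 2) hA
  unfold chordScale
  gcongr
  linarith

/-- The chord from `z α` to `z β` avoids the domain `O'`, and the parameters `α`, `β` are neither
close nor far: the lower bound excludes the chords controlled by the local chord-arc bound, the
upper one makes the set of such pairs compact modulo the period. -/
structure IsAdmissiblePair (A : ℝ) (z : ℝ → ℂ) (O' : Set ℂ) (α β : ℝ) : Prop where
  le_abs_sub : chordScale A ≤ |α - β|
  abs_sub_le : |α - β| ≤ 8 * A ^ 2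
  disjoint : Disjoint (segment ℝ (z α) (z β)) O'

namespace FluidInterface

variable {A : ℝ} {z z' : ℝ → ℂ} {O₁ O₂ : Set ℂ} {α β γ γ' : ℝ} {p : ℂ}

theorem chordScale_pos (C : FluidInterface A z z' O₁ O₂) : 0 < chordScale A :=
  chordScale_pos_of_pos C.pos

theorem chordScale_le (C : FluidInterface A z z' O₁ O₂) : chordScale A ≤ 1 / 8 :=
  chordScale_le_of_one_le C.one_le

theorem abs_sub_le_mul_norm_sub (C : FluidInterface A z z' O₁ O₂)
    (h : |α - β| ≤ 4 * chordScale A) : |α - β| ≤ 2 * A * ‖z α - z β‖ := by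
  have hA := C.pos
  have hscale : 4 * chordScale A = 1 / (2 * A ^ 2) := by
    unfold chordScale
    ring
  have hchord := C.abs_sub_div_le_norm_sub (h.trans_eq hscale)
  rwa [div_le_iff₀ (by positivity), mul_comm] at hchord

theorem abs_sub_lt_or_lt_abs_sub (C : FluidInterface A z z' O₁ O₂)
    (h : ‖z α - z β‖ < chordScale A / (2 * A)) :
    |α - β| < chordScale A ∨ 4 * chordScale A < |α - β| := by
  have hA := C.pos
  rw [lt_div_iff₀ (by positivity)] at h
  by_contra! hmid
  linarith [hmid.1, C.abs_sub_le_mul_norm_sub hmid.2]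

theorem abs_sub_le_of_norm_sub_le_one (C : FluidInterface A z z' O₁ O₂)
    (h : ‖z α - z β‖ ≤ 1) : |α - β| ≤ 4 * A ^ 2 := by
  nlinarith [C.abs_sub_sub_le_norm_sub α β, C.one_le]

theorem isAdmissiblePair_of_nearest (C : FluidInterface A z z' O₁ O₂)
    (hsmall : ‖z α - z β‖ < chordScale A / (4 * A)) (hp : p ∈ segment ℝ (z α) (z β))
    (hpO : p ∉ O₂) (hγ : |γ - α| ≤ chordScale A) (hγ' : chordScale A ≤ |γ' - α|)
    (heq : dist p (z γ) = dist p (z γ')) (hmin : ∀ δ, dist p (z γ) ≤ dist p (z δ)) :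
    IsAdmissiblePair A z O₂ γ γ' := by
  have hA := C.pos
  have hscale := C.chordScale_pos
  have hle : 2 * ‖z α - z β‖ < chordScale A / (2 * A) := by
    calc 2 * ‖z α - z β‖ < 2 * (chordScale A / (4 * A)) := by linarith
      _ = chordScale A / (2 * A) := by ring
  have hle_one : chordScale A / (2 * A) ≤ 1 := by
    rw [div_le_one (by positivity)]
    linarith [C.chordScale_le, C.one_le]
  have hsum : dist p (z α) + dist p (z β) = ‖z α - z β‖ := by
    rw [← dist_eq_norm, dist_comm p]
    exact dist_add_dist_of_mem_segment hp
  have hfar : 4 * chordScale A < |γ' - α| := by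
    refine (C.abs_sub_lt_or_lt_abs_sub ?_).resolve_left hγ'.not_gt
    rw [← dist_eq_norm]
    linarith [dist_triangle_left (z γ') (z α) p, hmin α, hmin β, dist_nonneg (x := p) (y := z α),
      dist_nonneg (x := p) (y := z β)]
  have hsep : chordScale A ≤ |γ - γ'| := by
    linarith [abs_sub_le γ' γ α, abs_sub_comm γ γ']
  have hr : 0 < dist p (z γ) := by
    refine dist_nonneg.lt_of_ne fun h => ?_
    obtain rfl : γ = γ' :=
      C.injective ((dist_eq_zero.1 h.symm).symm.trans (dist_eq_zero.1 (heq ▸ h.symm)))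
    rw [sub_self, abs_zero] at hsep
    linarith
  refine ⟨hsep, ?_, ?_⟩
  · have hnorm : ‖z γ - z γ'‖ ≤ 1 := by
      rw [← dist_eq_norm]
      linarith [dist_triangle_left (z γ) (z γ') p, hmin α, hmin β]
    nlinarith [C.abs_sub_le_of_norm_sub_le_one hnorm]
  · refine (C.disjoint_closedBall_right hr.ne' (C.ball_subset_left hpO hr hmin)).mono_left ?_
    exact (convex_closedBall p _).segment_subset (Metric.mem_closedBall'.2 le_rfl)
      (Metric.mem_closedBall'.2 heq.ge)

theorem ball_midpoint_subset (C : FluidInterface A z z' O₁ O₂)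
    (hαβ : IsAdmissiblePair A z O₂ α β) (hsmall : ‖z α - z β‖ < chordScale A / (4 * A))
    (hmin : ∀ γ γ', IsAdmissiblePair A z O₂ γ γ' → ‖z α - z β‖ ≤ ‖z γ - z γ'‖) :
    Metric.ball (midpoint ℝ (z α) (z β)) (‖z α - z β‖ / 2) ⊆ O₁ := by
  have hd : 0 < ‖z α - z β‖ := norm_pos_iff.2 fun h => by
    have := hαβ.le_abs_sub
    rw [C.injective (sub_eq_zero.1 h), sub_self, abs_zero] at this
    exact C.chordScale_pos.not_ge this
  obtain ⟨p, hp, _, ⟨γ, hγ, rfl⟩, _, ⟨γ', hγ', rfl⟩, heq, hnear⟩ :=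
    exists_equidistant_nearest_points
      (S₁ := z '' {γ | |γ - α| ≤ chordScale A}) (S₂ := z '' {γ | chordScale A ≤ |γ - α|})
      (convex_segment (𝕜 := ℝ) (z α) (z β)).isPreconnected
      (C.isProperMap.isClosedMap _ (isClosed_le (by fun_prop) (by fun_prop)))
      (C.isProperMap.isClosedMap _ (isClosed_le (by fun_prop) (by fun_prop)))
      ⟨z α, left_mem_segment ℝ _ _, mem_image_of_mem z (by simpa using C.chordScale_pos.le)⟩
      ⟨z β, right_mem_segment ℝ _ _,
        mem_image_of_mem z (by simpa [abs_sub_comm] using hαβ.le_abs_sub)⟩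
  have hnearest (δ : ℝ) : dist p (z γ) ≤ dist p (z δ) :=
    hnear _ ((le_total |δ - α| (chordScale A)).imp (mem_image_of_mem z) (mem_image_of_mem z))
  have hpO : p ∉ O₂ := disjoint_left.1 hαβ.disjoint hp
  have hle := hmin γ γ' (C.isAdmissiblePair_of_nearest hsmall hp hpO hγ hγ' heq hnearest)
  rw [← dist_eq_norm (z γ)] at hle
  have hsum : dist (z α) p + dist p (z β) = ‖z α - z β‖ := by
    rw [← dist_eq_norm]
    exact dist_add_dist_of_mem_segment hp
  have htri := dist_triangle_left (z γ) (z γ') p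
  have hα := hnearest α
  have hβ := hnearest β
  rw [dist_comm p (z α)] at hα
  have hmid : p = midpoint ℝ (z α) (z β) := by
    apply eq_midpoint_of_dist_eq_half <;> rw [dist_eq_norm (z α) (z β)] <;> linarith
  rw [← hmid]
  refine C.ball_subset_left hpO (by positivity) fun δ => ?_
  linarith [hnearest δ]

end FluidInterface

section Families

variable {z : ℝ → ℝ → ℂ} {O O' : ℝ → Set ℂ} {J : Set ℝ} {t₀ : ℝ} {x : ℂ}

/-- A path from `x` to a point common to all the domains stays at a positive distance from the
curve, hence is not met by the curves at nearby times. -/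
theorem eventually_mem_of_forall_isComplementaryPair (ht₀ : t₀ ∈ J)
    (h : ∀ t ∈ J, IsComplementaryPair (z t) (O t) (O' t))
    (hz : TendstoUniformly z (z t₀) (𝓝[J] t₀)) (hO : ∃ w, ∀ t ∈ J, w ∈ O t) (hx : x ∈ O t₀) :
    ∀ᶠ p : ℝ × ℂ in 𝓝[J] t₀ ×ˢ 𝓝 x, p.2 ∈ O p.1 := by
  obtain ⟨w, hw⟩ := hO
  have hpath := (h t₀ ht₀).isOpen_left.isConnected_iff_isPathConnected.1
    ⟨⟨x, hx⟩, (h t₀ ht₀).isPreconnected_left⟩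
  obtain ⟨γ, hγ⟩ := hpath.joinedIn x hx w (hw t₀ ht₀)
  obtain ⟨η, hη, hthick⟩ := (isCompact_range γ.continuous).exists_thickening_subset_open
    (h t₀ ht₀).isOpen_left (range_subset_iff.2 hγ)
  have hx_mem : x ∈ range γ := ⟨0, γ.source⟩
  have hw_mem : w ∈ range γ := ⟨1, γ.target⟩
  have hη2 : 0 < η / 2 := by positivity
  filter_upwards [prod_mem_prod ((Metric.tendstoUniformly_iff.1 hz _ hη2).and self_mem_nhdsWithin)
    (Metric.ball_mem_nhds x hη2)] with ⟨t, y⟩ ⟨⟨hclose, ht⟩, hy⟩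
  have hoff : Disjoint (range γ ∪ Metric.ball x (η / 2)) (range (z t)) := by
    rw [disjoint_right]
    rintro _ ⟨α, rfl⟩ hα
    obtain ⟨k, hk, hdist⟩ : ∃ k ∈ range γ, dist (z t α) k < η / 2 := by
      rcases hα with hα | hα
      · exact ⟨_, hα, by rwa [dist_self]⟩
      · exact ⟨x, hx_mem, hα⟩
    refine disjoint_right.1 (h t₀ ht₀).disjoint_range (mem_range_self α)
      (hthick (Metric.mem_thickening_iff.2 ⟨k, hk, ?_⟩))
    linarith [dist_triangle (z t₀ α) (z t α) k, hclose α]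
  refine (h t ht).subset_left ?_ hoff ⟨w, Or.inl hw_mem, hw t ht⟩ (Or.inr hy)
  exact (isPreconnected_range γ.continuous).union x hx_mem (Metric.mem_ball_self hη2)
    (convex_ball _ _).isPreconnected

theorem tendsto_prod_of_tendstoUniformly {X Y Z : Type*} [TopologicalSpace Y] [UniformSpace Z]
    {F : X → Y → Z} {f : Y → Z} {l : Filter X} {y : Y} (h : TendstoUniformly F f l)
    (hf : ContinuousAt f y) : Tendsto (fun p : X × Y => F p.1 p.2) (l ×ˢ 𝓝 y) (𝓝 (f y)) :=
  TendstoUniformly.tendsto_comp (F := fun p : X × Y => F p.1)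
    (fun u hu => tendsto_fst.eventually (h u hu)) hf tendsto_snd

theorem eventually_prod_nhdsWithin_iff {X Y : Type*} [TopologicalSpace Y] {l : Filter X} {s : Set Y}
    {y : Y} {q : X × Y → Prop} :
    (∀ᶠ p in l ×ˢ 𝓝[s] y, q p) ↔ ∀ᶠ p in l ×ˢ 𝓝 y, p.2 ∈ s → q p := by
  rw [nhdsWithin, prod_eq_inf, comap_inf, comap_principal, ← inf_assoc, ← prod_eq_inf,
    eventually_inf_principal]
  rfl

theorem eventually_disjoint_openSegment {E ι : Type*} [NormedAddCommGroup E] [NormedSpace ℝ E]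
    {l : Filter ι} {x y : ι → E} {R : ι → Set E}
    (hleft : ∀ᶠ p : ι × ℝ in l ×ˢ 𝓝[>] 0, AffineMap.lineMap (x p.1) (y p.1) p.2 ∉ R p.1)
    (hright : ∀ᶠ p : ι × ℝ in l ×ˢ 𝓝[>] 0, AffineMap.lineMap (y p.1) (x p.1) p.2 ∉ R p.1)
    (hmid : ∀ w ∈ Ioo (0 : ℝ) 1,
      ∀ᶠ p : ι × ℝ in l ×ˢ 𝓝 w, AffineMap.lineMap (x p.1) (y p.1) p.2 ∉ R p.1) :
    ∀ᶠ i in l, Disjoint (openSegment ℝ (x i) (y i)) (R i) := by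
  have hlocal : ∀ w ∈ Icc (0 : ℝ) 1, {p : ι × ℝ | p.2 ∈ Ioo 0 1 →
      AffineMap.lineMap (x p.1) (y p.1) p.2 ∉ R p.1} ∈ l ×ˢ 𝓝 w := by
    intro w hw
    rcases eq_endpoints_or_mem_Ioo_of_mem_Icc hw with rfl | rfl | hw
    · filter_upwards [eventually_prod_nhdsWithin_iff.1 hleft] with p hp hp2 using hp hp2.1
    · have hflip : Tendsto (fun p : ι × ℝ => (p.1, 1 - p.2)) (l ×ˢ 𝓝 1) (l ×ˢ 𝓝 0) :=
        tendsto_id.prodMap ((continuous_const.sub continuous_id).tendsto' 1 0 (sub_self 1))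
      filter_upwards [hflip (eventually_prod_nhdsWithin_iff.1 hright)] with p hp hp2
      rw [← AffineMap.lineMap_apply_one_sub]
      exact hp (sub_pos.2 hp2.2)
    · filter_upwards [hmid w hw] with p hp _ using hp
  have hall := isCompact_Icc.mem_prod_nhdsSet_of_forall hlocal
  filter_upwards [eventually_prod_principal_iff.1
    (Filter.prod_mono_right l principal_le_nhdsSet hall)] with i hi
  rw [openSegment_eq_image_lineMap, disjoint_left]
  rintro _ ⟨w, hw, rfl⟩
  exact hi w (Ioo_subset_Icc_self hw) hw

end Families

/-- A two-fluid interface evolving over the time interval `[0, T]`, in complex notation. The curve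
at time `t` is `z t`, its tangent is `z' t` and `zt t` is its velocity. The field
`abs_inner_velocity_le` is the only information on the velocity fields that is used: the endpoints
of a chord which runs inside the lower fluid orthogonally to the interface approach or separate
at most at a rate proportional to the length of the chord. -/
structure FluidEvolution (A T : ℝ) (z z' zt : ℝ → ℝ → ℂ) (O₁ O₂ : ℝ → Set ℂ) : Prop where
  interface : ∀ t ∈ Icc 0 T, FluidInterface A (z t) (z' t) (O₁ t) (O₂ t)
  exists_mem_left : ∃ w, ∀ t ∈ Icc 0 T, w ∈ O₁ t
  exists_mem_right : ∃ w, ∀ t ∈ Icc 0 T, w ∈ O₂ t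
  norm_sub_le : ∀ s ∈ Icc 0 T, ∀ t ∈ Icc 0 T, ∀ α, ‖z s α - z t α‖ ≤ A * |s - t|
  norm_deriv_sub_le : ∀ s ∈ Icc 0 T, ∀ t ∈ Icc 0 T, ∀ α, ‖z' s α - z' t α‖ ≤ A * |s - t|
  hasDerivWithinAt : ∀ t ∈ Icc 0 T, ∀ α, HasDerivWithinAt (fun s => z s α) (zt t α) (Icc 0 T) t
  periodic_right : ∀ t ∈ Icc 0 T, Function.Periodic (· ∈ O₂ t) ((2 * Real.pi : ℝ) : ℂ)
  abs_inner_velocity_le : ∀ t ∈ Ioc 0 T, ∀ α β, openSegment ℝ (z t α) (z t β) ⊆ O₁ t →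
    inner ℝ (z' t α) (z t α - z t β) = 0 → inner ℝ (z' t β) (z t α - z t β) = 0 →
    |inner ℝ (zt t α - zt t β) (z t α - z t β)| ≤ A ^ 2 * ‖z t α - z t β‖ ^ 2
  abs_sub_div_le_zero : ∀ α β, |α - β| / A ≤ ‖z 0 α - z 0 β‖

theorem exists_eq_mul_I_mul_of_inner_eq_zero {p x : ℂ} (hp : p ≠ 0) (h : inner ℝ p x = 0) :
    ∃ c : ℝ, x = c * (Complex.I * p) := by
  rw [Complex.inner] at h
  have hre : (x / p).re = 0 := by
    rw [Complex.div_re, ← add_div, div_eq_zero_iff]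
    left
    simp only [Complex.mul_re, Complex.conj_re, Complex.conj_im] at h
    linarith
  refine ⟨(x / p).im, ?_⟩
  have hx : x / p = (x / p).im * Complex.I := by
    rw [← Complex.re_add_im (x / p), hre]
    simp
  rw [← mul_assoc, ← hx, div_mul_cancel₀ _ hp]

namespace FluidEvolution

variable {A T : ℝ} {z z' zt : ℝ → ℝ → ℂ} {O₁ O₂ : ℝ → Set ℂ} {t t₀ α β : ℝ} {x : ℂ}

theorem tendstoUniformly (D : FluidEvolution A T z z' zt O₁ O₂) (ht₀ : t₀ ∈ Icc 0 T) :
    TendstoUniformly z (z t₀) (𝓝[Icc 0 T] t₀) := by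
  rw [Metric.tendstoUniformly_iff]
  intro ε hε
  have hlim : Tendsto (fun t => A * |t₀ - t|) (𝓝[Icc 0 T] t₀) (𝓝 0) :=
    ((by fun_prop : Continuous fun t => A * |t₀ - t|).tendsto' t₀ 0 (by simp)).mono_left
      nhdsWithin_le_nhds
  filter_upwards [hlim.eventually_lt_const hε, self_mem_nhdsWithin] with t hlt ht α
  rw [dist_eq_norm]
  exact (D.norm_sub_le t₀ ht₀ t ht α).trans_lt hlt

theorem tendsto_uncurry (D : FluidEvolution A T z z' zt O₁ O₂) (ht₀ : t₀ ∈ Icc 0 T) (α : ℝ) :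
    Tendsto (fun p : ℝ × ℝ => z p.1 p.2) (𝓝[Icc 0 T] t₀ ×ˢ 𝓝 α) (𝓝 (z t₀ α)) :=
  tendsto_prod_of_tendstoUniformly (D.tendstoUniformly ht₀)
    (D.interface t₀ ht₀).continuous.continuousAt

theorem tendsto_apply (D : FluidEvolution A T z z' zt O₁ O₂) (ht₀ : t₀ ∈ Icc 0 T) (α : ℝ) :
    Tendsto (fun t => z t α) (𝓝[Icc 0 T] t₀) (𝓝 (z t₀ α)) :=
  (D.tendstoUniformly ht₀).tendsto_at α

theorem eventually_mem_left (D : FluidEvolution A T z z' zt O₁ O₂) (ht₀ : t₀ ∈ Icc 0 T)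
    (hx : x ∈ O₁ t₀) : ∀ᶠ p : ℝ × ℂ in 𝓝[Icc 0 T] t₀ ×ˢ 𝓝 x, p.2 ∈ O₁ p.1 :=
  eventually_mem_of_forall_isComplementaryPair ht₀
    (fun t ht => (D.interface t ht).toIsComplementaryPair) (D.tendstoUniformly ht₀)
    D.exists_mem_left hx

theorem eventually_mem_right (D : FluidEvolution A T z z' zt O₁ O₂) (ht₀ : t₀ ∈ Icc 0 T)
    (hx : x ∈ O₂ t₀) : ∀ᶠ p : ℝ × ℂ in 𝓝[Icc 0 T] t₀ ×ˢ 𝓝 x, p.2 ∈ O₂ p.1 :=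
  eventually_mem_of_forall_isComplementaryPair ht₀
    (fun t ht => (D.interface t ht).toIsComplementaryPair.symm) (D.tendstoUniformly ht₀)
    D.exists_mem_right hx

theorem eventually_norm_sub_sub_smul_le (D : FluidEvolution A T z z' zt O₁ O₂)
    (ht₀ : t₀ ∈ Icc 0 T) (α : ℝ) {c : ℝ} (hc : 0 < c) :
    ∀ᶠ p : ℝ × ℝ in 𝓝[Icc 0 T] t₀ ×ˢ 𝓝 α,
      ‖z p.1 p.2 - z p.1 α - (p.2 - α) • z' t₀ α‖ ≤ c * |p.2 - α| := by
  have hlim : Tendsto (fun p : ℝ × ℝ => A * |p.2 - α| + A * |p.1 - t₀|)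
      (𝓝[Icc 0 T] t₀ ×ˢ 𝓝 α) (𝓝 0) := by
    refine ((by fun_prop : Continuous fun p : ℝ × ℝ => A * |p.2 - α| + A * |p.1 - t₀|).tendsto'
      (t₀, α) 0 (by simp)).mono_left ?_
    rw [nhds_prod_eq]
    exact prod_mono_left _ nhdsWithin_le_nhds
  filter_upwards [hlim.eventually_lt_const hc, tendsto_fst.eventually self_mem_nhdsWithin]
    with ⟨t, γ⟩ hlt ht
  have htaylor := (D.interface t ht).norm_sub_sub_le (γ := α) (α := γ) le_rfl
    (by simp : |α - α| ≤ |γ - α|)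
  have htime := mul_le_mul_of_nonneg_left (D.norm_deriv_sub_le t ht t₀ ht₀ α) (abs_nonneg (γ - α))
  calc ‖z t γ - z t α - (γ - α) • z' t₀ α‖
      = ‖(z t γ - z t α - ((γ - α : ℝ) : ℂ) * z' t α) + (γ - α) • (z' t α - z' t₀ α)‖ := by
        simp only [Complex.real_smul]
        congr 1
        ring
    _ ≤ A * |γ - α| * |γ - α| + |γ - α| * (A * |t - t₀|) := by
        refine (norm_add_le _ _).trans (add_le_add htaylor ?_)
        rwa [norm_smul, Real.norm_eq_abs]
    _ = (A * |γ - α| + A * |t - t₀|) * |γ - α| := by ring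
    _ ≤ c * |γ - α| := by gcongr

theorem eventually_lineMap_notMem_range (D : FluidEvolution A T z z' zt O₁ O₂)
    (ht₀ : t₀ ∈ Icc 0 T) (hne : α ≠ β) (h : inner ℝ (z' t₀ α) (z t₀ α - z t₀ β) = 0) :
    ∀ᶠ p : ℝ × ℝ in 𝓝[Icc 0 T] t₀ ×ˢ 𝓝[>] 0,
      AffineMap.lineMap (z p.1 α) (z p.1 β) p.2 ∉ range (z p.1) := by
  have C := D.interface t₀ ht₀
  rw [← neg_sub, inner_neg_right, neg_eq_zero] at h
  obtain ⟨c, hc⟩ := exists_eq_mul_I_mul_of_inner_eq_zero (C.deriv_ne_zero α) h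
  have hc0 : c ≠ 0 := by
    rintro rfl
    rw [Complex.ofReal_zero, zero_mul, sub_eq_zero] at hc
    exact hne (C.injective hc).symm
  have hc0' : (c : ℂ) ≠ 0 := Complex.ofReal_ne_zero.2 hc0
  have hdir : Tendsto (fun p : ℝ × ℝ => (z p.1 β - z p.1 α) / c) (𝓝[Icc 0 T] t₀ ×ˢ 𝓝[>] 0)
      (𝓝 (Complex.I * z' t₀ α)) := by
    have hsub := ((D.tendsto_apply ht₀ β).sub (D.tendsto_apply ht₀ α)).div_const (c : ℂ)
    rw [hc, mul_div_cancel_left₀ _ hc0'] at hsub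
    exact hsub.comp tendsto_fst
  have hlength : Tendsto (fun p : ℝ × ℝ => p.2 * c) (𝓝[Icc 0 T] t₀ ×ˢ 𝓝[>] 0) (𝓝[≠] 0) := by
    have hzero : Tendsto (fun w : ℝ => w * c) (𝓝[>] 0) (𝓝 0) :=
      ((continuous_mul_const c).tendsto' 0 0 (zero_mul c)).mono_left nhdsWithin_le_nhds
    refine (tendsto_nhdsWithin_iff.2 ⟨hzero, ?_⟩).comp tendsto_snd
    filter_upwards [self_mem_nhdsWithin] with w hw using mul_ne_zero (ne_of_gt hw) hc0
  have hoff := eventually_add_mul_notMem_range_of_tendstoUniformly (ζ := fun p : ℝ × ℝ => z p.1)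
    (β := fun _ => α) C.isClosedEmbedding.isInducing (C.deriv_ne_zero α)
    (fun u hu => tendsto_fst.eventually (D.tendstoUniformly ht₀ u hu))
    (fun r hr => (tendsto_fst.prodMap tendsto_id).eventually
      (D.eventually_norm_sub_sub_smul_le ht₀ α hr))
    tendsto_const_nhds hdir hlength
  filter_upwards [hoff] with p hp
  convert hp using 2
  rw [AffineMap.lineMap_apply, vsub_eq_sub, vadd_eq_add, Complex.real_smul]
  push_cast
  field_simp
  ring

theorem eventually_lineMap_mem_left (D : FluidEvolution A T z z' zt O₁ O₂) (ht₀ : t₀ ∈ Icc 0 T)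
    (hseg : openSegment ℝ (z t₀ α) (z t₀ β) ⊆ O₁ t₀) {w : ℝ} (hw : w ∈ Ioo (0 : ℝ) 1) :
    ∀ᶠ p : ℝ × ℝ in 𝓝[Icc 0 T] t₀ ×ˢ 𝓝 w, AffineMap.lineMap (z p.1 α) (z p.1 β) p.2 ∈ O₁ p.1 := by
  have hmem : AffineMap.lineMap (z t₀ α) (z t₀ β) w ∈ O₁ t₀ := by
    rw [openSegment_eq_image_lineMap] at hseg
    exact hseg (mem_image_of_mem _ hw)
  have hlim : Tendsto (fun p : ℝ × ℝ => AffineMap.lineMap (z p.1 α) (z p.1 β) p.2)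
      (𝓝[Icc 0 T] t₀ ×ˢ 𝓝 w) (𝓝 (AffineMap.lineMap (z t₀ α) (z t₀ β) w)) :=
    ((D.tendsto_apply ht₀ α).comp tendsto_fst).lineMap ((D.tendsto_apply ht₀ β).comp tendsto_fst)
      tendsto_snd
  exact (tendsto_fst.prodMk hlim).eventually (D.eventually_mem_left ht₀ hmem)

theorem eventually_disjoint_segment (D : FluidEvolution A T z z' zt O₁ O₂) (ht₀ : t₀ ∈ Icc 0 T)
    (hne : α ≠ β) (hseg : openSegment ℝ (z t₀ α) (z t₀ β) ⊆ O₁ t₀)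
    (hα : inner ℝ (z' t₀ α) (z t₀ α - z t₀ β) = 0)
    (hβ : inner ℝ (z' t₀ β) (z t₀ α - z t₀ β) = 0) :
    ∀ᶠ t in 𝓝[Icc 0 T] t₀, Disjoint (segment ℝ (z t α) (z t β)) (O₂ t) := by
  rw [← neg_sub, inner_neg_right, neg_eq_zero] at hβ
  have hoff : ∀ᶠ t in 𝓝[Icc 0 T] t₀, Disjoint (openSegment ℝ (z t α) (z t β)) (range (z t)) := by
    refine eventually_disjoint_openSegment (D.eventually_lineMap_notMem_range ht₀ hne hα)
      (D.eventually_lineMap_notMem_range ht₀ hne.symm hβ) fun w hw => ?_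
    filter_upwards [D.eventually_lineMap_mem_left ht₀ hseg hw,
      tendsto_fst.eventually self_mem_nhdsWithin] with p hp ht
    exact disjoint_left.1 (D.interface p.1 ht).disjoint_range hp
  have hhalf : (2⁻¹ : ℝ) ∈ Ioo (0 : ℝ) 1 := by norm_num
  filter_upwards [hoff, (D.eventually_lineMap_mem_left ht₀ hseg hhalf).curry,
    self_mem_nhdsWithin] with t hdisj hmid ht
  have C := D.interface t ht
  have hsub : openSegment ℝ (z t α) (z t β) ⊆ O₁ t := by
    refine C.subset_left (convex_openSegment _ _).isPreconnected hdisj ⟨_, ?_, hmid.self_of_nhds⟩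
    rw [openSegment_eq_image_lineMap]
    exact mem_image_of_mem _ hhalf
  exact C.disjoint_segment hsub

end FluidEvolution

theorem eventually_lt_of_hasDerivWithinAt_Iio {f : ℝ → ℝ} {f' t : ℝ}
    (h : HasDerivWithinAt f f' (Iio t) t) (hf' : 0 < f') : ∀ᶠ s in 𝓝[<] t, f s < f t := by
  rw [hasDerivWithinAt_iff_tendsto_slope' self_notMem_Iio] at h
  filter_upwards [h.eventually_const_lt hf', self_mem_nhdsWithin] with s hslope hs
  rw [slope_def_field] at hslope
  exact sub_neg.1 (neg_of_mul_pos_left hslope (inv_neg''.2 (sub_neg.2 hs)).le)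

theorem FluidInterface.add_int_mul {A : ℝ} {z z' : ℝ → ℂ} {O₁ O₂ : Set ℂ}
    (C : FluidInterface A z z' O₁ O₂) (k : ℤ) (α : ℝ) :
    z (α + k * (2 * Real.pi)) = z α + ((k * (2 * Real.pi) : ℝ) : ℂ) := by
  have hper : Function.Periodic (fun α : ℝ => z α - α) (2 * Real.pi) := fun α => by
    simp only [C.periodic]
    push_cast
    ring
  have h := hper.int_mul k α
  rw [sub_eq_iff_eq_add] at h
  rw [h]
  push_cast
  ring

namespace FluidEvolution

variable {A T : ℝ} {z z' zt : ℝ → ℝ → ℂ} {O₁ O₂ : ℝ → Set ℂ} {t α β : ℝ}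

theorem isAdmissiblePair_add_int_mul (D : FluidEvolution A T z z' zt O₁ O₂) (ht : t ∈ Icc 0 T)
    (h : IsAdmissiblePair A (z t) (O₂ t) α β) (k : ℤ) :
    IsAdmissiblePair A (z t) (O₂ t) (α + k * (2 * Real.pi)) (β + k * (2 * Real.pi)) := by
  refine ⟨by simpa using h.le_abs_sub, by simpa using h.abs_sub_le, ?_⟩
  rw [(D.interface t ht).add_int_mul, (D.interface t ht).add_int_mul, add_comm, add_comm (z t β),
    ← segment_translate_image, disjoint_left]
  rintro _ ⟨x, hx, rfl⟩ hxO
  have hper := (D.periodic_right t ht).int_mul k x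
  refine disjoint_left.1 h.disjoint hx (hper.mp ?_)
  simpa [add_comm] using hxO

theorem isClosed_setOf_isAdmissiblePair (D : FluidEvolution A T z z' zt O₁ O₂) :
    IsClosed {q : ℝ × ℝ × ℝ | q.1 ∈ Icc 0 T ∧ IsAdmissiblePair A (z q.1) (O₂ q.1) q.2.1 q.2.2} := by
  refine isClosed_of_closure_subset fun q hq => ?_
  set S := {q : ℝ × ℝ × ℝ | q.1 ∈ Icc 0 T ∧ IsAdmissiblePair A (z q.1) (O₂ q.1) q.2.1 q.2.2}
  have := mem_closure_iff_nhdsWithin_neBot.1 hq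
  have hmem : ∀ᶠ p in 𝓝[S] q, p ∈ S := self_mem_nhdsWithin
  have htime : Tendsto Prod.fst (𝓝[S] q) (𝓝 q.1) := continuous_fst.continuousWithinAt
  have hleft : Tendsto (fun p => p.2.1) (𝓝[S] q) (𝓝 q.2.1) := by
    exact (by fun_prop : Continuous fun p : ℝ × ℝ × ℝ => p.2.1).continuousWithinAt
  have hright : Tendsto (fun p => p.2.2) (𝓝[S] q) (𝓝 q.2.2) := by
    exact (by fun_prop : Continuous fun p : ℝ × ℝ × ℝ => p.2.2).continuousWithinAt
  have ht : q.1 ∈ Icc 0 T := isClosed_Icc.mem_of_tendsto htime (hmem.mono fun p hp => hp.1)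
  have htime' : Tendsto Prod.fst (𝓝[S] q) (𝓝[Icc 0 T] q.1) :=
    tendsto_nhdsWithin_iff.2 ⟨htime, hmem.mono fun p hp => hp.1⟩
  refine ⟨ht, ge_of_tendsto (hleft.sub hright).abs (hmem.mono fun p hp => hp.2.le_abs_sub),
    le_of_tendsto (hleft.sub hright).abs (hmem.mono fun p hp => hp.2.abs_sub_le), ?_⟩
  rw [disjoint_left, segment_eq_image_lineMap]
  rintro _ ⟨w, hw, rfl⟩ hwO
  have hpoint := ((D.tendsto_uncurry ht q.2.1).comp (htime'.prodMk hleft)).lineMap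
    ((D.tendsto_uncurry ht q.2.2).comp (htime'.prodMk hright)) (tendsto_const_nhds (x := w))
  obtain ⟨p, hpO, hp⟩ :=
    (((htime'.prodMk hpoint).eventually (D.eventually_mem_right ht hwO)).and hmem).exists
  exact disjoint_left.1 hp.2.disjoint
    (segment_eq_image_lineMap ℝ (z p.1 p.2.1) _ ▸ mem_image_of_mem _ hw) hpO

theorem exists_isAdmissiblePair_mem_Icc (D : FluidEvolution A T z z' zt O₁ O₂) (ht : t ∈ Icc 0 T)
    (h : IsAdmissiblePair A (z t) (O₂ t) α β) :
    ∃ γ ∈ Icc 0 (2 * Real.pi), ∃ γ' ∈ Icc (-(8 * A ^ 2)) (2 * Real.pi + 8 * A ^ 2),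
      IsAdmissiblePair A (z t) (O₂ t) γ γ' ∧ z t γ - z t γ' = z t α - z t β := by
  obtain ⟨k, hk, -⟩ := existsUnique_add_zsmul_mem_Ico Real.two_pi_pos α 0
  rw [zsmul_eq_mul, zero_add] at hk
  have hadm := D.isAdmissiblePair_add_int_mul ht h k
  obtain ⟨hlo, hhi⟩ := abs_le.1 hadm.abs_sub_le
  refine ⟨_, Ico_subset_Icc_self hk, _, ⟨?_, ?_⟩, hadm, ?_⟩
  · linarith [hk.1]
  · linarith [hk.2]
  · rw [(D.interface t ht).add_int_mul, (D.interface t ht).add_int_mul, add_sub_add_right_eq_sub]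

theorem exists_forall_norm_sub_mul_exp_le (D : FluidEvolution A T z z' zt O₁ O₂) (K : ℝ)
    (ht : t ∈ Icc 0 T) (h : IsAdmissiblePair A (z t) (O₂ t) α β) :
    ∃ t₀ ∈ Icc 0 T, ∃ α₀ β₀, IsAdmissiblePair A (z t₀) (O₂ t₀) α₀ β₀ ∧
      ∀ s ∈ Icc 0 T, ∀ γ γ', IsAdmissiblePair A (z s) (O₂ s) γ γ' →
        ‖z t₀ α₀ - z t₀ β₀‖ * Real.exp (K * t₀) ≤ ‖z s γ - z s γ'‖ * Real.exp (K * s) := by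
  let S := {q : ℝ × ℝ × ℝ | q.1 ∈ Icc 0 T ∧ IsAdmissiblePair A (z q.1) (O₂ q.1) q.2.1 q.2.2} ∩
    Icc 0 T ×ˢ Icc 0 (2 * Real.pi) ×ˢ Icc (-(8 * A ^ 2)) (2 * Real.pi + 8 * A ^ 2)
  have hS : IsCompact S := (isCompact_Icc.prod (isCompact_Icc.prod isCompact_Icc)).inter_left
    D.isClosed_setOf_isAdmissiblePair
  have hcont : ContinuousOn
      (fun q : ℝ × ℝ × ℝ => ‖z q.1 q.2.1 - z q.1 q.2.2‖ * Real.exp (K * q.1)) S := by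
    intro q hq
    have htime : Tendsto Prod.fst (𝓝[S] q) (𝓝[Icc 0 T] q.1) :=
      tendsto_nhdsWithin_iff.2 ⟨continuous_fst.continuousWithinAt,
        eventually_mem_nhdsWithin.mono fun p hp => hp.1.1⟩
    have hleft := (D.tendsto_uncurry hq.1.1 q.2.1).comp (htime.prodMk
      (by fun_prop : Continuous fun p : ℝ × ℝ × ℝ => p.2.1).continuousWithinAt)
    have hright := (D.tendsto_uncurry hq.1.1 q.2.2).comp (htime.prodMk
      (by fun_prop : Continuous fun p : ℝ × ℝ × ℝ => p.2.2).continuousWithinAt)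
    exact (hleft.sub hright).norm.mul
      (by fun_prop : Continuous fun p : ℝ × ℝ × ℝ => Real.exp (K * p.1)).continuousWithinAt
  obtain ⟨γ, hγ, γ', hγ', hadm, -⟩ := D.exists_isAdmissiblePair_mem_Icc ht h
  obtain ⟨⟨t₀, α₀, β₀⟩, hmem, hmin⟩ := hS.exists_isMinOn ⟨(t, γ, γ'), ⟨ht, hadm⟩, ht, hγ, hγ'⟩ hcont
  refine ⟨t₀, hmem.1.1, α₀, β₀, hmem.1.2, fun s hs δ δ' hδ => ?_⟩
  obtain ⟨γ, hγ, γ', hγ', hadm, heq⟩ := D.exists_isAdmissiblePair_mem_Icc hs hδ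
  rw [← heq]
  exact hmin (show (s, γ, γ') ∈ S from ⟨⟨hs, hadm⟩, hs, hγ, hγ'⟩)

/-- By `hvel` the length decays at a rate of at most `A²`, which is less than `A² + 1`. -/
theorem eventually_norm_sub_mul_exp_lt (D : FluidEvolution A T z z' zt O₁ O₂) (ht : t ∈ Ioc 0 T)
    (hne : z t α ≠ z t β)
    (hvel : |inner ℝ (zt t α - zt t β) (z t α - z t β)| ≤ A ^ 2 * ‖z t α - z t β‖ ^ 2) :
    ∀ᶠ s in 𝓝[<] t, ‖z s α - z s β‖ * Real.exp ((A ^ 2 + 1) * s) <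
      ‖z t α - z t β‖ * Real.exp ((A ^ 2 + 1) * t) := by
  have hnorm : 0 < ‖z t α - z t β‖ := norm_pos_iff.2 (sub_ne_zero.2 hne)
  have hz (γ : ℝ) : HasDerivWithinAt (fun s => z s γ) (zt t γ) (Iio t) t :=
    (D.hasDerivWithinAt t (Ioc_subset_Icc_self ht) γ).mono_of_mem_nhdsWithin
      (Icc_mem_nhdsLT_of_mem ht)
  have hexp : HasDerivWithinAt (fun s => Real.exp (2 * ((A ^ 2 + 1) * s))) _ (Iio t) t :=
    (((hasDerivAt_id t).const_mul (A ^ 2 + 1)).const_mul 2).exp.hasDerivWithinAt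
  have hpos : 0 < 2 * inner ℝ (z t α - z t β) (zt t α - zt t β) *
      Real.exp (2 * ((A ^ 2 + 1) * t)) + ‖z t α - z t β‖ ^ 2 *
      (Real.exp (2 * ((A ^ 2 + 1) * t)) * (2 * ((A ^ 2 + 1) * 1))) := by
    have hfactor : 0 < 2 * inner ℝ (z t α - z t β) (zt t α - zt t β) +
        ‖z t α - z t β‖ ^ 2 * (2 * (A ^ 2 + 1)) := by
      rw [real_inner_comm]
      nlinarith [neg_le_of_abs_le hvel, sq_pos_of_pos hnorm]
    nlinarith [mul_pos hfactor (Real.exp_pos (2 * ((A ^ 2 + 1) * t)))]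
  filter_upwards [eventually_lt_of_hasDerivWithinAt_Iio
    (((hz α).fun_sub (hz β)).norm_sq.fun_mul hexp) hpos] with s hs
  refine lt_of_pow_lt_pow_left₀ 2 (by positivity) ?_
  simpa only [mul_pow, ← Real.exp_nat_mul, Nat.cast_ofNat] using hs

theorem chordScale_div_le_norm_sub_of_forall_le (D : FluidEvolution A T z z' zt O₁ O₂)
    (ht : t ∈ Icc 0 T) (h : IsAdmissiblePair A (z t) (O₂ t) α β)
    (hmin : ∀ s ∈ Icc 0 T, ∀ γ γ', IsAdmissiblePair A (z s) (O₂ s) γ γ' →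
      ‖z t α - z t β‖ * Real.exp ((A ^ 2 + 1) * t) ≤
        ‖z s γ - z s γ'‖ * Real.exp ((A ^ 2 + 1) * s)) :
    chordScale A / (4 * A) ≤ ‖z t α - z t β‖ := by
  have C := D.interface t ht
  have hA := C.pos
  have hscale := C.chordScale_pos
  rcases ht.1.eq_or_lt with rfl | ht0
  · calc chordScale A / (4 * A) ≤ |α - β| / A := by
          gcongr
          · exact h.le_abs_sub
          · linarith
      _ ≤ ‖z 0 α - z 0 β‖ := D.abs_sub_div_le_zero α β
  by_contra! hlt
  have hne : α ≠ β := fun heq => by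
    have := h.le_abs_sub
    rw [heq, sub_self, abs_zero] at this
    linarith
  have hz : z t α ≠ z t β := C.injective.ne hne
  have hball := C.ball_midpoint_subset h hlt fun γ γ' hγ =>
    le_of_mul_le_mul_right (hmin t ht γ γ' hγ) (Real.exp_pos _)
  have hα := C.inner_deriv_left_eq_zero (C.hasDerivAt α) hball
  have hβ := C.inner_deriv_right_eq_zero (C.hasDerivAt β) hball
  have hseg := (openSegment_subset_ball_midpoint hz).trans hball
  have hvel := D.abs_inner_velocity_le t ⟨ht0, ht.2⟩ α β hseg hα hβ
  have hIcc : ∀ᶠ s in 𝓝[<] t, s ∈ Icc 0 T := Icc_mem_nhdsLT_of_mem ⟨ht0, ht.2⟩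
  have hdisj := (D.eventually_disjoint_segment ht hne hseg hα hβ).filter_mono
    (nhdsWithin_le_of_mem hIcc)
  obtain ⟨s, hs, hshorter, hadm⟩ :=
    (hIcc.and ((D.eventually_norm_sub_mul_exp_lt ⟨ht0, ht.2⟩ hz hvel).and hdisj)).exists
  exact hshorter.not_ge (hmin s hs α β ⟨h.le_abs_sub, h.abs_sub_le, hadm⟩)

end FluidEvolution

/-- The lower bound, uniform in time, for the length of the chords joining admissible pairs. -/
def separationBound (A T : ℝ) : ℝ := chordScale A / (4 * A) * Real.exp (-((A ^ 2 + 1) * T))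

theorem FluidEvolution.separationBound_le_norm_sub {A T : ℝ} {z z' zt : ℝ → ℝ → ℂ}
    {O₁ O₂ : ℝ → Set ℂ} {t α β : ℝ} (D : FluidEvolution A T z z' zt O₁ O₂) (ht : t ∈ Icc 0 T)
    (h : IsAdmissiblePair A (z t) (O₂ t) α β) : separationBound A T ≤ ‖z t α - z t β‖ := by
  obtain ⟨t₀, ht₀, α₀, β₀, hadm, hmin⟩ :=
    D.exists_forall_norm_sub_mul_exp_le (A ^ 2 + 1) ht h
  rw [separationBound, Real.exp_neg, ← div_eq_mul_inv, div_le_iff₀ (Real.exp_pos _)]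
  calc chordScale A / (4 * A) ≤ ‖z t₀ α₀ - z t₀ β₀‖ :=
        D.chordScale_div_le_norm_sub_of_forall_le ht₀ hadm hmin
    _ ≤ ‖z t₀ α₀ - z t₀ β₀‖ * Real.exp ((A ^ 2 + 1) * t₀) :=
        le_mul_of_one_le_right (norm_nonneg _) (Real.one_le_exp (mul_nonneg (by positivity) ht₀.1))
    _ ≤ ‖z t α - z t β‖ * Real.exp ((A ^ 2 + 1) * t) := hmin t ht α β h
    _ ≤ ‖z t α - z t β‖ * Real.exp ((A ^ 2 + 1) * T) := by
        gcongr
        exact ht.2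

theorem isPreconnected_image_add_smul {E : Type*} [AddCommGroup E] [TopologicalSpace E]
    [ContinuousAdd E] [Module ℝ E] [ContinuousSMul ℝ E] {z : ℝ → E} (hz : Continuous z)
    {S R : Set ℝ} (hS : IsPreconnected S) (hR : IsPreconnected R) (p : E) :
    IsPreconnected ((fun q : ℝ × ℝ => z q.1 + q.2 • p) '' S ×ˢ R) :=
  (hS.prod hR).image _ (by fun_prop)

theorem exists_forall_mem_Ico_and_mem_frontier {X : Type*} [TopologicalSpace X] {O : Set X}
    (hO : IsOpen O) {x : ℝ → X} {a b : ℝ} (hx : ContinuousOn x (Icc a b)) (hab : a ≤ b)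
    (ha : x a ∈ O) (hb : x b ∉ O) :
    ∃ c ∈ Ioc a b, x c ∈ frontier O ∧ ∀ r ∈ Ico a c, x r ∈ O := by
  have hcompact : IsCompact (Icc a b ∩ x ⁻¹' Oᶜ) :=
    isCompact_Icc.of_isClosed_subset (hx.preimage_isClosed_of_isClosed isClosed_Icc
      hO.isClosed_compl) inter_subset_left
  obtain ⟨c, ⟨hc, hcO⟩, hleast⟩ := hcompact.exists_isLeast ⟨b, right_mem_Icc.2 hab, hb⟩
  have hac : a < c := hc.1.lt_of_ne fun h => hcO (h ▸ ha)
  have hbefore : ∀ r ∈ Ico a c, x r ∈ O := fun r hr => by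
    by_contra hrO
    exact hr.2.not_ge (hleast ⟨⟨hr.1, hr.2.le.trans hc.2⟩, hrO⟩)
  refine ⟨c, ⟨hac, hc.2⟩, hO.frontier_eq ▸ ⟨?_, hcO⟩, hbefore⟩
  have hclosure : c ∈ closure (Ico a c) := by
    rw [closure_Ico hac.ne]
    exact right_mem_Icc.2 hac.le
  exact ((hx c hc).mono (Ico_subset_Icc_self.trans (Icc_subset_Icc_right hc.2))).mem_closure
    hclosure hbefore

/-- A pair of parameters at which the curve almost touches itself across `O`: the chord between the
two points crosses `O`, meets the curve orthogonally at both ends, and points of the curve that are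
closer to each other than this chord have close parameters. -/
structure IsNearContact (A : ℝ) (z z' : ℝ → ℂ) (O : Set ℂ) (α β : ℝ) : Prop where
  ne : z α ≠ z β
  abs_sub_lt : ∀ γ γ', ‖z γ - z γ'‖ < ‖z β - z α‖ → |γ - γ'| < chordScale A
  inner_left : inner ℝ (z' α) (z β - z α) = 0
  inner_right : inner ℝ (z' β) (z β - z α) = 0
  openSegment_subset : openSegment ℝ (z α) (z β) ⊆ O

protected theorem IsNearContact.symm {A : ℝ} {z z' : ℝ → ℂ} {O : Set ℂ} {α β : ℝ}
    (M : IsNearContact A z z' O α β) : IsNearContact A z z' O β α where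
  ne := M.ne.symm
  abs_sub_lt γ γ' h := M.abs_sub_lt γ γ' (norm_sub_rev (z α) _ ▸ h)
  inner_left := by rw [← neg_sub, inner_neg_right, M.inner_right, neg_zero]
  inner_right := by rw [← neg_sub, inner_neg_right, M.inner_left, neg_zero]
  openSegment_subset := openSegment_symm ℝ (z α) (z β) ▸ M.openSegment_subset

theorem inv_chordScale (A : ℝ) : (chordScale A)⁻¹ = 8 * A ^ 2 := by
  rw [chordScale, one_div, inv_inv]

namespace FluidInterface

variable {A m : ℝ} {z z' : ℝ → ℂ} {O₁ O₂ : Set ℂ} {α β γ b ρ : ℝ} {p : ℂ}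

theorem norm_sub_le_one (C : FluidInterface A z z' O₁ O₂)
    (hsmall : ‖z α - z β‖ < chordScale A / (2 * A)) : ‖z α - z β‖ ≤ 1 := by
  have := div_le_self C.chordScale_pos.le (by linarith [C.one_le] : 1 ≤ 2 * A)
  linarith [C.chordScale_le]

theorem abs_sub_le_inv_div_two (C : FluidInterface A z z' O₁ O₂)
    (hsmall : ‖z α - z β‖ < chordScale A / (2 * A)) : |α - β| ≤ (chordScale A)⁻¹ / 2 := by
  rw [inv_chordScale]
  linarith [C.abs_sub_le_of_norm_sub_le_one (C.norm_sub_le_one hsmall)]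

theorem mul_chordScale_lt_norm_deriv (C : FluidInterface A z z' O₁ O₂) (α : ℝ) :
    A * (2 * chordScale A) < ‖z' α‖ := by
  have hA := C.pos
  refine lt_of_lt_of_le ?_ (C.inv_le_norm_deriv α)
  have hscale : A * (2 * chordScale A) = A⁻¹ / 4 := by
    unfold chordScale
    field_simp
    norm_num
  linarith [inv_pos.2 hA]

/-- Near `α` the curve is a graph over its tangent line at `α`. -/
theorem eq_of_eq_add_smul (C : FluidInterface A z z' O₁ O₂) (hp : inner ℝ (z' α) p = 0)
    (hb : |b - α| ≤ chordScale A) (hγ : |γ - b| ≤ chordScale A) (h : z γ = z b + ρ • p) :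
    γ = b := by
  by_contra hne
  have hpos : 0 < |γ - b| := abs_pos.2 (sub_ne_zero.2 hne)
  have htaylor := C.norm_sub_sub_le (α := γ) (β := b) (γ := α) (r := 2 * chordScale A)
    (by linarith [abs_sub_le γ b α]) (by linarith [C.chordScale_pos])
  have hinner : |inner ℝ (z' α) (z γ - z b - ((γ - b : ℝ) : ℂ) * z' α)| =
      |γ - b| * ‖z' α‖ * ‖z' α‖ := by
    rw [h, add_sub_cancel_left, ← Complex.real_smul, inner_sub_right, inner_smul_right,
      inner_smul_right, hp, real_inner_self_eq_norm_mul_norm, mul_zero, zero_sub, abs_neg, abs_mul,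
      abs_mul_self, mul_assoc]
  have hle : |γ - b| * ‖z' α‖ * ‖z' α‖ ≤ ‖z' α‖ * (A * (2 * chordScale A) * |γ - b|) :=
    hinner ▸ (abs_real_inner_le_norm _ _).trans (by gcongr)
  have hmul : 0 < |γ - b| * ‖z' α‖ := mul_pos hpos (norm_pos_iff.2 (C.deriv_ne_zero α))
  exact (C.mul_chordScale_lt_norm_deriv α).not_ge
    (le_of_mul_le_mul_left (by linarith : _ * _ ≤ _ * (A * (2 * chordScale A))) hmul)

theorem add_smul_notMem_range (C : FluidInterface A z z' O₁ O₂)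
    (M : IsNearContact A z z' O₂ α β) (hb : |b - α| ≤ chordScale A) (hρ : ρ ≠ 0) (hρ1 : |ρ| < 1) :
    z b + ρ • (z β - z α) ∉ range z := by
  rintro ⟨γ, hγ⟩
  have hp : z β - z α ≠ 0 := sub_ne_zero.2 M.ne.symm
  have hlt : ‖z γ - z b‖ < ‖z β - z α‖ := by
    rw [hγ, add_sub_cancel_left, norm_smul, Real.norm_eq_abs]
    exact mul_lt_of_lt_one_left (norm_pos_iff.2 hp) hρ1
  obtain rfl := C.eq_of_eq_add_smul M.inner_left hb (M.abs_sub_lt γ b hlt).le hγ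
  exact smul_ne_zero hρ hp (left_eq_add.1 hγ)

theorem add_smul_mem_right (C : FluidInterface A z z' O₁ O₂) (M : IsNearContact A z z' O₂ α β)
    (hb : |b - α| ≤ chordScale A) (hρ : ρ ∈ Ioo (0 : ℝ) 1) : z b + ρ • (z β - z α) ∈ O₂ := by
  refine C.symm.subset_left (isPreconnected_image_add_smul C.continuous
    (convex_closedBall α (chordScale A)).isPreconnected (isPreconnected_Ioo (a := (0 : ℝ)) (b := 1))
    (z β - z α)) ?_ ?_ ⟨(b, ρ), ⟨hb, hρ⟩, rfl⟩
  · rw [disjoint_left]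
    rintro _ ⟨q, ⟨hq, hpos, hlt⟩, rfl⟩
    exact C.add_smul_notMem_range M hq hpos.ne' (by rwa [abs_of_pos hpos])
  · refine ⟨_, ⟨(α, 1 / 2), ⟨Metric.mem_closedBall_self C.chordScale_pos.le, by norm_num⟩, rfl⟩, ?_⟩
    refine M.openSegment_subset ⟨1 / 2, 1 / 2, by norm_num, by norm_num, by norm_num, ?_⟩
    module

/-- `s` is the orientation of the curve: `s • (I * z')` is the normal pointing into `O₁`. -/
theorem exists_forall_eventually_add_smul_mem (C : FluidInterface A z z' O₁ O₂) :
    ∃ s : ℝ, s ≠ 0 ∧ ∀ α c,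
      (0 < s * c → ∀ᶠ ρ : ℝ in 𝓝[>] 0, z α + ρ • c • (Complex.I * z' α) ∈ O₁) ∧
      (s * c < 0 → ∀ᶠ ρ : ℝ in 𝓝[>] 0, z α + ρ • c • (Complex.I * z' α) ∈ O₂) := by
  rcases C.forall_separatesAt_or with h | h
  · refine ⟨1, one_ne_zero, fun α c => ?_⟩
    rw [one_mul]
    exact ⟨(h α).eventually_smul_left, (h α).eventually_smul_right⟩
  · refine ⟨-1, neg_ne_zero.2 one_ne_zero, fun α c => ?_⟩
    rw [neg_one_mul, neg_pos, neg_neg_iff_pos]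
    exact ⟨(h α).eventually_smul_right, (h α).eventually_smul_left⟩

theorem exists_forall_sub_eq_smul (C : FluidInterface A z z' O₁ O₂) :
    ∃ s : ℝ, ∀ α β, IsNearContact A z z' O₂ α β →
      ∃ c, z β - z α = c • (Complex.I * z' α) ∧ s * c < 0 ∧
        ∀ᶠ ρ : ℝ in 𝓝[>] 0, z α - ρ • (z β - z α) ∈ O₁ := by
  obtain ⟨s, hs, hside⟩ := C.exists_forall_eventually_add_smul_mem
  refine ⟨s, fun α β M => ?_⟩
  obtain ⟨c, hc⟩ := exists_eq_mul_I_mul_of_inner_eq_zero (C.deriv_ne_zero α) M.inner_left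
  rw [← Complex.real_smul] at hc
  have hc0 : c ≠ 0 := by
    rintro rfl
    exact M.ne (sub_eq_zero.1 (hc.trans (zero_smul ℝ _))).symm
  have hneg : s * c < 0 := by
    refine (lt_or_gt_of_ne (mul_ne_zero hs hc0)).resolve_right fun hpos => ?_
    have hmem := (hside α c).1 hpos
    rw [← hc] at hmem
    obtain ⟨ρ, hρ₁, hρ⟩ := (hmem.and (Ioo_mem_nhdsGT one_pos)).exists
    exact disjoint_left.1 C.disjoint hρ₁
      (C.add_smul_mem_right M (by simpa using C.chordScale_pos.le) hρ)
  refine ⟨c, hc, hneg, ?_⟩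
  filter_upwards [(hside α (-c)).1 (by linarith)] with ρ hρ
  rwa [hc, sub_eq_add_neg, ← smul_neg, ← neg_smul]

/-- The normals `I * z'` at the two ends are multiples of the chord of opposite signs, since both
of them point into the same domain. -/
theorem inner_deriv_neg (C : FluidInterface A z z' O₁ O₂) (M : IsNearContact A z z' O₂ α β) :
    inner ℝ (z' α) (z' β) < 0 := by
  obtain ⟨s, hs⟩ := C.exists_forall_sub_eq_smul
  obtain ⟨c, hc, hsc, -⟩ := hs α β M
  obtain ⟨c', hc', hsc', -⟩ := hs β α M.symm
  have hcc : 0 < c * c' := by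
    have := mul_pos_of_neg_of_neg hsc hsc'
    by_contra! h
    nlinarith [sq_nonneg s]
  have hrot : inner ℝ (Complex.I * z' α) (Complex.I * z' β) = (inner ℝ (z' α) (z' β) : ℝ) := by
    simp only [Complex.inner, map_mul, Complex.conj_I]
    ring_nf
    simp [Complex.I_sq]
  have hprod : c * c' * inner ℝ (z' α) (z' β) = -‖z β - z α‖ ^ 2 := by
    calc c * c' * inner ℝ (z' α) (z' β)
        = inner ℝ (c • (Complex.I * z' α)) (c' • (Complex.I * z' β)) := by
          rw [inner_smul_left, inner_smul_right, hrot, RCLike.conj_to_real, mul_assoc]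
      _ = -‖z β - z α‖ ^ 2 := by
          rw [← hc, ← hc', ← neg_sub (z β), inner_neg_right, real_inner_self_eq_norm_sq]
  have hd : 0 < ‖z β - z α‖ := norm_pos_iff.2 (sub_ne_zero.2 M.ne.symm)
  refine neg_of_mul_neg_right (hprod.trans_lt ?_) hcc.le
  nlinarith

theorem sub_smul_mem_left_of_lt_one (C : FluidInterface A z z' O₁ O₂)
    (M : IsNearContact A z z' O₂ α β) (hb : |b - α| ≤ chordScale A) (hρ : ρ ∈ Ioo (0 : ℝ) 1) :
    z b - ρ • (z β - z α) ∈ O₁ := by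
  have hmem : z b + ρ • (z α - z β) ∈ O₁ := by
    refine C.subset_left (isPreconnected_image_add_smul C.continuous
      (convex_closedBall α (chordScale A)).isPreconnected
      (isPreconnected_Ioo (a := (0 : ℝ)) (b := 1)) (z α - z β)) ?_ ?_ ⟨(b, ρ), ⟨hb, hρ⟩, rfl⟩
    · rw [disjoint_left]
      rintro _ ⟨q, ⟨hq, hpos, hlt⟩, rfl⟩
      have := C.add_smul_notMem_range M hq (neg_ne_zero.2 hpos.ne')
        (by rwa [abs_neg, abs_of_pos hpos])
      rwa [neg_smul, ← smul_neg, neg_sub] at this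
    · obtain ⟨s, hs⟩ := C.exists_forall_sub_eq_smul
      obtain ⟨-, -, -, hev⟩ := hs α β M
      obtain ⟨r, hr, hr1⟩ := (hev.and (Ioo_mem_nhdsGT one_pos)).exists
      refine ⟨_, ⟨(α, r), ⟨Metric.mem_closedBall_self C.chordScale_pos.le, hr1⟩, rfl⟩, ?_⟩
      rwa [sub_eq_add_neg, ← smul_neg, neg_sub] at hr
  rwa [← neg_sub, smul_neg, ← sub_eq_add_neg] at hmem

theorem isAdmissiblePair_of_forall_sub_smul_mem (C : FluidInterface A z z' O₁ O₂)
    (hp : inner ℝ (z' α) p = 0) (hb : |b - α| ≤ chordScale A) {c : ℝ} (hc : 0 < c) (hp0 : p ≠ 0)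
    (hγ : z γ = z b - c • p) (hsmall : ‖z γ - z b‖ < chordScale A / (2 * A))
    (hbefore : ∀ r ∈ Ioo 0 c, z b - r • p ∈ O₁) : IsAdmissiblePair A z O₂ γ b := by
  have hscale := C.chordScale_pos
  have hsep : 4 * chordScale A < |γ - b| := by
    refine (C.abs_sub_lt_or_lt_abs_sub hsmall).resolve_left fun h => ?_
    obtain rfl := C.eq_of_eq_add_smul hp hb h.le (ρ := -c) (by rw [hγ, neg_smul, sub_eq_add_neg])
    exact smul_ne_zero hc.ne' hp0 (sub_eq_self.1 hγ.symm)
  have hone : ‖z γ - z b‖ ≤ 1 := C.norm_sub_le_one hsmall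
  refine ⟨by linarith, by nlinarith [C.abs_sub_le_of_norm_sub_le_one hone], ?_⟩
  refine C.disjoint_segment ?_
  rintro _ ⟨u, v, hu, hv, huv, rfl⟩
  have huc : u * c < c := mul_lt_of_lt_one_left hc (by linarith)
  convert hbefore (u * c) ⟨by positivity, huc⟩ using 1
  obtain rfl : v = 1 - u := by linarith
  rw [hγ]
  module

/-- A normal ray from the curve cannot return to the curve within distance `m`: at the first return
it would produce an admissible pair closer than `m`. -/
theorem sub_smul_mem_left (C : FluidInterface A z z' O₁ O₂) (M : IsNearContact A z z' O₂ α β)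
    (hm : m ≤ chordScale A / (2 * A))
    (hsep : ∀ γ γ', IsAdmissiblePair A z O₂ γ γ' → m ≤ ‖z γ - z γ'‖)
    (hb : |b - α| ≤ chordScale A) (hρ : 0 < ρ) (hρm : ρ * ‖z β - z α‖ < m) :
    z b - ρ • (z β - z α) ∈ O₁ := by
  by_contra hout
  have hthin {r : ℝ} := C.sub_smul_mem_left_of_lt_one M hb (ρ := r)
  have hρ1 : 1 ≤ ρ := not_lt.1 fun h => hout (hthin ⟨hρ, h⟩)
  obtain ⟨c, hc, hcO, hbefore⟩ := exists_forall_mem_Ico_and_mem_frontier C.isOpen_left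
    (x := fun r => z b - r • (z β - z α)) (by fun_prop) (by linarith : 1 / 2 ≤ ρ)
    (hthin ⟨by norm_num, by norm_num⟩) hout
  obtain ⟨γ, hγ⟩ := C.frontier_left ▸ hcO
  have hc0 : 0 < c := by linarith [hc.1]
  have hnorm : ‖z γ - z b‖ < m := by
    rw [hγ, sub_sub_cancel_left, norm_neg, norm_smul, Real.norm_of_nonneg hc0.le]
    exact (mul_le_mul_of_nonneg_right hc.2 (norm_nonneg _)).trans_lt hρm
  refine hnorm.not_ge (hsep γ b (C.isAdmissiblePair_of_forall_sub_smul_mem M.inner_left hb hc0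
    (sub_ne_zero.2 M.ne.symm) hγ (hnorm.trans_le hm) fun r hr => ?_))
  rcases lt_or_ge r (1 / 2) with h | h
  · exact hthin ⟨hr.1, by linarith⟩
  · exact hbefore r ⟨h, hr.2⟩

end FluidInterface

/-- The parameters `α`, `β` minimize `‖z α - z β‖` among those at distance in `[ε₁, ε₁⁻¹]`, where
`ε₁ = chordScale A`. -/
structure IsClosestPair (A : ℝ) (z : ℝ → ℂ) (α β : ℝ) : Prop where
  mem_Icc : |α - β| ∈ Icc (chordScale A) (chordScale A)⁻¹
  norm_sub_le : ∀ γ γ', |γ - γ'| ∈ Icc (chordScale A) (chordScale A)⁻¹ →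
    ‖z α - z β‖ ≤ ‖z γ - z γ'‖

protected theorem IsClosestPair.symm {A : ℝ} {z : ℝ → ℂ} {α β : ℝ} (h : IsClosestPair A z α β) :
    IsClosestPair A z β α :=
  ⟨abs_sub_comm α β ▸ h.mem_Icc, norm_sub_rev (z α) (z β) ▸ h.norm_sub_le⟩

namespace FluidInterface

variable {A : ℝ} {z z' : ℝ → ℂ} {O₁ O₂ : Set ℂ}

theorem chordScale_le_inv (C : FluidInterface A z z' O₁ O₂) :
    chordScale A ≤ (chordScale A)⁻¹ :=
  (C.chordScale_le.trans (by norm_num)).trans (one_le_inv₀ C.chordScale_pos |>.2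
    (C.chordScale_le.trans (by norm_num)))

theorem exists_isClosestPair (C : FluidInterface A z z' O₁ O₂) :
    ∃ α β, IsClosestPair A z α β := by
  let S : Set (ℝ × ℝ) := Icc 0 (2 * Real.pi) ×ˢ
      Icc (-(chordScale A)⁻¹) (2 * Real.pi + (chordScale A)⁻¹) ∩
    {q | |q.1 - q.2| ∈ Icc (chordScale A) (chordScale A)⁻¹}
  have hS : IsCompact S := (isCompact_Icc.prod isCompact_Icc).inter_right
    (isClosed_Icc.preimage (by fun_prop))
  have hmove {γ γ' : ℝ} (h : |γ - γ'| ∈ Icc (chordScale A) (chordScale A)⁻¹) :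
      ∃ q ∈ S, z q.1 - z q.2 = z γ - z γ' := by
    obtain ⟨k, hk, -⟩ := existsUnique_add_zsmul_mem_Ico Real.two_pi_pos γ 0
    rw [zsmul_eq_mul, zero_add] at hk
    obtain ⟨hlo, hhi⟩ := abs_le.1 h.2
    refine ⟨(γ + k * (2 * Real.pi), γ' + k * (2 * Real.pi)),
      ⟨⟨Ico_subset_Icc_self hk, ?_, ?_⟩, ?_⟩, ?_⟩
    · simp only
      linarith [hk.1]
    · simp only
      linarith [hk.2]
    · rwa [mem_ofPred_eq, add_sub_add_right_eq_sub]
    · rw [C.add_int_mul, C.add_int_mul, add_sub_add_right_eq_sub]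
  obtain ⟨q₀, hq₀, -⟩ := hmove (γ := chordScale A) (γ' := 0)
    (by rw [sub_zero, abs_of_pos C.chordScale_pos]; exact ⟨le_rfl, C.chordScale_le_inv⟩)
  have hcont := C.continuous
  obtain ⟨q, hq, hmin⟩ := hS.exists_isMinOn ⟨q₀, hq₀⟩ (f := fun q => ‖z q.1 - z q.2‖)
    (by fun_prop)
  refine ⟨q.1, q.2, hq.2, fun γ γ' h => ?_⟩
  obtain ⟨q', hq', heq⟩ := hmove h
  exact heq ▸ hmin hq'

end FluidInterface

namespace IsClosestPair

variable {A η : ℝ} {z z' : ℝ → ℂ} {O₁ O₂ : Set ℂ} {α β γ γ' : ℝ}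

theorem norm_sub_le_mul (h : IsClosestPair A z α β) (C : FluidInterface A z z' O₁ O₂)
    (hη : η ≤ 1 / (2 * A)) (hγ : ‖z γ - z γ'‖ < η * |γ - γ'|) :
    ‖z α - z β‖ ≤ 4 * A ^ 2 * η := by
  have hA := C.one_le
  have hη0 : 0 < η := pos_of_mul_pos_left ((norm_nonneg _).trans_lt hγ) (abs_nonneg _)
  have hηA : η * (2 * A) ≤ 1 := by rwa [le_div_iff₀ (by positivity)] at hη
  have hlo : 4 * chordScale A < |γ - γ'| := by
    by_contra! hle
    have := C.abs_sub_le_mul_norm_sub hle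
    nlinarith [abs_nonneg (γ - γ')]
  have hhi : |γ - γ'| ≤ 4 * A ^ 2 := by
    have := C.abs_sub_sub_le_norm_sub γ γ'
    nlinarith
  have hmem : |γ - γ'| ∈ Icc (chordScale A) (chordScale A)⁻¹ := by
    rw [inv_chordScale]
    exact ⟨by linarith [C.chordScale_pos], by nlinarith⟩
  calc ‖z α - z β‖ ≤ ‖z γ - z γ'‖ := h.norm_sub_le γ γ' hmem
    _ ≤ η * |γ - γ'| := hγ.le
    _ ≤ η * (4 * A ^ 2) := by gcongr
    _ = 4 * A ^ 2 * η := mul_comm _ _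

variable (h : IsClosestPair A z α β) (C : FluidInterface A z z' O₁ O₂)
  (hsmall : ‖z α - z β‖ < chordScale A / (2 * A))

include h C hsmall

theorem four_mul_chordScale_lt : 4 * chordScale A < |α - β| :=
  (C.abs_sub_lt_or_lt_abs_sub hsmall).resolve_left h.mem_Icc.1.not_gt

theorem abs_sub_lt_of_norm_sub_lt (hlt : ‖z γ - z γ'‖ < ‖z α - z β‖) :
    |γ - γ'| < chordScale A := by
  by_contra! hle
  have hhi := C.abs_sub_le_of_norm_sub_le_one (hlt.le.trans (C.norm_sub_le_one hsmall))
  refine hlt.not_ge (h.norm_sub_le γ γ' ⟨hle, ?_⟩)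
  rw [inv_chordScale]
  nlinarith [C.one_le]

theorem inner_deriv_eq_zero : inner ℝ (z' α) (z α - z β) = 0 := by
  have hlo : chordScale A < |α - β| := by
    linarith [h.four_mul_chordScale_lt C hsmall, C.chordScale_pos]
  have hhi : |α - β| < (chordScale A)⁻¹ := by
    linarith [C.abs_sub_le_inv_div_two hsmall, inv_pos.2 C.chordScale_pos]
  have hcont : Tendsto (fun γ => |γ - β|) (𝓝 α) (𝓝 |α - β|) :=
    (by fun_prop : Continuous fun γ : ℝ => |γ - β|).tendsto α
  refine inner_eq_zero_of_isLocalMin_norm_sub (C.hasDerivAt α) ?_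
  filter_upwards [hcont.eventually (Icc_mem_nhds hlo hhi)] with γ hγ
  exact h.norm_sub_le γ β hγ

theorem apply_ne : z α ≠ z β := by
  have := h.four_mul_chordScale_lt C hsmall
  refine C.injective.ne ?_
  rintro rfl
  rw [sub_self, abs_zero] at this
  linarith [C.chordScale_pos]

theorem disjoint_openSegment_range : Disjoint (openSegment ℝ (z α) (z β)) (range z) := by
  rw [disjoint_left]
  rintro _ hp ⟨γ, rfl⟩
  have hball : dist (z γ) (midpoint ℝ (z α) (z β)) < dist (z α) (z β) / 2 := by
    rw [dist_eq_norm (z α)]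
    exact openSegment_subset_ball_midpoint (h.apply_ne C hsmall) hp
  have hleft := dist_midpoint_left (𝕜 := ℝ) (z α) (z β)
  have hright := dist_midpoint_right (𝕜 := ℝ) (z α) (z β)
  rw [Real.norm_two] at hleft hright
  have hα : ‖z γ - z α‖ < ‖z α - z β‖ := by
    rw [← dist_eq_norm, ← dist_eq_norm]
    linarith [dist_triangle (z γ) (midpoint ℝ (z α) (z β)) (z α)]
  have hβ : ‖z γ - z β‖ < ‖z α - z β‖ := by
    rw [← dist_eq_norm, ← dist_eq_norm]
    linarith [dist_triangle (z γ) (midpoint ℝ (z α) (z β)) (z β)]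
  linarith [h.abs_sub_lt_of_norm_sub_lt C hsmall hα, h.abs_sub_lt_of_norm_sub_lt C hsmall hβ,
    abs_sub_le α γ β, abs_sub_comm α γ, h.four_mul_chordScale_lt C hsmall, C.chordScale_pos]

theorem isNearContact
    (hsep : ∀ γ γ', IsAdmissiblePair A z O₂ γ γ' → ‖z α - z β‖ < ‖z γ - z γ'‖) :
    IsNearContact A z z' O₂ α β where
  ne := h.apply_ne C hsmall
  abs_sub_lt γ γ' hlt := h.abs_sub_lt_of_norm_sub_lt C hsmall (norm_sub_rev (z β) _ ▸ hlt)
  inner_left := by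
    rw [← neg_sub, inner_neg_right, h.inner_deriv_eq_zero C hsmall, neg_zero]
  inner_right := h.symm.inner_deriv_eq_zero C (norm_sub_rev (z α) _ ▸ hsmall)
  openSegment_subset := by
    refine (C.subset_left_or_subset_right (convex_openSegment _ _).isPreconnected
      (h.disjoint_openSegment_range C hsmall)).resolve_left fun hO => ?_
    have hmem := h.mem_Icc
    rw [inv_chordScale] at hmem
    exact (hsep α β ⟨hmem.1, hmem.2, C.disjoint_segment hO⟩).false

end IsClosestPair

section HolomorphicDecay

variable {E : Type*} [NormedAddCommGroup E] [NormedSpace ℂ E]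

theorem integrableOn_smul_comp_circleMap {f : ℂ → E} {w : ℂ} {R : ℝ}
    (hf : ContinuousOn f (Metric.closedBall w R)) :
    IntegrableOn (fun p : ℝ × ℝ => p.1 • f (circleMap w p.1 p.2))
      (Ioo 0 R ×ˢ Ioo (-Real.pi) Real.pi) := by
  have hsub : Ioo 0 R ×ˢ Ioo (-Real.pi) Real.pi ⊆ Icc 0 R ×ˢ Icc (-Real.pi) Real.pi :=
    prod_mono Ioo_subset_Icc_self Ioo_subset_Icc_self
  refine (ContinuousOn.integrableOn_compact (isCompact_Icc.prod isCompact_Icc) ?_).mono_set hsub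
  have hcircle : Continuous fun p : ℝ × ℝ => circleMap w p.1 p.2 := by
    unfold circleMap
    fun_prop
  refine continuous_fst.continuousOn.smul (hf.comp hcircle.continuousOn ?_)
  rintro ⟨r, θ⟩ ⟨hr, -⟩
  exact Metric.closedBall_subset_closedBall hr.2 (circleMap_mem_closedBall w hr.1 θ)

theorem setIntegral_ball_eq_setIntegral_circleMap (f : ℂ → E) (w : ℂ) (R : ℝ) :
    ∫ x in Metric.ball w R, f x =
      ∫ p in Ioo 0 R ×ˢ Ioo (-Real.pi) Real.pi, p.1 • f (circleMap w p.1 p.2) := by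
  have hpolar : EqOn
      (fun p : ℝ × ℝ => p.1 • (Metric.ball w R).indicator f (w + Complex.polarCoord.symm p))
      ((Iio R ×ˢ univ).indicator fun p => p.1 • f (circleMap w p.1 p.2)) polarCoord.target := by
    rintro ⟨r, θ⟩ ⟨hr, -⟩
    have hpt : w + Complex.polarCoord.symm (r, θ) = circleMap w r θ := by
      rw [Complex.polarCoord_symm_apply, circleMap, Complex.exp_mul_I]
      push_cast
      rfl
    have hmem : circleMap w r θ ∈ Metric.ball w R ↔ (r, θ) ∈ Iio R ×ˢ (univ : Set ℝ) := by
      rw [Metric.mem_ball, dist_eq_norm, circleMap_sub_center, norm_circleMap_zero,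
        abs_of_pos hr, mem_prod]
      exact (and_iff_left (mem_univ _)).symm
    simp only [hpt, indicator, hmem, smul_ite, smul_zero]
  have hinter : polarCoord.target ∩ Iio R ×ˢ univ = Ioo 0 R ×ˢ Ioo (-Real.pi) Real.pi := by
    rw [polarCoord_target, prod_inter_prod, Ioi_inter_Iio, inter_univ]
  rw [← integral_indicator Metric.isOpen_ball.measurableSet,
    ← integral_add_left_eq_self _ w, ← Complex.integral_comp_polarCoord_symm,
    setIntegral_congr_fun polarCoord.open_target.measurableSet hpolar,
    setIntegral_indicator (measurableSet_Iio.prod MeasurableSet.univ), hinter]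

theorem setIntegral_circleMap_eq [CompleteSpace E] {f : ℂ → E} {w : ℂ} {r : ℝ}
    (hf : DiffContOnCl ℂ f (Metric.ball w |r|)) :
    ∫ θ in Ioo (-Real.pi) Real.pi, f (circleMap w r θ) = (2 * Real.pi) • f w := by
  have hper : Function.Periodic (fun θ => f (circleMap w r θ)) (2 * Real.pi) :=
    (periodic_circleMap w r).comp f
  have hshift := hper.intervalIntegral_add_eq (-Real.pi) 0
  rw [zero_add, show -Real.pi + 2 * Real.pi = Real.pi by ring] at hshift
  rw [← integral_Ioc_eq_integral_Ioo, ← intervalIntegral.integral_of_le (by linarith [Real.pi_pos]),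
    hshift, ← hf.circleAverage, Real.circleAverage_def, smul_inv_smul₀ Real.two_pi_pos.ne']

theorem setIntegral_ball_eq_smul [CompleteSpace E] {f : ℂ → E} {w : ℂ} {R : ℝ} (hR : 0 < R)
    (hf : DiffContOnCl ℂ f (Metric.ball w R)) :
    ∫ x in Metric.ball w R, f x = (Real.pi * R ^ 2) • f w := by
  have hcircle : ∀ r ∈ Ioo 0 R,
      ∫ θ in Ioo (-Real.pi) Real.pi, r • f (circleMap w r θ) = r • (2 * Real.pi) • f w := by
    intro r hr
    rw [integral_smul, setIntegral_circleMap_eq (hf.mono (Metric.ball_subset_ball ?_))]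
    rw [abs_of_pos hr.1]
    exact hr.2.le
  rw [setIntegral_ball_eq_setIntegral_circleMap, Measure.volume_eq_prod,
    setIntegral_prod _ (integrableOn_smul_comp_circleMap ?_),
    setIntegral_congr_fun measurableSet_Ioo hcircle, integral_smul_const,
    ← integral_Ioc_eq_integral_Ioo, ← intervalIntegral.integral_of_le hR.le, integral_id, smul_smul]
  · congr 1
    ring
  · rw [← closure_ball w hR.ne']
    exact hf.continuousOn

theorem mul_norm_sq_le_setIntegral_ball {f : ℂ → ℂ} {w : ℂ} {R : ℝ} (hR : 0 < R)
    (hf : DiffContOnCl ℂ f (Metric.ball w R)) :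
    Real.pi * R ^ 2 * ‖f w‖ ^ 2 ≤ ∫ x in Metric.ball w R, ‖f x‖ ^ 2 := by
  have hsq := setIntegral_ball_eq_smul hR (hf.smul hf)
  calc Real.pi * R ^ 2 * ‖f w‖ ^ 2 = ‖(Real.pi * R ^ 2) • f w • f w‖ := by
        rw [norm_smul, Real.norm_of_nonneg (by positivity), norm_smul, sq ‖f w‖]
    _ = ‖∫ x in Metric.ball w R, f x • f x‖ := by rw [← hsq]
    _ ≤ ∫ x in Metric.ball w R, ‖f x • f x‖ := norm_integral_le_integral_norm _
    _ = ∫ x in Metric.ball w R, ‖f x‖ ^ 2 := by simp only [norm_smul, sq]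

theorem eventually_comap_im_atBot {p : ℂ → Prop} :
    (∀ᶠ w in comap Complex.im atBot, p w) ↔ ∃ N, ∀ w : ℂ, w.im < N → p w := by
  simpa using (atBot_basis_Iio.comap Complex.im).eventually_iff (q := p)

theorem eventually_forall_mem_ball_of_comap_im_atBot {p : ℂ → Prop} (r : ℝ)
    (h : ∀ᶠ w in comap Complex.im atBot, p w) :
    ∀ᶠ w in comap Complex.im atBot, ∀ x ∈ Metric.closedBall w r, p x := by
  obtain ⟨N, hN⟩ := eventually_comap_im_atBot.1 h
  refine eventually_comap_im_atBot.2 ⟨N - r, fun w hw x hx => hN x ?_⟩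
  have := (Complex.abs_im_le_norm (x - w)).trans (mem_closedBall_iff_norm.1 hx)
  rw [Complex.sub_im] at this
  linarith [(abs_le.1 this).2]

theorem integrableOn_preimage_add_of_periodic {g : ℂ → ℝ} {c : ℂ} (hg : Function.Periodic g c)
    {S : Set ℂ} (h : IntegrableOn g S) : IntegrableOn g ((fun x => x + c) ⁻¹' S) := by
  have := ((measurePreserving_add_right volume c).integrableOn_comp_preimage
    (MeasurableEquiv.addRight c).measurableEmbedding).2 h
  rwa [show g ∘ (fun x => x + c) = g from funext hg] at this

theorem integrableOn_strip_of_periodic {g : ℂ → ℝ} {a h : ℝ} (hg : Function.Periodic g (h : ℂ))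
    (hint : IntegrableOn g {x | x.im < a ∧ x.re ∈ Icc 0 h}) :
    IntegrableOn g {x | x.im < a ∧ x.re ∈ Icc (-h) (2 * h)} := by
  refine ((integrableOn_preimage_add_of_periodic hg hint).union
    (hint.union (integrableOn_preimage_add_of_periodic (c := -h) hg.neg hint))).mono_set ?_
  rintro x ⟨him, hlo, hhi⟩
  rcases lt_or_ge x.re 0 with hneg | hnonneg
  · left
    simp only [preimage_ofPred_eq, mem_ofPred_eq, Complex.add_im, Complex.add_re,
      Complex.ofReal_im, Complex.ofReal_re, add_zero]
    exact ⟨him, by linarith, by linarith⟩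
  rcases le_or_gt x.re h with hle | hgt
  · exact Or.inr (Or.inl ⟨him, hnonneg, hle⟩)
  · right; right
    simp only [preimage_ofPred_eq, mem_ofPred_eq, Complex.add_im, Complex.add_re, Complex.neg_im,
      Complex.neg_re, Complex.ofReal_im, Complex.ofReal_re, neg_zero, add_zero]
    exact ⟨him, by linarith, by linarith⟩

theorem tendsto_setIntegral_strip_atBot {g : ℂ → ℝ} {a b c : ℝ}
    (hint : IntegrableOn g {x | x.im < a ∧ x.re ∈ Icc b c}) :
    Tendsto (fun n : ℕ => ∫ x in {x : ℂ | x.im < a - n ∧ x.re ∈ Icc b c}, g x) atTop (𝓝 0) := by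
  have hanti : Antitone fun n : ℕ => {x : ℂ | x.im < a - n ∧ x.re ∈ Icc b c} := by
    intro m n hmn x hx
    have : (m : ℝ) ≤ n := Nat.cast_le.2 hmn
    exact ⟨hx.1.trans_le (by linarith), hx.2⟩
  have hempty : ⋂ n : ℕ, {x : ℂ | x.im < a - n ∧ x.re ∈ Icc b c} = ∅ := by
    refine eq_empty_of_forall_notMem fun x hx => ?_
    obtain ⟨n, hn⟩ := exists_nat_gt (a - x.im)
    linarith [(mem_iInter.1 hx n).1]
  have hmeas (n : ℕ) : MeasurableSet {x : ℂ | x.im < a - n ∧ x.re ∈ Icc b c} :=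
    (measurableSet_lt Complex.measurable_im measurable_const).inter
      (measurableSet_Icc.preimage Complex.measurable_re)
  have := tendsto_setIntegral_of_antitone hmeas hanti ⟨0, by simpa using hint⟩
  rwa [hempty, setIntegral_empty] at this

theorem exists_int_add_re_mem_Icc {h : ℝ} (hh : 0 < h) (w : ℂ) :
    ∃ k : ℤ, (w + k * h).re ∈ Icc 0 h := by
  obtain ⟨k, hk, -⟩ := existsUnique_add_zsmul_mem_Ico hh w.re 0
  refine ⟨k, ?_⟩
  rw [zsmul_eq_mul, zero_add] at hk
  have hre : (w + k * h).re = w.re + k * h := by simp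
  exact hre ▸ Ico_subset_Icc_self hk

theorem tendsto_zero_comap_im_atBot_of_integrableOn {f : ℂ → ℂ} {a h : ℝ} (hh : 0 < h)
    (hf : DifferentiableOn ℂ f {x | x.im < a}) (hper : Function.Periodic f (h : ℂ))
    (hint : IntegrableOn (fun x => ‖f x‖ ^ 2) {x | x.im < a ∧ x.re ∈ Icc 0 h}) :
    Tendsto f (comap Complex.im atBot) (𝓝 0) := by
  have hwide := integrableOn_strip_of_periodic (hper.comp fun w => ‖w‖ ^ 2) hint
  rw [Metric.tendsto_nhds]
  intro ε hε
  obtain ⟨n, hn⟩ := ((tendsto_setIntegral_strip_atBot hwide).eventually_lt_const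
    (by positivity : 0 < Real.pi * h ^ 2 * ε ^ 2)).exists
  refine eventually_comap_im_atBot.2 ⟨a - n - h, fun w hw => ?_⟩
  obtain ⟨k, hk⟩ := exists_int_add_re_mem_Icc hh w
  rw [← hper.int_mul k w, dist_zero_right]
  set v := w + k * h with hv
  have hvim : v.im < a - n - h := by simpa [hv] using hw
  have hball : Metric.closedBall v h ⊆ {x : ℂ | x.im < a - n ∧ x.re ∈ Icc (-h) (2 * h)} := by
    intro x hx
    rw [mem_closedBall_iff_norm] at hx
    have him := abs_le.1 ((Complex.abs_im_le_norm (x - v)).trans hx)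
    have hre := abs_le.1 ((Complex.abs_re_le_norm (x - v)).trans hx)
    rw [Complex.sub_im] at him
    rw [Complex.sub_re] at hre
    exact ⟨by linarith [him.2], by linarith [hre.1, hk.1], by linarith [hre.2, hk.2]⟩
  have hdeep {x : ℂ} (hx : x.im < a - n) : x.im < a := hx.trans_le (by simp)
  have hsub : {x : ℂ | x.im < a - n ∧ x.re ∈ Icc (-h) (2 * h)} ⊆
      {x | x.im < a ∧ x.re ∈ Icc (-h) (2 * h)} := fun x hx => ⟨hdeep hx.1, hx.2⟩
  have hmean : Real.pi * h ^ 2 * ‖f v‖ ^ 2 < Real.pi * h ^ 2 * ε ^ 2 :=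
    calc Real.pi * h ^ 2 * ‖f v‖ ^ 2 ≤ ∫ x in Metric.ball v h, ‖f x‖ ^ 2 :=
          mul_norm_sq_le_setIntegral_ball hh (DifferentiableOn.diffContOnCl
            (hf.mono fun x hx => hdeep (hball (Metric.closure_ball_subset_closedBall hx)).1))
      _ ≤ ∫ x in {x : ℂ | x.im < a - n ∧ x.re ∈ Icc (-h) (2 * h)}, ‖f x‖ ^ 2 :=
          setIntegral_mono_set (hwide.mono_set hsub)
            (Eventually.of_forall fun x => by positivity)
            (Metric.ball_subset_closedBall.trans hball).eventuallyLE
      _ < _ := hn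
  exact lt_of_pow_lt_pow_left₀ 2 hε.le (lt_of_mul_lt_mul_left hmean (by positivity))

theorem tendsto_deriv_zero_comap_im_atBot {f : ℂ → ℂ} {a : ℝ}
    (hf : DifferentiableOn ℂ f {x | x.im < a}) (hlim : Tendsto f (comap Complex.im atBot) (𝓝 0)) :
    Tendsto (deriv f) (comap Complex.im atBot) (𝓝 0) := by
  rw [Metric.tendsto_nhds] at hlim ⊢
  intro ε hε
  filter_upwards [eventually_forall_mem_ball_of_comap_im_atBot 1 (hlim (ε / 2) (half_pos hε)),
    eventually_forall_mem_ball_of_comap_im_atBot 1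
      (eventually_comap_im_atBot.2 ⟨a, fun _ h => h⟩)] with w hsmall hdom
  simp only [dist_zero_right] at hsmall ⊢
  have := Complex.norm_deriv_le_of_forall_mem_sphere_norm_le (c := w) (f := f) one_pos
    (DifferentiableOn.diffContOnCl
      (hf.mono fun x hx => hdom x (Metric.closure_ball_subset_closedBall hx)))
    fun x hx => (hsmall x (Metric.sphere_subset_closedBall hx)).le
  linarith

end HolomorphicDecay

section MaximumPrinciple

theorem isCompact_superlevel_of_eventually_frontier
    {X : Type*} [PseudoMetricSpace X] [ProperSpace X] {G : X → ℝ} {O S : Set X} {c : ℝ}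
    (hO : IsOpen O) (hG : ContinuousOn G O) (hS : IsClosed S)
    (hfront : ∀ w ∈ frontier O, ∀ᶠ x in 𝓝[O] w, G x < c)
    (hbdd : Bornology.IsBounded {x ∈ O ∩ S | c ≤ G x}) : IsCompact {x ∈ O ∩ S | c ≤ G x} := by
  refine Metric.isCompact_of_isClosed_isBounded (isClosed_of_closure_subset fun w hw => ?_) hbdd
  have : (𝓝[{x ∈ O ∩ S | c ≤ G x}] w).NeBot := mem_closure_iff_nhdsWithin_neBot.1 hw
  have hmem : ∀ᶠ x in 𝓝[{x ∈ O ∩ S | c ≤ G x}] w, (x ∈ O ∧ x ∈ S) ∧ c ≤ G x :=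
    self_mem_nhdsWithin
  have hsub : {x ∈ O ∩ S | c ≤ G x} ⊆ O := fun x hx => hx.1.1
  have hwO : w ∈ O := by
    by_contra hno
    have hfr : w ∈ frontier O := hO.frontier_eq ▸ ⟨closure_mono hsub hw, hno⟩
    have hlow := (hfront w hfr).filter_mono (nhdsWithin_mono w hsub)
    obtain ⟨x, hx, hxc⟩ := (hmem.and hlow).exists
    exact hxc.not_ge hx.2
  have hcont := (hG.continuousAt (hO.mem_nhds hwO)).continuousWithinAt
    (s := {x ∈ O ∩ S | c ≤ G x})
  exact ⟨⟨hwO, hS.closure_subset (closure_mono (fun _ hx => hx.1.2) hw)⟩,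
    ge_of_tendsto hcont (hmem.mono fun _ hx => hx.2)⟩

theorem norm_lt_of_isCompact_superlevel {G : ℂ → ℂ} {O K : Set ℂ} {c : ℝ} (hO : IsOpen O)
    (hconn : IsPreconnected O) (hG : DifferentiableOn ℂ G O) (hK : IsCompact K) (hKO : K ⊆ O)
    (hred : ∀ x ∈ O, c ≤ ‖G x‖ → ∃ y ∈ K, ‖G y‖ = ‖G x‖) (hlow : ∃ y ∈ O, ‖G y‖ < c) :
    ∀ x ∈ O, ‖G x‖ < c := by
  intro x hx
  by_contra! hle
  obtain ⟨y, hyK, hy⟩ := hred x hx hle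
  obtain ⟨m, hmK, hmax⟩ := hK.exists_isMaxOn ⟨y, hyK⟩ (hG.continuousOn.norm.mono hKO)
  have hcm : c ≤ ‖G m‖ := (hle.trans hy.ge).trans (hmax hyK)
  have hmaxO : IsMaxOn (norm ∘ G) O m := by
    intro w hw
    rcases le_or_gt c ‖G w‖ with h | h
    · obtain ⟨v, hvK, hv⟩ := hred w hw h
      exact hv.ge.trans (hmax hvK)
    · exact h.le.trans hcm
  obtain ⟨v, hvO, hv⟩ := hlow
  have hconst := Complex.norm_eqOn_of_isPreconnected_of_isMaxOn hconn hO hG (hKO hmK) hmaxO hvO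
  exact hv.not_ge (hcm.trans hconst.ge)

theorem norm_lt_of_periodic_of_tendsto {G : ℂ → ℂ} {O : Set ℂ} {a c h : ℝ} (hh : 0 < h) (hc : 0 < c)
    (hO : IsOpen O) (hconn : IsPreconnected O) (hOper : Function.Periodic (· ∈ O) (h : ℂ))
    (hdeep : ∀ᶠ w in comap Complex.im atBot, w ∈ O) (him : ∀ x ∈ O, x.im ≤ a)
    (hG : DifferentiableOn ℂ G O) (hGper : Function.Periodic G (h : ℂ))
    (hlim : Tendsto G (comap Complex.im atBot) (𝓝 0))
    (hfront : ∀ w ∈ frontier O, ∀ᶠ x in 𝓝[O] w, ‖G x‖ < c) : ∀ x ∈ O, ‖G x‖ < c := by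
  obtain ⟨N, hN⟩ := eventually_comap_im_atBot.1
    (hdeep.and (hlim.norm.eventually_lt_const (by simpa using hc)))
  have hbdd : {x ∈ O ∩ Complex.re ⁻¹' Icc 0 h | c ≤ ‖G x‖} ⊆ Icc 0 h ×ℂ Icc N a :=
    fun x ⟨⟨hxO, hre⟩, hcx⟩ => ⟨hre, not_lt.1 fun hx => hcx.not_gt (hN x hx).2, him x hxO⟩
  refine norm_lt_of_isCompact_superlevel hO hconn hG
    (isCompact_superlevel_of_eventually_frontier hO hG.continuousOn.norm
      (isClosed_Icc.preimage Complex.continuous_re) hfront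
      ((isCompact_Icc.reProdIm isCompact_Icc).isBounded.subset hbdd))
    (fun x hx => hx.1.1) (fun x hx hcx => ?_) ?_
  · obtain ⟨k, hk⟩ := exists_int_add_re_mem_Icc hh x
    have hGk : G (x + k * h) = G x := hGper.int_mul k x
    exact ⟨x + k * h, ⟨⟨(hOper.int_mul k x).mpr hx, hk⟩, hGk ▸ hcx⟩, by rw [hGk]⟩
  · have hpt := hN ((N - 1 : ℝ) * Complex.I) (by simp)
    exact ⟨_, hpt⟩

end MaximumPrinciple

section BoundaryValues

variable {f : ℂ → ℂ} {O : Set ℂ} {w : ℂ}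

theorem exists_tendsto_fderiv_of_contDiffWithinAt_closure (hO : IsOpen O)
    (hf : ContDiffWithinAt ℝ 1 f (closure O) w) (hw : w ∈ closure O) :
    ∃ L, HasFDerivWithinAt f L (closure O) w ∧ Tendsto (fderiv ℝ f) (𝓝[O] w) (𝓝 L) := by
  rw [← zero_add 1] at hf
  obtain ⟨u, hu, -, f', hf', hcont⟩ := (contDiffWithinAt_succ_iff_hasFDerivWithinAt (by simp)).1 hf
  rw [insert_eq_of_mem hw] at hu
  have huO : u ∈ 𝓝[O] w := nhdsWithin_mono _ subset_closure hu
  refine ⟨f' w, (hf' w (mem_of_mem_nhdsWithin hw hu)).mono_of_mem_nhdsWithin hu,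
    (hcont.continuousWithinAt.tendsto.mono_left (nhdsWithin_le_of_mem huO)).congr' ?_⟩
  filter_upwards [eventually_eventually_nhdsWithin.2 huO, self_mem_nhdsWithin] with x hx hxO
  rw [hO.nhdsWithin_eq hxO] at hx
  exact ((hf' x (mem_of_mem_nhds hx)).hasFDerivAt hx).fderiv.symm

theorem tendsto_deriv_mul_of_hasDerivAt_comp (hO : IsOpen O)
    (hf : ContDiffOn ℝ 1 f (closure O)) (hhol : DifferentiableOn ℂ f O) {z : ℝ → ℂ} {γ : ℝ}
    {τ v : ℂ} (hz : ∀ α, z α ∈ closure O) (hzτ : HasDerivAt z τ γ)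
    (hv : HasDerivAt (fun α => f (z α)) v γ) :
    Tendsto (fun x => deriv f x * τ) (𝓝[O] (z γ)) (𝓝 v) := by
  obtain ⟨L, hL, hlim⟩ :=
    exists_tendsto_fderiv_of_contDiffWithinAt_closure hO (hf _ (hz γ)) (hz γ)
  have hLτ : L τ = v := by
    have := hL.comp_hasDerivWithinAt γ hzτ.hasDerivWithinAt (fun α _ => hz α) (s := univ)
    exact (hasDerivWithinAt_univ.1 this).unique hv
  rw [← hLτ]
  refine (((ContinuousLinearMap.apply ℝ ℂ τ).continuous.tendsto L).comp hlim).congr' ?_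
  filter_upwards [self_mem_nhdsWithin] with x hx
  have hd := (hhol.differentiableAt (hO.mem_nhds hx)).hasDerivAt.hasFDerivAt
  simp [(hd.restrictScalars ℝ).fderiv, mul_comm]

theorem norm_sub_le_of_openSegment_subset {M : ℝ} {p q : ℂ} (hO : IsOpen O)
    (hf : ContinuousOn f (closure O)) (hhol : DifferentiableOn ℂ f O)
    (hM : ∀ x ∈ O, ‖deriv f x‖ ≤ M) (hs : openSegment ℝ p q ⊆ O) :
    ‖f p - f q‖ ≤ M * ‖p - q‖ := by
  have hseg : segment ℝ p q ⊆ closure O := by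
    rw [← closure_openSegment]
    exact closure_mono hs
  have hinner : ∀ x ∈ openSegment ℝ p q ×ˢ openSegment ℝ p q,
      ‖f x.1 - f x.2‖ ≤ M * ‖x.1 - x.2‖ := fun x hx =>
    (convex_openSegment p q).norm_image_sub_le_of_norm_deriv_le
      (fun y hy => hhol.differentiableAt (hO.mem_nhds (hs hy))) (fun y hy => hM y (hs hy))
      hx.2 hx.1
  have hcont : ∀ r ∈ segment ℝ p q, ContinuousWithinAt f (openSegment ℝ p q) r :=
    fun r hr => (hf r (hseg hr)).mono (hs.trans subset_closure)
  have hmem : (p, q) ∈ closure (openSegment ℝ p q ×ˢ openSegment ℝ p q) := by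
    rw [closure_prod_eq, closure_openSegment]
    exact ⟨left_mem_segment _ _ _, right_mem_segment _ _ _⟩
  refine ContinuousWithinAt.closure_le (f := fun x : ℂ × ℂ => ‖f x.1 - f x.2‖) hmem ?_
    (by fun_prop : Continuous fun x : ℂ × ℂ => M * ‖x.1 - x.2‖).continuousWithinAt hinner
  exact (((hcont p (left_mem_segment _ _ _)).comp (f := Prod.fst) continuousWithinAt_fst
    fun _ hx => hx.1).sub ((hcont q (right_mem_segment _ _ _)).comp (f := Prod.snd)
      continuousWithinAt_snd fun _ hx => hx.2)).norm

end BoundaryValues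

namespace FluidInterface

variable {A : ℝ} {z z' : ℝ → ℂ} {O₁ O₂ : Set ℂ} {f : ℂ → ℂ}

theorem mem_closure_left (C : FluidInterface A z z' O₁ O₂) (γ : ℝ) : z γ ∈ closure O₁ :=
  frontier_subset_closure (C.frontier_left.symm ▸ mem_range_self γ)

theorem norm_deriv_le_of_eventually (C : FluidInterface A z z' O₁ O₂) {M : ℝ} (hM : 0 ≤ M)
    (hO : Function.Periodic (· ∈ O₁) ((2 * Real.pi : ℝ) : ℂ)) (hf : DifferentiableOn ℂ f O₁)
    (hper : Function.Periodic f ((2 * Real.pi : ℝ) : ℂ))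
    (hint : IntegrableOn (fun x => ‖f x‖ ^ 2) (O₁ ∩ {x | x.re ∈ Icc 0 (2 * Real.pi)}))
    (hbd : ∀ γ, ∀ c > M, ∀ᶠ x in 𝓝[O₁] (z γ), ‖deriv f x‖ < c) :
    ∀ x ∈ O₁, ‖deriv f x‖ ≤ M := by
  obtain ⟨a, hlow, hup⟩ := C.strip
  have hdeep : {x : ℂ | x.im < -a} ⊆ O₁ := fun x hx => hlow (le_of_lt hx : x.im ≤ -a)
  have hlim := tendsto_deriv_zero_comap_im_atBot (hf.mono hdeep)
    (tendsto_zero_comap_im_atBot_of_integrableOn Real.two_pi_pos (hf.mono hdeep) hper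
      (hint.mono_set fun x hx => ⟨hdeep hx.1, hx.2⟩))
  have him : ∀ x ∈ O₁, x.im ≤ a := fun x hx =>
    le_of_not_ge fun hax => disjoint_left.1 C.disjoint hx (hup hax)
  have hderiv : Function.Periodic (deriv f) ((2 * Real.pi : ℝ) : ℂ) := fun x => by
    rw [← deriv_comp_add_const, funext hper]
  refine fun x hx => le_of_forall_gt_imp_ge_of_dense fun c hc => ?_
  refine (norm_lt_of_periodic_of_tendsto Real.two_pi_pos (hM.trans_lt hc) C.isOpen_left
    C.isPreconnected_left hO (eventually_comap_im_atBot.2 ⟨-a, fun _ h => hdeep h⟩) him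
    (hf.deriv C.isOpen_left) hderiv hlim ?_ x hx).le
  rw [C.frontier_left]
  exact forall_mem_range.2 fun γ => hbd γ c hc

theorem norm_sub_le_of_holomorphic (C : FluidInterface A z z' O₁ O₂)
    (hO : Function.Periodic (· ∈ O₁) ((2 * Real.pi : ℝ) : ℂ)) (hf : ContDiffOn ℝ 1 f (closure O₁))
    (hhol : DifferentiableOn ℂ f O₁) (hper : ∀ x ∈ O₁, f (x + (2 * Real.pi : ℝ)) = f x)
    (hint : IntegrableOn (fun x => ‖f x‖ ^ 2) (O₁ ∩ {x | x.re ∈ Icc 0 (2 * Real.pi)}))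
    (hv : ∀ γ, ∃ v, HasDerivAt (fun α => f (z α)) v γ ∧ ‖v‖ ≤ A) {α β : ℝ}
    (hs : openSegment ℝ (z α) (z β) ⊆ O₁) : ‖f (z α) - f (z β)‖ ≤ A ^ 2 * ‖z α - z β‖ := by
  have hA := C.pos
  have heq : EqOn (O₁.indicator f) f O₁ := eqOn_indicator
  have hderiv : EqOn (deriv (O₁.indicator f)) (deriv f) O₁ := heq.deriv C.isOpen_left
  have hbd : ∀ γ, ∀ c > A ^ 2, ∀ᶠ x in 𝓝[O₁] (z γ), ‖deriv (O₁.indicator f) x‖ < c := by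
    intro γ c hc
    obtain ⟨v, hv, hvA⟩ := hv γ
    have hlim := (tendsto_deriv_mul_of_hasDerivAt_comp C.isOpen_left hf hhol C.mem_closure_left
      (C.hasDerivAt γ) hv).norm
    have hlt : ‖v‖ < c / A := hvA.trans_lt (by rwa [lt_div_iff₀ hA, ← sq])
    filter_upwards [hlim.eventually_lt_const hlt, self_mem_nhdsWithin] with x hx hxO
    rw [norm_mul] at hx
    have hmul := (mul_le_mul_of_nonneg_left (C.inv_le_norm_deriv γ) (norm_nonneg _)).trans_lt hx
    rwa [← div_eq_mul_inv, div_lt_div_iff_of_pos_right hA, ← hderiv hxO] at hmul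
  have hgrad := C.norm_deriv_le_of_eventually (by positivity) hO (hhol.congr heq)
    (fun x => ?_) (hint.congr_fun (fun x hx => ?_) ?_) hbd
  · refine norm_sub_le_of_openSegment_subset C.isOpen_left hf.continuousOn hhol
      (fun x hx => ?_) hs
    rw [← hderiv hx]
    exact hgrad x hx
  · have hmem : (x + (2 * Real.pi : ℝ) ∈ O₁) = (x ∈ O₁) := hO x
    by_cases hx : x ∈ O₁
    · rw [indicator_of_mem hx, indicator_of_mem (hmem.mpr hx), hper x hx]
    · rw [indicator_of_notMem hx, indicator_of_notMem (hmem ▸ hx)]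
  · exact congrArg (‖·‖ ^ 2) (heq hx.1).symm
  · exact C.isOpen_left.measurableSet.inter (measurableSet_Icc.preimage Complex.measurable_re)

end FluidInterface

section Complexification

/-- The identification of the plane with `ℂ` which maps `(x, y)` to `x + i y`. -/
def toComplex : E2 ≃ₗᵢ[ℝ] ℂ := Complex.orthonormalBasisOneI.repr.symm

@[simp]
theorem toComplex_symm_apply_zero (w : ℂ) : toComplex.symm w 0 = w.re := by
  simp [toComplex]

@[simp]
theorem toComplex_symm_apply_one (w : ℂ) : toComplex.symm w 1 = w.im := by
  simp [toComplex]

@[simp]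
theorem re_toComplex (x : E2) : (toComplex x).re = x 0 := by
  rw [← toComplex_symm_apply_zero, toComplex.symm_apply_apply]

@[simp]
theorem im_toComplex (x : E2) : (toComplex x).im = x 1 := by
  rw [← toComplex_symm_apply_one, toComplex.symm_apply_apply]

theorem toComplex_smul_xvec (α : ℝ) : toComplex (α • xvec) = α := by
  apply Complex.ext <;> simp [xvec]

theorem toComplex_transl : toComplex transl = ((2 * Real.pi : ℝ) : ℂ) := by
  apply Complex.ext <;> simp [transl]

theorem toComplex_symm_add_two_pi (w : ℂ) :
    toComplex.symm (w + (2 * Real.pi : ℝ)) = toComplex.symm w + transl := by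
  rw [← toComplex_transl, map_add, toComplex.symm_apply_apply]

theorem toComplex_symm_one : toComplex.symm 1 = EuclideanSpace.single 0 1 := by
  ext i
  fin_cases i <;> simp

theorem toComplex_symm_I : toComplex.symm Complex.I = EuclideanSpace.single 1 1 := by
  ext i
  fin_cases i <;> simp

theorem rinner_eq_add (x y : E2) : rinner x y = x 0 * y 0 + x 1 * y 1 := by
  simp only [rinner, PiLp.inner_apply, Fin.sum_univ_two, RCLike.inner_apply, conj_trivial]
  ring

theorem rinner_perpv (x y : E2) : rinner x (perpv y) = x 1 * y 0 - x 0 * y 1 := by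
  simp only [rinner_eq_add, perpv, EuclideanSpace.equiv, PiLp.continuousLinearEquiv_symm_apply,
    Matrix.cons_val_zero, Matrix.cons_val_one]
  ring

theorem rinner_eq_zero_of_rinner_perpv_eq_zero {p q w : E2} (hp : p ≠ 0) (hpw : rinner p w = 0)
    (hqp : rinner q (perpv p) = 0) : rinner q w = 0 := by
  rw [rinner_perpv] at hqp
  rw [rinner_eq_add] at hpw ⊢
  have hnorm : p 0 * p 0 + p 1 * p 1 ≠ 0 := by
    rw [← rinner_eq_add]
    exact inner_self_ne_zero.2 hp
  refine (mul_eq_zero.1 ?_).resolve_left hnorm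
  linear_combination (q 0 * p 0 + q 1 * p 1) * hpw + (p 0 * w 1 - p 1 * w 0) * hqp

theorem periodic_mem_preimage_toComplex_symm {O : Set E2} (h : (fun x => x + transl) '' O = O) :
    Function.Periodic (· ∈ toComplex.symm ⁻¹' O) ((2 * Real.pi : ℝ) : ℂ) := by
  intro w
  have hshift : toComplex.symm w + transl ∈ O ↔ toComplex.symm w ∈ O := by
    conv_lhs => rw [← h]
    exact (add_left_injective transl).mem_set_image
  simp only [mem_preimage, toComplex_symm_add_two_pi, hshift]

/-- The complex velocity `u₀ - i u₁` of a planar vector field `u`; it is holomorphic exactly when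
`u` is both divergence free and curl free. -/
def complexVelocity (u : E2 → E2) (w : ℂ) : ℂ :=
  (starRingEnd ℂ) (toComplex (u (toComplex.symm w)))

theorem norm_complexVelocity (u : E2 → E2) (w : ℂ) :
    ‖complexVelocity u w‖ = ‖u (toComplex.symm w)‖ := by
  rw [complexVelocity, RCLike.norm_conj, toComplex.norm_map]

theorem norm_complexVelocity_sub (u : E2 → E2) (x y : E2) :
    ‖complexVelocity u (toComplex x) - complexVelocity u (toComplex y)‖ = ‖u x - u y‖ := by
  simp only [complexVelocity, toComplex.symm_apply_apply]
  rw [← map_sub, ← map_sub, RCLike.norm_conj, toComplex.norm_map]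

theorem contDiffOn_complexVelocity {n : WithTop ℕ∞} {u : E2 → E2} {s : Set E2}
    (hu : ContDiffOn ℝ n u s) : ContDiffOn ℝ n (complexVelocity u) (toComplex.symm ⁻¹' s) :=
  (Complex.conjLIE.contDiff.comp toComplex.contDiff).comp_contDiffOn
    (hu.comp toComplex.symm.contDiff.contDiffOn fun _ hx => hx)

theorem differentiableAt_complexVelocity {u : E2 → E2} {w : ℂ}
    (hu : DifferentiableAt ℝ u (toComplex.symm w))
    (hdiv : fderiv ℝ u (toComplex.symm w) (EuclideanSpace.single 0 1) 0 +
      fderiv ℝ u (toComplex.symm w) (EuclideanSpace.single 1 1) 1 = 0)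
    (hcurl : fderiv ℝ u (toComplex.symm w) (EuclideanSpace.single 0 1) 1 -
      fderiv ℝ u (toComplex.symm w) (EuclideanSpace.single 1 1) 0 = 0) :
    DifferentiableAt ℂ (complexVelocity u) w := by
  have hd := (toComplex.trans Complex.conjLIE).toContinuousLinearEquiv.hasFDerivAt.comp w
    (hu.hasFDerivAt.comp w toComplex.symm.toContinuousLinearEquiv.hasFDerivAt)
  have hfderiv (v : ℂ) : fderiv ℝ (complexVelocity u) w v =
      (starRingEnd ℂ) (toComplex (fderiv ℝ u (toComplex.symm w) (toComplex.symm v))) :=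
    congrArg (fun L : ℂ →L[ℝ] ℂ => L v) hd.fderiv
  refine differentiableAt_complex_iff_differentiableAt_real.2 ⟨hd.differentiableAt, ?_⟩
  rw [hfderiv, hfderiv, toComplex_symm_one, toComplex_symm_I]
  apply Complex.ext
  · simp only [Complex.conj_re, re_toComplex, smul_eq_mul, Complex.mul_re, Complex.I_re,
      Complex.I_im, Complex.conj_im, im_toComplex]
    linarith
  · simp only [Complex.conj_im, im_toComplex, smul_eq_mul, Complex.mul_im, Complex.I_re,
      Complex.I_im, Complex.conj_re, re_toComplex]
    linarith

end Complexification

section Slices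

variable {E F : Type*} [NormedAddCommGroup E] [NormedSpace ℝ E] [NormedAddCommGroup F]
  [NormedSpace ℝ F]

theorem norm_fderivWithin_sub_le {g : E → F} {S : Set E} {A : ℝ} {p q : E} (hS : Convex ℝ S)
    (hun : UniqueDiffOn ℝ S) (hg : ContDiffOn ℝ 2 g S)
    (hA : ∀ x ∈ S, ‖iteratedFDerivWithin ℝ 2 g S x‖ ≤ A) (hp : p ∈ S) (hq : q ∈ S) :
    ‖fderivWithin ℝ g S p - fderivWithin ℝ g S q‖ ≤ A * ‖p - q‖ := by
  have hd : DifferentiableOn ℝ (fderivWithin ℝ g S) S :=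
    (hg.fderivWithin hun (m := 1) (by norm_num)).differentiableOn one_ne_zero
  refine hS.norm_image_sub_le_of_norm_fderivWithin_le hd (fun x hx => ?_) hq hp
  rw [← norm_iteratedFDerivWithin_one _ (hun x hx),
    norm_iteratedFDerivWithin_fderivWithin hun hx]
  exact hA x hx

variable {g : ℝ × ℝ → E} {L : ℝ × ℝ →L[ℝ] E} {I : Set ℝ} {α t : ℝ}

theorem hasDerivAt_slice_fst (ht : t ∈ I) (h : HasFDerivWithinAt g L (univ ×ˢ I) (α, t)) :
    HasDerivAt (fun a => g (a, t)) (L (1, 0)) α :=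
  hasDerivWithinAt_univ.1 (h.comp_hasDerivWithinAt α
    ((hasDerivAt_id α).prodMk (hasDerivAt_const α t)).hasDerivWithinAt
    fun _ _ => mk_mem_prod (mem_univ _) ht)

theorem hasDerivWithinAt_slice_snd (h : HasFDerivWithinAt g L (univ ×ˢ I) (α, t)) :
    HasDerivWithinAt (fun s => g (α, s)) (L (0, 1)) I t :=
  h.comp_hasDerivWithinAt t ((hasDerivAt_const t α).prodMk (hasDerivAt_id t)).hasDerivWithinAt
    fun _ hs => mk_mem_prod (mem_univ _) hs

theorem norm_apply_one_zero_le (L : ℝ × ℝ →L[ℝ] E) : ‖L (1, 0)‖ ≤ ‖L‖ :=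
  L.unit_le_opNorm _ (by simp [Prod.norm_def])

theorem norm_apply_zero_one_le (L : ℝ × ℝ →L[ℝ] E) : ‖L (0, 1)‖ ≤ ‖L‖ :=
  L.unit_le_opNorm _ (by simp [Prod.norm_def])

end Slices

theorem uniqueDiffOn_univ_prod_Icc {T : ℝ} (hT : 0 < T) :
    UniqueDiffOn ℝ (univ ×ˢ Icc (0 : ℝ) T : Set (ℝ × ℝ)) :=
  uniqueDiffOn_univ.prod (uniqueDiffOn_Icc hT)

namespace TwoFluid

variable {ρ1 ρ2 σ grav T A : ℝ} (D : TwoFluid ρ1 ρ2 σ grav T A)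

section Displacement

/-- The total derivative in `(α, t)` of the displacement `z(α, t) - (α, 0)`, one-sided in `t` at
the endpoints of `[0, T]`. -/
def displacementDeriv : ℝ × ℝ → ℝ × ℝ →L[ℝ] E2 :=
  fderivWithin ℝ (fun p : ℝ × ℝ => D.z p.1 p.2 - p.1 • xvec) (univ ×ˢ Icc (0 : ℝ) T)

variable {s t α β : ℝ}

theorem hasFDerivWithinAt_displacement (ht : t ∈ Icc (0 : ℝ) T) :
    HasFDerivWithinAt (fun p : ℝ × ℝ => D.z p.1 p.2 - p.1 • xvec) (D.displacementDeriv (α, t))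
      (univ ×ˢ Icc (0 : ℝ) T) (α, t) :=
  (D.hz_smooth.differentiableOn (by norm_num) _ (mk_mem_prod (mem_univ α) ht)).hasFDerivWithinAt

theorem hasDerivAt_param (ht : t ∈ Icc (0 : ℝ) T) :
    HasDerivAt (fun a => D.z a t) (xvec + D.displacementDeriv (α, t) (1, 0)) α := by
  simpa [Pi.add_def] using ((hasDerivAt_id α).smul_const xvec).add
    (hasDerivAt_slice_fst ht (D.hasFDerivWithinAt_displacement ht))

theorem hasDerivWithinAt_time (ht : t ∈ Icc (0 : ℝ) T) :
    HasDerivWithinAt (fun s => D.z α s) (D.displacementDeriv (α, t) (0, 1)) (Icc 0 T) t := by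
  simpa using (hasDerivWithinAt_slice_snd (D.hasFDerivWithinAt_displacement ht)).add_const
    (α • xvec)

theorem norm_displacementDeriv_le (hT : 0 < T) (ht : t ∈ Icc (0 : ℝ) T) :
    ‖D.displacementDeriv (α, t)‖ ≤ A := by
  have hmem := mk_mem_prod (mem_univ α) ht
  rw [displacementDeriv, ← norm_iteratedFDerivWithin_one _ (uniqueDiffOn_univ_prod_Icc hT _ hmem)]
  exact D.hz_bound _ hmem 1 (by norm_num)

theorem norm_displacementDeriv_sub_le (hT : 0 < T) (hs : s ∈ Icc (0 : ℝ) T)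
    (ht : t ∈ Icc (0 : ℝ) T) :
    ‖D.displacementDeriv (α, s) - D.displacementDeriv (β, t)‖ ≤ A * ‖(α, s) - (β, t)‖ :=
  norm_fderivWithin_sub_le (convex_univ.prod (convex_Icc 0 T)) (uniqueDiffOn_univ_prod_Icc hT)
    (D.hz_smooth.of_le (by norm_num)) (fun p hp => D.hz_bound p hp 2 (by norm_num))
    (mk_mem_prod (mem_univ α) hs) (mk_mem_prod (mem_univ β) ht)

theorem norm_deriv_param_sub_le (hT : 0 < T) (hs : s ∈ Icc (0 : ℝ) T) (ht : t ∈ Icc (0 : ℝ) T) :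
    ‖deriv (fun a => D.z a s) α - deriv (fun a => D.z a t) β‖ ≤ A * ‖(α, s) - (β, t)‖ := by
  rw [(D.hasDerivAt_param hs).deriv, (D.hasDerivAt_param ht).deriv, add_sub_add_left_eq_sub,
    ← sub_apply]
  exact (norm_apply_one_zero_le _).trans (D.norm_displacementDeriv_sub_le hT hs ht)

theorem norm_sub_time_le (hT : 0 < T) (hs : s ∈ Icc (0 : ℝ) T) (ht : t ∈ Icc (0 : ℝ) T) :
    ‖D.z α s - D.z α t‖ ≤ A * |s - t| :=
  (convex_Icc 0 T).norm_image_sub_le_of_norm_hasDerivWithin_le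
    (fun _ hr => D.hasDerivWithinAt_time hr)
    (fun _ hr => (norm_apply_zero_one_le _).trans (D.norm_displacementDeriv_le hT hr)) ht hs

theorem continuousOn_displacementDeriv_apply (hT : 0 < T) (α : ℝ) (v : ℝ × ℝ) :
    ContinuousOn (fun s => D.displacementDeriv (α, s) v) (Icc 0 T) := by
  have hcont := D.hz_smooth.continuousOn_fderivWithin (uniqueDiffOn_univ_prod_Icc hT) (by norm_num)
  exact (hcont.comp (f := fun s : ℝ => (α, s)) (by fun_prop)
    fun s hs => mk_mem_prod (mem_univ _) hs).clm_apply continuousOn_const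

/-- The field `hkin1` uses the two-sided time derivative, so at `t = 0` and `t = T` the
condition for the one-sided derivative is recovered by continuity. -/
theorem rinner_sub_u1_perpv_eq_zero (hT : 0 < T) (ht : t ∈ Icc (0 : ℝ) T) (α : ℝ) :
    rinner (D.displacementDeriv (α, t) (0, 1) - D.u1 (D.z α t) t)
      (perpv (deriv (fun a => D.z a t) α)) = 0 := by
  have hcont (v : ℝ × ℝ) := D.continuousOn_displacementDeriv_apply hT α v
  have hu : ContinuousOn (fun s => D.u1 (D.z α s) s) (Icc (0 : ℝ) T) :=
    D.hv1_smooth.continuousOn.comp (f := fun s : ℝ => (α, s)) (by fun_prop)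
      fun s hs => mk_mem_prod (mem_univ _) hs
  have hkin : EqOn (fun s => rinner (D.displacementDeriv (α, s) (0, 1) - D.u1 (D.z α s) s)
      (perpv (xvec + D.displacementDeriv (α, s) (1, 0)))) 0 (Ioo 0 T) := fun s hs => by
    have hs' := Ioo_subset_Icc_self hs
    have h := D.hkin1 s hs' α
    rwa [((D.hasDerivWithinAt_time hs').hasDerivAt (Icc_mem_nhds hs.1 hs.2)).deriv,
      (D.hasDerivAt_param hs').deriv] at h
  rw [(D.hasDerivAt_param ht).deriv]
  refine hkin.of_subset_closure ?_ continuousOn_const Ioo_subset_Icc_self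
    (closure_Ioo hT.ne).ge ht
  simp only [rinner_perpv]
  fun_prop

end Displacement

variable {t α β : ℝ}

theorem fluidInterface (hT : 0 < T) (hA : 1 ≤ A) (ht : t ∈ Icc (0 : ℝ) T) :
    FluidInterface A (fun α => toComplex (D.z α t))
      (fun α => toComplex (deriv (fun a => D.z a t) α))
      (toComplex.symm ⁻¹' D.Ω1 t) (toComplex.symm ⁻¹' D.Ω2 t) := by
  have hrange : range (fun α => toComplex (D.z α t)) =
      toComplex.symm ⁻¹' range fun α => D.z α t :=
    (range_comp toComplex _).trans (toComplex.image_eq_preimage_symm _)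
  obtain ⟨a, -, ha⟩ := D.hStrip
  exact {
    isOpen_left := (D.hΩ1_open t ht).preimage toComplex.symm.continuous
    isOpen_right := (D.hΩ2_open t ht).preimage toComplex.symm.continuous
    isPreconnected_left :=
      toComplex.symm.toHomeomorph.isPreconnected_preimage.2 (D.hΩ1_conn t ht).isPreconnected
    isPreconnected_right :=
      toComplex.symm.toHomeomorph.isPreconnected_preimage.2 (D.hΩ2_conn t ht).isPreconnected
    union_eq := by rw [hrange, ← preimage_union, ← preimage_union, D.hUnion t ht, preimage_univ]
    disjoint := (D.hDisj12 t ht).preimage _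
    frontier_left := by
      rw [hrange, ← D.hFront1 t ht]
      exact (toComplex.symm.toHomeomorph.preimage_frontier _).symm
    frontier_right := by
      rw [hrange, ← D.hFront2 t ht]
      exact (toComplex.symm.toHomeomorph.preimage_frontier _).symm
    one_le := hA
    hasDerivAt := fun α => toComplex.toContinuousLinearEquiv.hasFDerivAt.comp_hasDerivAt α
      (D.hasDerivAt_param ht).differentiableAt.hasDerivAt
    norm_deriv_sub_le := fun α β => by
      rw [← map_sub, toComplex.norm_map]
      simpa [Prod.norm_def] using D.norm_deriv_param_sub_le hT ht ht (α := α) (β := β)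
    inv_le_norm_deriv := fun α => by
      rw [toComplex.norm_map]
      exact D.hz_lower t ht α
    norm_sub_le := fun α => by
      rw [← toComplex_smul_xvec, ← map_sub, toComplex.norm_map]
      simpa using D.hz_bound (α, t) (mk_mem_prod (mem_univ α) ht) 0 (by norm_num)
    periodic := fun α => by simp only [D.hper_z t ht, map_add, toComplex_transl]
    strip := ⟨a, fun w hw => (ha t ht).1 (by simpa using hw),
      fun w hw => (ha t ht).2 (by simpa using hw)⟩ }

theorem hasDerivAt_complexVelocity_u1 (hT : 0 < T) (ht : t ∈ Icc (0 : ℝ) T) (γ : ℝ) :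
    ∃ v, HasDerivAt (fun α => complexVelocity (fun x => D.u1 x t) (toComplex (D.z α t))) v γ ∧
      ‖v‖ ≤ A := by
  have hmem := mk_mem_prod (mem_univ γ) ht
  have hderiv := hasDerivAt_slice_fst ht
    (D.hv1_smooth.differentiableOn (by norm_num) _ hmem).hasFDerivWithinAt
  simp only [complexVelocity, toComplex.symm_apply_apply]
  refine ⟨_, (toComplex.trans Complex.conjLIE).toContinuousLinearEquiv.hasFDerivAt.comp_hasDerivAt γ
    hderiv, ((toComplex.trans Complex.conjLIE).norm_map _).trans_le
      ((norm_apply_one_zero_le _).trans ?_)⟩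
  rw [← norm_iteratedFDerivWithin_one _ (uniqueDiffOn_univ_prod_Icc hT _ hmem)]
  exact D.hv1_bound _ hmem 1 (by norm_num)

theorem integrableOn_complexVelocity_u1 (ht : t ∈ Icc (0 : ℝ) T) :
    IntegrableOn (fun w => ‖complexVelocity (fun x => D.u1 x t) w‖ ^ 2)
      (toComplex.symm ⁻¹' D.Ω1 t ∩ {w | w.re ∈ Icc 0 (2 * Real.pi)}) := by
  simp only [norm_complexVelocity]
  simpa [Function.comp_def, preimage_ofPred_eq] using
    (toComplex.symm.measurePreserving.integrableOn_comp_preimage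
    toComplex.symm.toHomeomorph.measurableEmbedding).2 (D.hL2_1 t ht)

theorem norm_u1_sub_le (hT : 0 < T) (hA : 1 ≤ A) (ht : t ∈ Icc (0 : ℝ) T)
    (hs : openSegment ℝ (toComplex (D.z α t)) (toComplex (D.z β t)) ⊆
      toComplex.symm ⁻¹' D.Ω1 t) :
    ‖D.u1 (D.z α t) t - D.u1 (D.z β t) t‖ ≤ A ^ 2 * ‖D.z α t - D.z β t‖ := by
  have hclosure : closure (toComplex.symm ⁻¹' D.Ω1 t) = toComplex.symm ⁻¹' closure (D.Ω1 t) :=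
    (toComplex.symm.toHomeomorph.preimage_closure _).symm
  have hreg := (D.hu1_reg t ht).of_le (m := 1) (by norm_num)
  have hlip := (D.fluidInterface hT hA ht).norm_sub_le_of_holomorphic
    (f := complexVelocity fun x => D.u1 x t)
    (periodic_mem_preimage_toComplex_symm (D.hper_Ω1 t ht))
    (hclosure ▸ contDiffOn_complexVelocity hreg)
    (fun w hw => (differentiableAt_complexVelocity ((hreg.contDiffAt (mem_of_superset
      ((D.hΩ1_open t ht).mem_nhds hw) subset_closure)).differentiableAt one_ne_zero)
      (D.hdiv1 t ht _ hw) (D.hcurl1 t ht _ hw)).differentiableWithinAt)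
    (fun w hw => by simp only [complexVelocity, toComplex_symm_add_two_pi, D.hper_u1 t ht _ hw])
    (D.integrableOn_complexVelocity_u1 ht) (D.hasDerivAt_complexVelocity_u1 hT ht) hs
  rwa [norm_complexVelocity_sub (fun x => D.u1 x t), ← map_sub, toComplex.norm_map] at hlip

/-- The tangential parts of the two interface velocities drop out, since both tangents are
orthogonal to the chord. -/
theorem abs_rinner_velocity_le (hT : 0 < T) (hA : 1 ≤ A) (ht : t ∈ Icc (0 : ℝ) T)
    (hs : openSegment ℝ (toComplex (D.z α t)) (toComplex (D.z β t)) ⊆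
      toComplex.symm ⁻¹' D.Ω1 t)
    (hα : rinner (deriv (fun a => D.z a t) α) (D.z α t - D.z β t) = 0)
    (hβ : rinner (deriv (fun a => D.z a t) β) (D.z α t - D.z β t) = 0) :
    |rinner (D.displacementDeriv (α, t) (0, 1) - D.displacementDeriv (β, t) (0, 1))
      (D.z α t - D.z β t)| ≤ A ^ 2 * ‖D.z α t - D.z β t‖ ^ 2 := by
  have hne (γ : ℝ) : deriv (fun a => D.z a t) γ ≠ 0 :=
    norm_pos_iff.1 ((inv_pos.2 (by linarith)).trans_le (D.hz_lower t ht γ))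
  have hslipα := rinner_eq_zero_of_rinner_perpv_eq_zero (hne α) hα
    (D.rinner_sub_u1_perpv_eq_zero hT ht α)
  have hslipβ := rinner_eq_zero_of_rinner_perpv_eq_zero (hne β) hβ
    (D.rinner_sub_u1_perpv_eq_zero hT ht β)
  have hvel : rinner (D.displacementDeriv (α, t) (0, 1) - D.displacementDeriv (β, t) (0, 1))
      (D.z α t - D.z β t) =
      rinner (D.u1 (D.z α t) t - D.u1 (D.z β t) t) (D.z α t - D.z β t) := by
    simp only [rinner, inner_sub_left] at hslipα hslipβ ⊢
    linarith
  rw [hvel]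
  calc _ ≤ ‖D.u1 (D.z α t) t - D.u1 (D.z β t) t‖ * ‖D.z α t - D.z β t‖ :=
        abs_real_inner_le_norm _ _
    _ ≤ A ^ 2 * ‖D.z α t - D.z β t‖ * ‖D.z α t - D.z β t‖ := by
        gcongr
        exact D.norm_u1_sub_le hT hA ht hs
    _ = A ^ 2 * ‖D.z α t - D.z β t‖ ^ 2 := by ring

theorem inner_toComplex (x y : E2) : inner ℝ (toComplex x) (toComplex y) = rinner x y :=
  toComplex.inner_map_map x y

theorem fluidEvolution (hT : 0 < T) (hA : 1 ≤ A) :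
    FluidEvolution A T (fun t α => toComplex (D.z α t))
      (fun t α => toComplex (deriv (fun a => D.z a t) α))
      (fun t α => toComplex (D.displacementDeriv (α, t) (0, 1)))
      (fun t => toComplex.symm ⁻¹' D.Ω1 t) (fun t => toComplex.symm ⁻¹' D.Ω2 t) := by
  obtain ⟨a, -, ha⟩ := D.hStrip
  exact {
    interface := fun t ht => D.fluidInterface hT hA ht
    exists_mem_left := ⟨⟨0, -a⟩, fun t ht => (ha t ht).1 (by simp)⟩
    exists_mem_right := ⟨⟨0, a⟩, fun t ht => (ha t ht).2 (by simp)⟩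
    norm_sub_le := fun s hs t ht α => by
      rw [← map_sub, toComplex.norm_map]
      exact D.norm_sub_time_le hT hs ht
    norm_deriv_sub_le := fun s hs t ht α => by
      rw [← map_sub, toComplex.norm_map]
      simpa [Prod.norm_def] using D.norm_deriv_param_sub_le hT hs ht (α := α) (β := α)
    hasDerivWithinAt := fun t ht α =>
      toComplex.toContinuousLinearEquiv.hasFDerivAt.comp_hasDerivWithinAt t
        (D.hasDerivWithinAt_time ht)
    periodic_right := fun t ht => periodic_mem_preimage_toComplex_symm (D.hper_Ω2 t ht)
    abs_inner_velocity_le := fun t ht α β hs hα hβ => by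
      simp only [← map_sub, inner_toComplex, toComplex.norm_map] at hα hβ ⊢
      exact D.abs_rinner_velocity_le hT hA (Ioc_subset_Icc_self ht) hs hα hβ
    abs_sub_div_le_zero := fun α β => by
      rw [← map_sub, toComplex.norm_map]
      rcases eq_or_ne α β with rfl | hne
      · simp
      · have hchord := D.hchord0 α β
        rwa [chordArcT, if_neg hne, le_div_iff₀ (abs_pos.2 (sub_ne_zero.2 hne)),
          inv_mul_eq_div] at hchord }

end TwoFluid

section ChordArc

variable {z : ℝ → ℝ → E2} {t η : ℝ}

theorem chordArcT_nonneg (z : ℝ → ℝ → E2) (α β t : ℝ) : 0 ≤ chordArcT z α β t := by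
  unfold chordArcT
  split_ifs <;> positivity

theorem iInf_chordArcT_mul_le (z : ℝ → ℝ → E2) (t α β : ℝ) :
    (⨅ p : ℝ × ℝ, chordArcT z p.1 p.2 t) * |α - β| ≤ ‖z α t - z β t‖ := by
  rcases eq_or_ne α β with rfl | hne
  · simp
  · have hbdd : BddBelow (range fun p : ℝ × ℝ => chordArcT z p.1 p.2 t) :=
      ⟨0, forall_mem_range.2 fun p => chordArcT_nonneg z p.1 p.2 t⟩
    have hle := ciInf_le hbdd (α, β)
    rwa [chordArcT, if_neg hne, le_div_iff₀ (abs_pos.2 (sub_ne_zero.2 hne))] at hle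

theorem exists_norm_sub_lt_of_iInf_chordArcT_lt (hη : ∀ α, η ≤ ‖deriv (fun a => z a t) α‖)
    (h : ⨅ p : ℝ × ℝ, chordArcT z p.1 p.2 t < η) : ∃ α β, ‖z α t - z β t‖ < η * |α - β| := by
  obtain ⟨⟨α, β⟩, hlt⟩ := exists_lt_of_ciInf_lt h
  have hne : α ≠ β := by
    rintro rfl
    rw [chordArcT, if_pos rfl] at hlt
    exact hlt.not_ge (hη α)
  rw [chordArcT, if_neg hne, div_lt_iff₀ (abs_pos.2 (sub_ne_zero.2 hne))] at hlt
  exact ⟨α, β, hlt⟩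

end ChordArc

section Constants

/-- The constant `ε₅`, the length of the normal rays in `Ω¹`. -/
def collarWidth (A T : ℝ) : ℝ := min (chordScale A / (2 * A)) (separationBound A T)

/-- The constant `ε₄`, the threshold for the chord-arc constant below which the interface is close
to a splash. -/
def splashThreshold (A T : ℝ) : ℝ := min (collarWidth A T ^ 100) (collarWidth A T / (8 * A ^ 2))

variable {A T : ℝ}

theorem collarWidth_pos (hA : 0 < A) : 0 < collarWidth A T := by
  have := chordScale_pos_of_pos hA
  exact lt_min (by positivity) (by unfold separationBound; positivity)

theorem collarWidth_le_chordScale (hA : 1 ≤ A) : collarWidth A T ≤ chordScale A :=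
  (min_le_left _ _).trans (div_le_self (chordScale_pos_of_pos (by linarith)).le (by linarith))

theorem collarWidth_lt_one (hA : 1 ≤ A) : collarWidth A T < 1 := by
  linarith [collarWidth_le_chordScale (T := T) hA, chordScale_le_of_one_le hA]

theorem splashThreshold_pos (hA : 0 < A) : 0 < splashThreshold A T := by
  have := collarWidth_pos (T := T) hA
  exact lt_min (by positivity) (by positivity)

theorem splashThreshold_le_pow : splashThreshold A T ≤ collarWidth A T ^ 100 := min_le_left _ _

theorem splashThreshold_lt_one (hA : 1 ≤ A) : splashThreshold A T < 1 :=
  splashThreshold_le_pow.trans_lt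
    (pow_lt_one₀ (collarWidth_pos (by linarith)).le (collarWidth_lt_one hA) (by norm_num))

theorem four_mul_sq_mul_splashThreshold_lt (hA : 0 < A) :
    4 * A ^ 2 * splashThreshold A T < collarWidth A T := by
  have hpos := collarWidth_pos (T := T) hA
  have hle : splashThreshold A T ≤ collarWidth A T / (8 * A ^ 2) := min_le_right _ _
  rw [le_div_iff₀ (by positivity)] at hle
  linarith

theorem splashThreshold_lt_inv (hA : 1 ≤ A) : splashThreshold A T < 1 / (2 * A) := by
  have := four_mul_sq_mul_splashThreshold_lt (T := T) (by linarith : 0 < A)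
  rw [lt_div_iff₀ (by positivity)]
  nlinarith [collarWidth_lt_one (T := T) hA, splashThreshold_pos (T := T) (by linarith : 0 < A)]

end Constants

namespace TwoFluid

variable {ρ1 ρ2 σ grav T A : ℝ} (D : TwoFluid ρ1 ρ2 σ grav T A) {t α β b ρ : ℝ}

theorem norm_toComplex_sub (α β t : ℝ) :
    ‖toComplex (D.z α t) - toComplex (D.z β t)‖ = ‖D.z α t - D.z β t‖ := by
  rw [← map_sub, toComplex.norm_map]

theorem chordScale_mul_le_norm_sub (hT : 0 < T) (hA : 1 ≤ A) (ht : t ∈ Icc (0 : ℝ) T)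
    (h : |α - β| ≤ chordScale A) : chordScale A * |α - β| ≤ ‖D.z α t - D.z β t‖ := by
  have hpos := chordScale_pos_of_pos (by linarith : 0 < A)
  have hchord := (D.fluidInterface hT hA ht).abs_sub_le_mul_norm_sub (h.trans (by linarith))
  rw [norm_toComplex_sub] at hchord
  have hsmall : chordScale A * (2 * A) ≤ 1 := by
    rw [chordScale, one_div_mul_eq_div, div_le_one (by positivity)]
    nlinarith
  calc chordScale A * |α - β| ≤ chordScale A * (2 * A * ‖D.z α t - D.z β t‖) := by gcongr
    _ = chordScale A * (2 * A) * ‖D.z α t - D.z β t‖ := by ring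
    _ ≤ ‖D.z α t - D.z β t‖ := mul_le_of_le_one_left (norm_nonneg _) hsmall

theorem norm_sub_eq_sInf (h : IsClosestPair A (fun α => toComplex (D.z α t)) α β) :
    ‖D.z α t - D.z β t‖ = sInf {r : ℝ | ∃ γ γ' : ℝ,
      |γ - γ'| ∈ Icc (chordScale A) (chordScale A)⁻¹ ∧ r = ‖D.z γ t - D.z γ' t‖} := by
  symm
  apply IsLeast.csInf_eq
  refine ⟨⟨α, β, h.mem_Icc, rfl⟩, ?_⟩
  rintro _ ⟨γ, γ', hγ, rfl⟩
  simpa only [norm_toComplex_sub] using h.norm_sub_le γ γ' hγ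

theorem norm_sub_le_mul_iInf (hT : 0 < T) (hA : 1 ≤ A) (ht : t ∈ Icc (0 : ℝ) T)
    (h : IsClosestPair A (fun α => toComplex (D.z α t)) α β)
    (hι : ⨅ p : ℝ × ℝ, chordArcT D.z p.1 p.2 t < 1 / (2 * A)) :
    ‖D.z α t - D.z β t‖ ≤ 4 * A ^ 2 * ⨅ p : ℝ × ℝ, chordArcT D.z p.1 p.2 t := by
  rw [← div_le_iff₀' (by positivity)]
  refine le_of_forall_gt_imp_ge_of_dense fun η hη => ?_
  have hηA : min η (1 / (2 * A)) ≤ A⁻¹ :=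
    (min_le_right _ _).trans (by rw [inv_eq_one_div]; gcongr; linarith)
  obtain ⟨γ, γ', hγ⟩ := exists_norm_sub_lt_of_iInf_chordArcT_lt
    (fun α => hηA.trans (D.hz_lower t ht α)) (lt_min hη hι)
  rw [← norm_toComplex_sub] at hγ ⊢
  refine le_trans ?_ (min_le_left η (1 / (2 * A)))
  rw [div_le_iff₀' (by positivity)]
  exact h.norm_sub_le_mul (D.fluidInterface hT hA ht) (min_le_right _ _) hγ

theorem inv_mul_iInf_le_norm_sub (h : 2 * chordScale A ≤ |α - β|) :
    (4 * A ^ 2)⁻¹ * ⨅ p : ℝ × ℝ, chordArcT D.z p.1 p.2 t ≤ ‖D.z α t - D.z β t‖ := by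
  have hscale : (4 * A ^ 2)⁻¹ = 2 * chordScale A := by
    rw [chordScale]
    ring
  calc (4 * A ^ 2)⁻¹ * ⨅ p : ℝ × ℝ, chordArcT D.z p.1 p.2 t
      ≤ |α - β| * ⨅ p : ℝ × ℝ, chordArcT D.z p.1 p.2 t := by
        rw [hscale]
        exact mul_le_mul_of_nonneg_right h
          (Real.iInf_nonneg fun p => chordArcT_nonneg D.z p.1 p.2 t)
    _ ≤ ‖D.z α t - D.z β t‖ := (mul_comm _ _).trans_le (iInf_chordArcT_mul_le D.z t α β)

theorem exists_isNearContact (hT : 0 < T) (hA : 1 ≤ A) (ht : t ∈ Icc (0 : ℝ) T)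
    (hι : ⨅ p : ℝ × ℝ, chordArcT D.z p.1 p.2 t ≤ splashThreshold A T) :
    ∃ α β, IsClosestPair A (fun α => toComplex (D.z α t)) α β ∧
      IsNearContact A (fun α => toComplex (D.z α t))
        (fun α => toComplex (deriv (fun a => D.z a t) α)) (toComplex.symm ⁻¹' D.Ω2 t) α β ∧
      |α - β| ∈ Icc (2 * chordScale A) ((chordScale A)⁻¹ / 2) ∧
      ‖D.z α t - D.z β t‖ ≤ 4 * A ^ 2 * ⨅ p : ℝ × ℝ, chordArcT D.z p.1 p.2 t := by
  have C := D.fluidInterface hT hA ht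
  obtain ⟨α, β, h⟩ := C.exists_isClosestPair
  have hd := D.norm_sub_le_mul_iInf hT hA ht h (hι.trans_lt (splashThreshold_lt_inv hA))
  have hcollar : ‖toComplex (D.z α t) - toComplex (D.z β t)‖ < collarWidth A T := by
    rw [norm_toComplex_sub]
    exact hd.trans_lt ((by gcongr : _ ≤ 4 * A ^ 2 * splashThreshold A T).trans_lt
      (four_mul_sq_mul_splashThreshold_lt (by linarith)))
  have hsmall := hcollar.trans_le (min_le_left _ _)
  refine ⟨α, β, h, h.isNearContact C hsmall fun γ γ' hadm => ?_, ⟨?_, ?_⟩, hd⟩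
  · exact (hcollar.trans_le (min_le_right _ _)).trans_le
      ((D.fluidEvolution hT hA).separationBound_le_norm_sub ht hadm)
  · linarith [h.four_mul_chordScale_lt C hsmall, C.chordScale_pos]
  · exact C.abs_sub_le_inv_div_two hsmall

variable (hT : 0 < T) (hA : 1 ≤ A) (ht : t ∈ Icc (0 : ℝ) T)
  (M : IsNearContact A (fun α => toComplex (D.z α t))
    (fun α => toComplex (deriv (fun a => D.z a t) α)) (toComplex.symm ⁻¹' D.Ω2 t) α β)

include M

theorem norm_sub_pos : 0 < ‖D.z β t - D.z α t‖ :=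
  norm_pos_iff.2 (sub_ne_zero.2 fun h => M.ne (congrArg toComplex h.symm))

theorem openSegment_subset_Ω2 : openSegment ℝ (D.z α t) (D.z β t) ⊆ D.Ω2 t := fun x hx => by
  obtain ⟨p, q, hp, hq, hpq, rfl⟩ := hx
  have hseg : toComplex (p • D.z α t + q • D.z β t) ∈
      openSegment ℝ (toComplex (D.z α t)) (toComplex (D.z β t)) :=
    ⟨p, q, hp, hq, hpq, by simp only [map_add, map_smul]⟩
  have hmem := M.openSegment_subset hseg
  rwa [mem_preimage, toComplex.symm_apply_apply] at hmem

theorem rinner_deriv_left_eq_zero :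
    rinner (deriv (fun a => D.z a t) α) (D.z β t - D.z α t) = 0 := by
  rw [← inner_toComplex, map_sub]
  exact M.inner_left

theorem rinner_deriv_right_eq_zero :
    rinner (deriv (fun a => D.z a t) β) (D.z β t - D.z α t) = 0 := by
  rw [← inner_toComplex, map_sub]
  exact M.inner_right

include hT hA ht

theorem rinner_deriv_neg :
    rinner (deriv (fun a => D.z a t) α) (deriv (fun a => D.z a t) β) < 0 := by
  rw [← inner_toComplex]
  exact (D.fluidInterface hT hA ht).inner_deriv_neg M

theorem sub_smul_mem_Ω1 (hb : |b - α| ≤ collarWidth A T) (hρ : ρ ∈ Ioo 0 (collarWidth A T)) :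
    D.z b t - (ρ / ‖D.z β t - D.z α t‖) • (D.z β t - D.z α t) ∈ D.Ω1 t := by
  have hd := D.norm_sub_pos M
  have hmem := (D.fluidInterface hT hA ht).sub_smul_mem_left M (min_le_left _ _)
    (fun γ γ' hadm => (min_le_right _ _).trans
      ((D.fluidEvolution hT hA).separationBound_le_norm_sub ht hadm))
    (hb.trans (collarWidth_le_chordScale hA)) (div_pos hρ.1 hd)
    (by rw [norm_toComplex_sub, div_mul_cancel₀ _ hd.ne']; exact hρ.2)
  rwa [← map_sub, ← map_smul, ← map_sub, mem_preimage, toComplex.symm_apply_apply] at hmem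

theorem add_smul_mem_Ω2 (hb : |b - α| ≤ collarWidth A T) (hρ : ρ ∈ Ioo 0 ‖D.z β t - D.z α t‖) :
    D.z b t + (ρ / ‖D.z β t - D.z α t‖) • (D.z β t - D.z α t) ∈ D.Ω2 t := by
  have hd := D.norm_sub_pos M
  have hmem := (D.fluidInterface hT hA ht).add_smul_mem_right M
    (hb.trans (collarWidth_le_chordScale hA)) ⟨div_pos hρ.1 hd, (div_lt_one hd).2 hρ.2⟩
  rwa [← map_sub, ← map_smul, ← map_add, mem_preimage, toComplex.symm_apply_apply] at hmem

theorem add_smul_mem_Ω1 (hb : |b - β| ≤ collarWidth A T) (hρ : ρ ∈ Ioo 0 (collarWidth A T)) :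
    D.z b t + (ρ / ‖D.z β t - D.z α t‖) • (D.z β t - D.z α t) ∈ D.Ω1 t := by
  have hmem := D.sub_smul_mem_Ω1 hT hA ht M.symm hb hρ
  rwa [norm_sub_rev, sub_eq_add_neg, ← smul_neg, neg_sub] at hmem

theorem sub_smul_mem_Ω2 (hb : |b - β| ≤ collarWidth A T) (hρ : ρ ∈ Ioo 0 ‖D.z β t - D.z α t‖) :
    D.z b t - (ρ / ‖D.z β t - D.z α t‖) • (D.z β t - D.z α t) ∈ D.Ω2 t := by
  have hmem := D.add_smul_mem_Ω2 hT hA ht M.symm hb (norm_sub_rev (D.z β t) _ ▸ hρ)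
  rwa [norm_sub_rev, ← neg_sub (D.z β t) (D.z α t), smul_neg, ← sub_eq_add_neg] at hmem

end TwoFluid

theorem near_splash_geometry_general {T A : ℝ} (hT : 0 < T) (hA : 1 ≤ A) :
    ∃ ε1 ε4 ε5 C : ℝ, 0 < ε1 ∧ 0 < ε4 ∧ ε4 < 1 ∧ 0 < ε5 ∧ ε5 < 1 ∧ ε4 ≤ ε5 ^ 100 ∧ 1 ≤ C ∧
      ∀ {ρ1 ρ2 σ grav : ℝ} (D : TwoFluid ρ1 ρ2 σ grav T A),
        (∀ t ∈ Icc (0:ℝ) T, ∀ α β : ℝ, |α - β| ≤ ε1 →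
            ε1 * |α - β| ≤ ‖D.z α t - D.z β t‖) ∧
        (∀ t ∈ Icc (0:ℝ) T, ∀ ε : ℝ,
          ε = ⨅ p : ℝ × ℝ, chordArcT D.z p.1 p.2 t → ε ≤ ε4 →
          ∃ α1 α2 : ℝ,
            |α1 - α2| ∈ Icc (2 * ε1) (ε1⁻¹ / 2) ∧
            ‖D.z α1 t - D.z α2 t‖ =
              sInf {r : ℝ | ∃ α β : ℝ, |α - β| ∈ Icc ε1 ε1⁻¹ ∧ r = ‖D.z α t - D.z β t‖} ∧
            C⁻¹ * ε ≤ ‖D.z α2 t - D.z α1 t‖ ∧ ‖D.z α2 t - D.z α1 t‖ ≤ C * ε ∧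
            openSegment ℝ (D.z α1 t) (D.z α2 t) ⊆ D.Ω2 t ∧
            rinner (deriv (fun a => D.z a t) α1) (D.z α2 t - D.z α1 t) = 0 ∧
            rinner (deriv (fun a => D.z a t) α2) (D.z α2 t - D.z α1 t) = 0 ∧
            rinner (deriv (fun a => D.z a t) α1) (deriv (fun a => D.z a t) α2) < 0 ∧
            (∀ β ρ : ℝ, |β - α1| ≤ ε5 → ρ ∈ Ioo 0 ε5 →
              D.z β t - (ρ / ‖D.z α2 t - D.z α1 t‖) • (D.z α2 t - D.z α1 t) ∈ D.Ω1 t) ∧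
            (∀ β ρ : ℝ, |β - α2| ≤ ε5 → ρ ∈ Ioo 0 ε5 →
              D.z β t + (ρ / ‖D.z α2 t - D.z α1 t‖) • (D.z α2 t - D.z α1 t) ∈ D.Ω1 t) ∧
            (∀ β ρ : ℝ, |β - α1| ≤ ε5 → ρ ∈ Ioo 0 ‖D.z α2 t - D.z α1 t‖ →
              D.z β t + (ρ / ‖D.z α2 t - D.z α1 t‖) • (D.z α2 t - D.z α1 t) ∈ D.Ω2 t) ∧
            (∀ β ρ : ℝ, |β - α2| ≤ ε5 → ρ ∈ Ioo 0 ‖D.z α2 t - D.z α1 t‖ →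
              D.z β t - (ρ / ‖D.z α2 t - D.z α1 t‖) • (D.z α2 t - D.z α1 t) ∈ D.Ω2 t)) := by
  have hA₀ : 0 < A := by linarith
  refine ⟨chordScale A, splashThreshold A T, collarWidth A T, 4 * A ^ 2,
    chordScale_pos_of_pos hA₀, splashThreshold_pos hA₀, splashThreshold_lt_one hA,
    collarWidth_pos hA₀, collarWidth_lt_one hA, splashThreshold_le_pow, by nlinarith,
    fun D => ⟨fun t ht α β => D.chordScale_mul_le_norm_sub hT hA ht, ?_⟩⟩
  rintro t ht _ rfl hε
  obtain ⟨α1, α2, hclosest, M, hmem, hd⟩ := D.exists_isNearContact hT hA ht hε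
  have hrev := norm_sub_rev (D.z α1 t) (D.z α2 t)
  exact ⟨α1, α2, hmem, D.norm_sub_eq_sInf hclosest,
    (D.inv_mul_iInf_le_norm_sub hmem.1).trans_eq hrev, hrev.symm.trans_le hd,
    D.openSegment_subset_Ω2 M, D.rinner_deriv_left_eq_zero M, D.rinner_deriv_right_eq_zero M,
    D.rinner_deriv_neg hT hA ht M, fun _ _ => D.sub_smul_mem_Ω1 hT hA ht M,
    fun _ _ => D.add_smul_mem_Ω1 hT hA ht M, fun _ _ => D.add_smul_mem_Ω2 hT hA ht M,
    fun _ _ => D.sub_smul_mem_Ω2 hT hA ht M⟩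

/-- **Geometry near a potential splash (Proposition 2.5(i)).**  There are constants
`ε₁, ε₄, ε₅, C` (depending only on `A`, `T`, `σ`, `g`, `ρ¹`, `ρ²`), with `ε₄ ≤ ε₅¹⁰⁰`, such that
`ε₁` satisfies the local chord-arc bound, and whenever `inf F(z)(·,·,t) = ε ≤ ε₄` there is a
distance-minimizing pair `α₁, α₂` with `|α₁ − α₂| ∈ [2ε₁, ε₁⁻¹/2]`, `d := |z(α₂) − z(α₁)| ≈ ε`,
the open segment between `z(α₁,t)` and `z(α₂,t)` contained in `Ω²(t)`, `∂_α z(α₁), ∂_α z(α₂)`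
orthogonal to `e := (z(α₂)−z(α₁))/d` and antiparallel to each other, and the four one-sided
collar inclusions into `Ω¹(t)` and `Ω²(t)`. -/
theorem near_splash_geometry (ρ1 ρ2 σ grav T A : ℝ)
    (hρ1 : 0 < ρ1) (hρ2 : 0 < ρ2) (hσ : 0 ≤ σ) (hgrav : 0 ≤ grav) (hT : 0 < T) (hA : 1 ≤ A) :
    ∃ ε1 ε4 ε5 C : ℝ, 0 < ε1 ∧ 0 < ε4 ∧ ε4 < 1 ∧ 0 < ε5 ∧ ε5 < 1 ∧ ε4 ≤ ε5 ^ 100 ∧ 1 ≤ C ∧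
      ∀ D : TwoFluid ρ1 ρ2 σ grav T A,
        (∀ t ∈ Icc (0:ℝ) T, ∀ α β : ℝ, |α - β| ≤ ε1 →
            ε1 * |α - β| ≤ ‖D.z α t - D.z β t‖) ∧
        (∀ t ∈ Icc (0:ℝ) T, ∀ ε : ℝ,
          ε = ⨅ p : ℝ × ℝ, chordArcT D.z p.1 p.2 t → ε ≤ ε4 →
          ∃ α1 α2 : ℝ,
            |α1 - α2| ∈ Icc (2 * ε1) (ε1⁻¹ / 2) ∧
            ‖D.z α1 t - D.z α2 t‖ =
              sInf {r : ℝ | ∃ α β : ℝ, |α - β| ∈ Icc ε1 ε1⁻¹ ∧ r = ‖D.z α t - D.z β t‖} ∧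
            C⁻¹ * ε ≤ ‖D.z α2 t - D.z α1 t‖ ∧ ‖D.z α2 t - D.z α1 t‖ ≤ C * ε ∧
            openSegment ℝ (D.z α1 t) (D.z α2 t) ⊆ D.Ω2 t ∧
            rinner (deriv (fun a => D.z a t) α1) (D.z α2 t - D.z α1 t) = 0 ∧
            rinner (deriv (fun a => D.z a t) α2) (D.z α2 t - D.z α1 t) = 0 ∧
            rinner (deriv (fun a => D.z a t) α1) (deriv (fun a => D.z a t) α2) < 0 ∧
            (∀ β ρ : ℝ, |β - α1| ≤ ε5 → ρ ∈ Ioo 0 ε5 →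
              D.z β t - (ρ / ‖D.z α2 t - D.z α1 t‖) • (D.z α2 t - D.z α1 t) ∈ D.Ω1 t) ∧
            (∀ β ρ : ℝ, |β - α2| ≤ ε5 → ρ ∈ Ioo 0 ε5 →
              D.z β t + (ρ / ‖D.z α2 t - D.z α1 t‖) • (D.z α2 t - D.z α1 t) ∈ D.Ω1 t) ∧
            (∀ β ρ : ℝ, |β - α1| ≤ ε5 → ρ ∈ Ioo 0 ‖D.z α2 t - D.z α1 t‖ →
              D.z β t + (ρ / ‖D.z α2 t - D.z α1 t‖) • (D.z α2 t - D.z α1 t) ∈ D.Ω2 t) ∧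
            (∀ β ρ : ℝ, |β - α2| ≤ ε5 → ρ ∈ Ioo 0 ‖D.z α2 t - D.z α1 t‖ →
              D.z β t - (ρ / ‖D.z α2 t - D.z α1 t‖) • (D.z α2 t - D.z α1 t) ∈ D.Ω2 t)) := by
  obtain ⟨ε1, ε4, ε5, C, h1, h4, h4', h5, h5', hpow, hC, h⟩ := near_splash_geometry_general hT hA
  exact ⟨ε1, ε4, ε5, C, h1, h4, h4', h5, h5', hpow, hC, fun D => h D⟩
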